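/- Every circulant scheme of prime power degree (i.e., every circulant scheme on a finite cyclic group of order p^n, p prime, n ≥ 1) is sesquiseparable. -/

import Mathlib

open Set

universe u

/-- A coherent configuration on a finite set `Ω`: a partition `S` of `Ω × Ω`
satisfying (C1) the diagonal is a union of classes, (C2) closure under converse,
(C3) well-defined intersection numbers. -/
structure CohCfg (Ω : Type u) : Type u where
  S : Set (Set (Ω × Ω))
  finite : Finite Ω
  cover : ∀ p : Ω × Ω, ∃ s ∈ S, p ∈ s
  disj : ∀ s ∈ S, ∀ t ∈ S, s ≠ t → s ∩ t = ∅
  nonemp : ∀ s ∈ S, s.Nonempty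
  diag : ∀ s ∈ S, (∃ p ∈ s, p.1 = p.2) → ∀ p ∈ s, p.1 = p.2
  conv : ∀ s ∈ S, {p : Ω × Ω | (p.2, p.1) ∈ s} ∈ S
  inum : ∀ r ∈ S, ∀ s ∈ S, ∀ t ∈ S, ∀ p ∈ t, ∀ q ∈ t,
    {γ : Ω | (p.1, γ) ∈ r ∧ (γ, p.2) ∈ s}.ncard =
    {γ : Ω | (q.1, γ) ∈ r ∧ (γ, q.2) ∈ s}.ncard

namespace CohCfg

variable {Ω Ω' : Type u}

/-- The intersection number `c^t_{rs}` computed at the pair `p`. -/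
noncomputable def cnum (r s : Set (Ω × Ω)) (p : Ω × Ω) : ℕ :=
  {γ : Ω | (p.1, γ) ∈ r ∧ (γ, p.2) ∈ s}.ncard

/-- `X` is a scheme (homogeneous) if the full diagonal is a basis relation. -/
def IsScheme (X : CohCfg Ω) : Prop := {p : Ω × Ω | p.1 = p.2} ∈ X.S

/-- Commutativity: `c^t_{rs} = c^t_{sr}`. -/
def IsCommutative (X : CohCfg Ω) : Prop :=
  ∀ r ∈ X.S, ∀ s ∈ X.S, ∀ p : Ω × Ω, cnum r s p = cnum s r p

/-- `s` is a relation of `X`, i.e. a union of basis relations. -/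
def IsRelationOf (X : CohCfg Ω) (s : Set (Ω × Ω)) : Prop :=
  ∀ t ∈ X.S, (t ∩ s).Nonempty → t ⊆ s

/-- `X ≤ Y`: every (basis) relation of `X` is a relation of `Y`. -/
def le (X Y : CohCfg Ω) : Prop := ∀ s ∈ X.S, IsRelationOf Y s

/-- The diagonal relation `1_Δ` of a subset `Δ`. -/
def diagRel (Δ : Set Ω) : Set (Ω × Ω) := {p | p.1 = p.2 ∧ p.1 ∈ Δ}

/-- `Δ` is a fiber of `X`. -/
def IsFiber (X : CohCfg Ω) (Δ : Set Ω) : Prop := diagRel Δ ∈ X.S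

/-- `αs = {β | (α,β) ∈ s}`. -/
def pointSet (s : Set (Ω × Ω)) (α : Ω) : Set Ω := {β | (α, β) ∈ s}

/-- `X` is partly regular: some point `α` has `|αs| ≤ 1` for all basis relations. -/
def PartlyRegular (X : CohCfg Ω) : Prop :=
  ∃ α : Ω, ∀ s ∈ X.S, (pointSet s α).ncard ≤ 1

/-- The image `s^f` of a relation under a map of points. -/
def relImage (f : Ω → Ω') (s : Set (Ω × Ω)) : Set (Ω' × Ω') :=
  (fun p : Ω × Ω => (f p.1, f p.2)) '' s

/-- `φ` is an algebraic isomorphism from `X` to `X'`. -/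
structure IsAlgIso (X : CohCfg Ω) (X' : CohCfg Ω')
    (φ : Set (Ω × Ω) → Set (Ω' × Ω')) : Prop where
  bijOn : Set.BijOn φ X.S X'.S
  cnum_eq : ∀ r ∈ X.S, ∀ s ∈ X.S, ∀ t ∈ X.S, ∀ p ∈ t, ∀ q ∈ φ t,
    cnum r s p = cnum (φ r) (φ s) q

/-- The natural extension of an algebraic isomorphism to unions of basis relations. -/
def algImage (X : CohCfg Ω) (φ : Set (Ω × Ω) → Set (Ω' × Ω')) (s : Set (Ω × Ω)) :
    Set (Ω' × Ω') := ⋃₀ (φ '' {t | t ∈ X.S ∧ t ⊆ s})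

/-- The image `Δ^φ` of a fiber under an algebraic isomorphism. -/
def fiberImage (X : CohCfg Ω) (φ : Set (Ω × Ω) → Set (Ω' × Ω')) (Δ : Set Ω) : Set Ω' :=
  {α' | (α', α') ∈ φ (diagRel Δ)}

/-- `Y` is the point extension `X_α`: the smallest coherent configuration `≥ X`
having `1_α` as a basis relation. -/
def IsPointExt (X : CohCfg Ω) (α : Ω) (Y : CohCfg Ω) : Prop :=
  le X Y ∧ ({(α, α)} : Set (Ω × Ω)) ∈ Y.S ∧
    ∀ Z : CohCfg Ω, le X Z → ({(α, α)} : Set (Ω × Ω)) ∈ Z.S → le Y Z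

/-- `φ` has an `(α,α')`-extension: an algebraic isomorphism `X_α → X'_{α'}`
extending `φ` and sending `1_α` to `1_{α'}`. -/
def HasExtension (X : CohCfg Ω) (X' : CohCfg Ω') (φ : Set (Ω × Ω) → Set (Ω' × Ω'))
    (α : Ω) (α' : Ω') : Prop :=
  ∃ (Y : CohCfg Ω) (Y' : CohCfg Ω') (ψ : Set (Ω × Ω) → Set (Ω' × Ω')),
    IsPointExt X α Y ∧ IsPointExt X' α' Y' ∧ IsAlgIso Y Y' ψ ∧
    (∀ s ∈ X.S, algImage Y ψ s = φ s) ∧ ψ {(α, α)} = {(α', α')}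

/-- A sesquiclosed algebraic isomorphism: has an `(α,α')`-extension for all
`α ∈ Δ ∈ F(X)` and `α' ∈ Δ^φ`. -/
def SesquiclosedIso (X : CohCfg Ω) (X' : CohCfg Ω')
    (φ : Set (Ω × Ω) → Set (Ω' × Ω')) : Prop :=
  IsAlgIso X X' φ ∧
  ∀ Δ : Set Ω, IsFiber X Δ → ∀ α ∈ Δ, ∀ α' ∈ fiberImage X φ Δ, HasExtension X X' φ α α'

/-- `φ` is induced by the combinatorial isomorphism `f`. -/
def InducedBy (X : CohCfg Ω) (X' : CohCfg Ω') (φ : Set (Ω × Ω) → Set (Ω' × Ω'))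
    (f : Ω → Ω') : Prop :=
  Function.Bijective f ∧ ∀ s ∈ X.S, φ s = relImage f s

/-- `X` is separable: every algebraic isomorphism from `X` is induced by an isomorphism. -/
def Separable (X : CohCfg Ω) : Prop :=
  ∀ (Ω'' : Type u) (X' : CohCfg Ω'') (φ : Set (Ω × Ω) → Set (Ω'' × Ω'')),
    IsAlgIso X X' φ → ∃ f : Ω → Ω'', InducedBy X X' φ f

/-- `X` is sesquiseparable: every sesquiclosed algebraic isomorphism from `X`
is induced by an isomorphism. -/
def Sesquiseparable (X : CohCfg Ω) : Prop :=
  ∀ (Ω'' : Type u) (X' : CohCfg Ω'') (φ : Set (Ω × Ω) → Set (Ω'' × Ω'')),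
    SesquiclosedIso X X' φ → ∃ f : Ω → Ω'', InducedBy X X' φ f

/-- A sesquiclosed coherent configuration: (S1) the fibers of every one-point
extension `X_α` are the nonempty sets `αs`, and (S2) the identity algebraic
automorphism is sesquiclosed. -/
def SesquiclosedCfg (X : CohCfg Ω) : Prop :=
  (∀ α : Ω, ∀ Y : CohCfg Ω, IsPointExt X α Y →
     ∀ Δ : Set Ω, (IsFiber Y Δ ↔ ∃ s ∈ X.S, Δ = pointSet s α ∧ Δ.Nonempty)) ∧
  SesquiclosedIso X X id

/-- A parabolic of `X`: a relation that is an equivalence relation on `Ω`. -/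
def IsParabolic (X : CohCfg Ω) (e : Set (Ω × Ω)) : Prop :=
  IsRelationOf X e ∧ (∀ a : Ω, (a, a) ∈ e) ∧ (∀ p ∈ e, (p.2, p.1) ∈ e) ∧
    ∀ a b c : Ω, (a, b) ∈ e → (b, c) ∈ e → (a, c) ∈ e

/-- The class of `a` modulo the equivalence relation `e`. -/
def eClass (e : Set (Ω × Ω)) (a : Ω) : Set Ω := {b | (a, b) ∈ e}

/-- `Δ/e` is a section of `X`: `e` is a parabolic and `Δ` is a class of a
parabolic containing `e`. -/
def IsSection (X : CohCfg Ω) (Δ : Set Ω) (e : Set (Ω × Ω)) : Prop :=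
  IsParabolic X e ∧ ∃ d : Set (Ω × Ω), IsParabolic X d ∧ e ⊆ d ∧ ∃ a : Ω, Δ = eClass d a

/-- The point set of the section `Δ/e`: the `e`-classes of points of `Δ`. -/
abbrev Sec (Δ : Set Ω) (e : Set (Ω × Ω)) : Type u :=
  {Γ : Set Ω // ∃ a ∈ Δ, Γ = eClass e a}

/-- The relation `s_𝔖` on the section `𝔖 = Δ/e`. -/
def secRel (Δ : Set Ω) (e : Set (Ω × Ω)) (s : Set (Ω × Ω)) :
    Set (Sec Δ e × Sec Δ e) :=
  {p | ∃ a ∈ p.1.1, ∃ b ∈ p.2.1, (a, b) ∈ s}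

/-- `Y` is the coherent configuration `X_𝔖` on the section `𝔖 = Δ/e`. -/
def IsSectionCfg (X : CohCfg Ω) (Δ : Set Ω) (e : Set (Ω × Ω))
    (Y : CohCfg (Sec Δ e)) : Prop :=
  Y.S = {t | ∃ s ∈ X.S, t = secRel Δ e s ∧ t.Nonempty}

/-- The restriction `s_Δ` of a relation to a subset `Δ`. -/
def restRel (Δ : Set Ω) (s : Set (Ω × Ω)) : Set (↥Δ × ↥Δ) := {p | (p.1.1, p.2.1) ∈ s}

/-- `Y` is the restriction `X_Δ` of `X` to `Δ`. -/
def IsRestrictionCfg (X : CohCfg Ω) (Δ : Set Ω) (Y : CohCfg ↥Δ) : Prop :=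
  Y.S = {t | ∃ s ∈ X.S, t = restRel Δ s ∧ t.Nonempty}

/-- `Iso(X, X', φ)`: isomorphisms inducing the algebraic isomorphism `φ`. -/
def IsoSet (X : CohCfg Ω) (X' : CohCfg Ω') (φ : Set (Ω × Ω) → Set (Ω' × Ω')) :
    Set (Ω → Ω') :=
  {f | Function.Bijective f ∧ ∀ s ∈ X.S, relImage f s = φ s}

/-- `X` is schurian: its basis relations are the orbits of `Aut(X)` on `Ω × Ω`. -/
def Schurian (X : CohCfg Ω) : Prop :=
  ∀ s ∈ X.S, ∀ p ∈ s, ∀ q ∈ s, ∃ f : Ω → Ω,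
    (Function.Bijective f ∧ ∀ t ∈ X.S, relImage f t = t) ∧ (f p.1, f p.2) = q

/-- `e ⊆ rad(s)`: `s` is a union of products of pairs of `e`-classes it meets. -/
def RadGE (e s : Set (Ω × Ω)) : Prop :=
  ∀ p ∈ s, ∀ a b : Ω, (p.1, a) ∈ e → (p.2, b) ∈ e → (a, b) ∈ s

/-- The `e₁/e₀`-condition: every basis relation disjoint from `e₁` has `e₀` in
its radical. -/
def WedgeCond (X : CohCfg Ω) (e0 e1 : Set (Ω × Ω)) : Prop :=
  ∀ s ∈ X.S, s ∩ e1 = ∅ → RadGE e0 s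

/-- A circulant coherent configuration on a group `G`: right translations are
automorphisms. -/
def IsCirculant {G : Type u} [Group G] (X : CohCfg G) : Prop :=
  ∀ g : G, ∀ s ∈ X.S, relImage (fun x => x * g) s = s

/-- The equivalence relation `e(H)` whose classes are the cosets of `H`. -/
def eRelSet {G : Type u} [Group G] (H : Subgroup G) : Set (G × G) :=
  {p | p.1⁻¹ * p.2 ∈ H}

/-- `H` is an `X`-group. -/
def IsXGroup {G : Type u} [Group G] (X : CohCfg G) (H : Subgroup G) : Prop :=
  IsParabolic X (eRelSet H)

/-- A normal circulant scheme: every automorphism fixing the identity is a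
group automorphism. -/
def IsNormalCirc {G : Type u} [Group G] (X : CohCfg G) : Prop :=
  ∀ f : G → G, Function.Bijective f → (∀ s ∈ X.S, relImage f s = s) → f 1 = 1 →
    ∀ a b : G, f (a * b) = f a * f b

/-- Normality of a circulant scheme presented on a section `Δ/e` of a group `G`
(the points are cosets): every automorphism fixing the class of `1` respects the
coset multiplication. -/
def IsNormalSec {G : Type u} [Group G] (Δ : Set G) (e : Set (G × G))
    (Y : CohCfg (Sec Δ e)) : Prop :=
  ∀ F : Sec Δ e → Sec Δ e, Function.Bijective F → (∀ t ∈ Y.S, relImage F t = t) →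
    (∀ Γ : Sec Δ e, (1 : G) ∈ Γ.1 → F Γ = Γ) →
    ∀ Γ Γ' Γ'' : Sec Δ e, Γ''.1 = Set.image2 (· * ·) Γ.1 Γ'.1 →
      (F Γ'').1 = Set.image2 (· * ·) (F Γ).1 (F Γ').1

/-- Normality of a circulant scheme presented on (the subtype of) a subgroup `U ⊆ G`. -/
def IsNormalRest {G : Type u} [Group G] (U : Set G) (Y : CohCfg ↥U) : Prop :=
  ∀ F : ↥U → ↥U, Function.Bijective F → (∀ t ∈ Y.S, relImage F t = t) →
    (∀ x : ↥U, x.1 = 1 → F x = x) →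
    ∀ x y z : ↥U, z.1 = x.1 * y.1 → (F z).1 = (F x).1 * (F y).1

/-- `N` is an `X_U`-group: `N ≤ U` and the restriction of `e(N)` to `U` is a
relation of the restriction `X_U`. -/
def SubXGroup {G : Type u} [Group G] (X : CohCfg G) (U N : Subgroup G) : Prop :=
  N ≤ U ∧ ∀ s ∈ X.S, (∃ p ∈ s, p.1 ∈ U ∧ p.2 ∈ U ∧ p.1⁻¹ * p.2 ∈ N) →
    ∀ p ∈ s, p.1 ∈ U → p.2 ∈ U → p.1⁻¹ * p.2 ∈ N

end CohCfg

/-!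
Colour `ZMod (p ^ n)` by the basis relations of the differences. The subgroups that are unions of
colour classes form a chain, and between two consecutive ones, generated by `p ^ a` and `p ^ u`, the
colouring has a largest group of periods, generated by `p ^ l`. By Schur's theorem on multipliers,
either the colouring is constant there, with `l = u`, or `u = a + 1`. In the first case any
bijection that respects the cosets preserves colours modulo `p ^ l`. In the second case, if `l > u`,
the colours of a one-point extension separate the multiples of `p ^ a` modulo `p ^ l`, so the point
extension of an algebraic isomorphism yields a map that preserves colours modulo `p ^ l`. Two such
maps that agree at a point differ by a multiplier, and adjusting by multipliers a map modulo `p ^ l`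
can be refined, coset by coset, to the larger moduli that occur further down the chain. By induction
along the chain the refinements are glued to a map that preserves all colours.
-/

namespace PrimePowerCirculant

section Colorings

variable {Ω Ω' κ : Type*}

/-- Two arc colourings, with values in the same set of colours, such that arcs of equal colour are
the bases of equally many triangles with legs of prescribed colours. For the colourings by basis
relations, with colours identified along `φ`, this says that `φ` is an algebraic isomorphism. -/
def SameIntersectionNumbers (c : Ω → Ω → κ) (c' : Ω' → Ω' → κ) : Prop :=
  ∀ a b a' b', c a b = c' a' b' → ∀ r s,
    {z | c a z = r ∧ c z b = s}.ncard = {z' | c' a' z' = r ∧ c' z' b' = s}.ncard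

/-- Axiom (C1) for an arc colouring: no loop shares its colour with a non-loop. -/
def SeparatesDiagonal (c : Ω → Ω → κ) : Prop :=
  ∀ a b x, c a b = c x x → a = b

/-- Axiom (C2) for an arc colouring: the colour of an arc determines that of the reversed arc. -/
def ConverseCompatible (c : Ω → Ω → κ) : Prop :=
  ∀ a b a₁ b₁, c a b = c a₁ b₁ → c b a = c b₁ a₁

lemma exists_equiv_comp_eq [Finite Ω] [Finite Ω'] (f : Ω → κ) (f' : Ω' → κ)
    (h : ∀ i, {z | f z = i}.ncard = {z' | f' z' = i}.ncard) :
    ∃ e : Ω ≃ Ω', ∀ z, f' (e z) = f z := by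
  have fiberEquiv : ∀ i, Nonempty ({z // f z = i} ≃ {z' // f' z' = i}) := fun i =>
    (Finite.card_eq (α := {z | f z = i}) (β := {z' | f' z' = i})).1 (h i)
  exact ⟨Equiv.ofFiberEquiv fun i => (fiberEquiv i).some, Equiv.ofFiberEquiv_map _⟩

namespace SameIntersectionNumbers

variable {c : Ω → Ω → κ} {c' : Ω' → Ω' → κ}

lemma exists_equiv [Finite Ω] [Finite Ω'] (h : SameIntersectionNumbers c c') {a b : Ω} {a' b' : Ω'}
    (hab : c a b = c' a' b') : ∃ e : Ω ≃ Ω', ∀ z, c' a' (e z) = c a z ∧ c' (e z) b' = c z b := by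
  obtain ⟨e, he⟩ := exists_equiv_comp_eq (fun z => (c a z, c z b)) (fun z' => (c' a' z', c' z' b'))
    (by rintro ⟨r, s⟩; simpa only [Prod.mk.injEq] using h a b a' b' hab r s)
  exact ⟨e, fun z => by simpa only [Prod.mk.injEq] using he z⟩

lemma eq_of_loop [Finite Ω] [Finite Ω'] (h : SameIntersectionNumbers c c')
    (hc : SeparatesDiagonal c) (hc' : SeparatesDiagonal c') {x : Ω} {y y' : Ω'}
    (hx : c x x = c' y y') : y = y' := by
  obtain ⟨e, he⟩ := h.exists_equiv hx
  obtain ⟨hleft, hright⟩ := he (e.symm y)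
  rw [e.apply_symm_apply] at hleft hright
  have hy : e.symm y = x := hc _ _ x (by rw [← hright, hx])
  rw [hy] at hleft
  exact hc' y y' y (by rw [hleft, hx])

lemma converse_eq [Finite Ω] [Finite Ω'] (h : SameIntersectionNumbers c c')
    (hc : SeparatesDiagonal c) (hc' : SeparatesDiagonal c') (hconv : ConverseCompatible c)
    {a b : Ω} {a' b' : Ω'} (hab : c a b = c' a' b') : c b a = c' b' a' := by
  obtain ⟨e, he⟩ := h.exists_equiv hab
  obtain ⟨hloop, hrev⟩ := he a
  rw [← h.eq_of_loop hc hc' hloop.symm] at hrev hloop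
  obtain ⟨f, hf⟩ := h.exists_equiv hloop.symm
  obtain ⟨hfab, hfba⟩ := hf (f.symm b')
  rw [f.apply_symm_apply] at hfab hfba
  have hcolor : c a (f.symm b') = c a b := by rw [← hfab, hab]
  rw [hfba]
  exact (hconv _ _ _ _ hcolor).symm

lemma comp_equiv {Δ Δ' : Type*} (h : SameIntersectionNumbers c c') (e : Δ ≃ Ω) (e' : Δ' ≃ Ω') :
    SameIntersectionNumbers (fun a b => c (e a) (e b)) (fun a b => c' (e' a) (e' b)) := by
  intro a b a' b' hab r s
  have hleft := ncard_preimage_of_injective_subset_range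
    (s := {z | c (e a) z = r ∧ c z (e b) = s}) e.injective (by simp [e.surjective.range_eq])
  have hright := ncard_preimage_of_injective_subset_range
    (s := {z | c' (e' a') z = r ∧ c' z (e' b') = s}) e'.injective
    (by simp [e'.surjective.range_eq])
  exact hleft.trans ((h _ _ _ _ hab r s).trans hright.symm)

end SameIntersectionNumbers

end Colorings

section SchurColorings

variable {A κ : Type*} [AddCommGroup A]

/-- A colouring `D` of a group whose classes span a Schur ring. The first field expresses the
constancy of the structure constants on classes: writing `z = v + (z - v)`, elements of equal colour
have the same number of decompositions into summands of given colours. -/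
structure IsSchurColoring (D : A → κ) : Prop where
  exists_equiv : ∀ z z', D z = D z' → ∃ e : A ≃ A, ∀ v, D (e v) = D v ∧ D (z' - e v) = D (z - v)
  neg : ∀ z z', D z = D z' → D (-z) = D (-z')
  eq_zero : ∀ z, D z = D 0 → z = 0

namespace IsSchurColoring

variable {D : A → κ}

lemma exists_equiv_add (S : IsSchurColoring D) {g g' : A} (h : D g = D g') :
    ∃ e : A ≃ A, ∀ v, D (e v) = D v ∧ D (e v + g') = D (v + g) := by
  obtain ⟨e, he⟩ := S.exists_equiv _ _ (S.neg _ _ h)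
  refine ⟨e, fun v => ⟨(he v).1, ?_⟩⟩
  simpa [neg_add_eq_sub, add_comm] using S.neg _ _ (he v).2

lemma exists_add_eq (S : IsSchurColoring D) {z z' : A} (h : D z = D z') (w : A) :
    ∃ w', D w' = D w ∧ D (z' + w') = D (z + w) := by
  obtain ⟨e, he⟩ := S.exists_equiv_add h
  exact ⟨e w, (he w).1, by rw [add_comm, (he w).2, add_comm]⟩

lemma exists_eq_add (S : IsSchurColoring D) {z a b : A} (h : D z = D (a + b)) :
    ∃ a' b', z = a' + b' ∧ D a' = D a ∧ D b' = D b := by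
  obtain ⟨e, he⟩ := S.exists_equiv _ _ h.symm
  exact ⟨e a, z - e a, by abel, (he a).1, by rw [(he a).2, add_sub_cancel_left]⟩

section Multipliers

open AddMonoidAlgebra

lemma coeff_mul_eq_sum_sub {R : Type*} [Semiring R] [Fintype A] (x y : AddMonoidAlgebra R A)
    (z : A) : (x * y).coeff z = ∑ v, x.coeff v * y.coeff (z - v) := by
  classical
  rw [coeff_mul_antidiag x y z (Finset.univ.image fun v => (v, z - v)), Finset.sum_image]
  · exact fun v _ w _ hvw => congrArg Prod.fst hvw
  · rintro ⟨v, w⟩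
    simp only [Finset.mem_image, Finset.mem_univ, true_and, Prod.mk.injEq, exists_eq_left]
    exact sub_eq_iff_eq_add'.trans eq_comm

variable {R : Type*} [Semiring R]

lemma coeff_mul_congr [Finite A] (S : IsSchurColoring D) {x y : AddMonoidAlgebra R A}
    (hx : ∀ z z', D z = D z' → x.coeff z = x.coeff z')
    (hy : ∀ z z', D z = D z' → y.coeff z = y.coeff z') {z z' : A} (h : D z = D z') :
    (x * y).coeff z = (x * y).coeff z' := by
  have := Fintype.ofFinite A
  obtain ⟨e, he⟩ := S.exists_equiv _ _ h
  rw [coeff_mul_eq_sum_sub, coeff_mul_eq_sum_sub,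
    ← e.sum_comp fun v => x.coeff v * y.coeff (z' - v)]
  exact Finset.sum_congr rfl fun v _ => by rw [hx _ _ (he v).1, hy _ _ (he v).2]

lemma coeff_pow_congr [Finite A] (S : IsSchurColoring D) {x : AddMonoidAlgebra R A}
    (hx : ∀ z z', D z = D z' → x.coeff z = x.coeff z') (m : ℕ) :
    ∀ z z', D z = D z' → (x ^ (m + 1)).coeff z = (x ^ (m + 1)).coeff z' := by
  induction m with
  | zero => simpa using hx
  | succ m ih => rw [pow_succ]; exact fun z z' => S.coeff_mul_congr ih hx

lemma coeff_sum_single {A : Type*} [Fintype A] (P : A → Prop) [DecidablePred P] (z : A) :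
    (∑ a with P a, single a 1 : AddMonoidAlgebra R A).coeff z = if P z then 1 else 0 := by
  classical
  simp [coeff_sum, Finsupp.finsetSum_apply, Finsupp.single_apply, Finset.sum_ite_eq']

lemma coeff_sum_single_pow [Fintype A] {q : ℕ} [Fact q.Prime]
    (hq : Function.Injective fun a : A => q • a) (P : A → Prop) [DecidablePred P] (z : A) :
    ((∑ a with P a, single a 1 : AddMonoidAlgebra (ZMod q) A) ^ q).coeff (q • z) =
      if P z then 1 else 0 := by
  classical
  have : CharP (AddMonoidAlgebra (ZMod q) A) q :=
    charP_of_injective_ringHom (f := (singleZeroRingHom : ZMod q →+* AddMonoidAlgebra (ZMod q) A))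
      (RingHom.injective _) q
  simp [sum_pow_char, single_pow, coeff_sum, Finsupp.finsetSum_apply, Finsupp.single_apply,
    Finset.sum_ite_eq', hq.eq_iff]

-- Modulo `q`, the `q`-th power of the sum of a colour class is the sum of the elements `q • a`.
lemma eq_of_prime_nsmul_eq [Finite A] (S : IsSchurColoring D) {q : ℕ} (hq : q.Prime)
    (hqA : (Nat.card A).Coprime q) {z z' : A} (h : D (q • z) = D (q • z')) : D z = D z' := by
  classical
  have := Fintype.ofFinite A
  have : Fact q.Prime := ⟨hq⟩
  set x : AddMonoidAlgebra (ZMod q) A := ∑ a with D a = D z, single a 1 with hx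
  have hpow := S.coeff_pow_congr (x := x)
    (fun w w' hw => by rw [hx, coeff_sum_single, coeff_sum_single, hw]) (q - 1) _ _ h
  have hinj : Function.Injective fun a : A => q • a := (nsmulCoprime hqA).injective
  rw [Nat.sub_add_cancel hq.one_le, hx, coeff_sum_single_pow hinj, coeff_sum_single_pow hinj,
    if_pos rfl] at hpow
  by_contra hne
  rw [if_neg fun hz => hne hz.symm] at hpow
  exact one_ne_zero hpow

end Multipliers

lemma eq_of_nsmul_eq [Finite A] (S : IsSchurColoring D) {m : ℕ} (hm : (Nat.card A).Coprime m)
    {z z' : A} (h : D (m • z) = D (m • z')) : D z = D z' := by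
  induction m using induction_on_primes generalizing z z' with
  | zero =>
    have : Subsingleton A := Finite.card_le_one_iff_subsingleton.1 (by simpa using hm.le)
    rw [Subsingleton.elim z z']
  | one => simpa using h
  | prime_mul q m hq ih =>
    rw [mul_nsmul', mul_nsmul'] at h
    exact ih hm.coprime_mul_left_right (S.eq_of_prime_nsmul_eq hq hm.coprime_mul_right_right h)

theorem nsmul_eq_nsmul_iff [Finite A] (S : IsSchurColoring D) {m : ℕ}
    (hm : (Nat.card A).Coprime m) {z z' : A} : D (m • z) = D (m • z') ↔ D z = D z' := by
  refine ⟨S.eq_of_nsmul_eq hm, fun h => ?_⟩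
  have nsmul_inverse (w : A) : m ^ (Nat.totient (Nat.card A) - 1) • m • w = w := by
    rw [← mul_nsmul', ← pow_succ,
      Nat.sub_add_cancel (Nat.totient_pos.2 Nat.card_pos)]
    nth_rw 2 [← one_nsmul w]
    exact nsmul_eq_nsmul_iff_modEq.2
      ((Nat.ModEq.pow_totient hm.symm).of_dvd (addOrderOf_dvd_natCard w))
  exact S.eq_of_nsmul_eq (hm.pow_right _) (by rw [nsmul_inverse, nsmul_inverse, h])

end IsSchurColoring

end SchurColorings

section Valuation

variable {R : Type*} [CommRing R] {π x z : R} {v : ℕ}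

/-- The `π`-adic valuation of `z` is finite and equal to `v`. -/
def HasVal (π : R) (v : ℕ) (z : R) : Prop := emultiplicity π z = v

lemma hasVal_iff : HasVal π v z ↔ π ^ v ∣ z ∧ ¬ π ^ (v + 1) ∣ z := emultiplicity_eq_coe

/-- The elements of `π`-adic valuation at least `a` and less than `u`. -/
def layer (π : R) (a u : ℕ) : Set R := {z | π ^ a ∣ z ∧ ¬ π ^ u ∣ z}

lemma exists_hasVal {a u : ℕ} (hz : z ∈ layer π a u) : ∃ v, a ≤ v ∧ v < u ∧ HasVal π v z := by
  have hfin : FiniteMultiplicity π z := ⟨u, fun h => hz.2 ((pow_dvd_pow _ u.le_succ).trans h)⟩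
  exact ⟨multiplicity π z, hfin.le_multiplicity_of_pow_dvd hz.1,
    hfin.multiplicity_lt_iff_not_dvd.2 hz.2, hfin.emultiplicity_eq_multiplicity⟩

namespace HasVal

lemma pow_dvd (hz : HasVal π v z) : π ^ v ∣ z := (hasVal_iff.1 hz).1

lemma pow_dvd_iff (hz : HasVal π v z) {a : ℕ} : π ^ a ∣ z ↔ a ≤ v := by
  rw [pow_dvd_iff_le_emultiplicity, hz, Nat.cast_le]

lemma mem_layer_iff (hz : HasVal π v z) {a u : ℕ} : z ∈ layer π a u ↔ a ≤ v ∧ v < u := by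
  rw [layer, mem_ofPred_eq, hz.pow_dvd_iff, hz.pow_dvd_iff, not_le]

lemma unit_mul (hz : HasVal π v z) {k : R} (hk : IsUnit k) : HasVal π v (k * z) := by
  rw [hasVal_iff, hk.dvd_mul_left, hk.dvd_mul_left]
  exact hasVal_iff.1 hz

lemma neg (hz : HasVal π v z) : HasVal π v (-z) := (emultiplicity_neg π z).trans hz

lemma add (hz : HasVal π v z) {w : ℕ} (hx : π ^ w ∣ x) (hw : v < w) : HasVal π v (z + x) := by
  rw [add_comm]
  refine (emultiplicity_add_of_gt (lt_of_lt_of_le ?_ (le_emultiplicity_of_pow_dvd hx))).trans hz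
  rw [hz]
  exact_mod_cast hw

end HasVal

end Valuation

variable {p n : ℕ} {κ : Type*}

local notation "π" => (p : ZMod (p ^ n))

section PrimePowerModulus

lemma natCast_pow_eq_zero : π ^ n = 0 := by
  rw [← Nat.cast_pow, ZMod.natCast_self]

lemma eq_zero_of_pow_dvd {a : ℕ} (ha : n ≤ a) {z : ZMod (p ^ n)} (hz : π ^ a ∣ z) : z = 0 := by
  rw [← zero_dvd_iff, ← natCast_pow_eq_zero]
  exact (pow_dvd_pow _ ha).trans hz

lemma pow_dvd_intCast_iff {a : ℕ} (ha : a ≤ n) (z : ℤ) :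
    π ^ a ∣ (z : ZMod (p ^ n)) ↔ (p : ℤ) ^ a ∣ z := by
  refine ⟨?_, fun h => by simpa using map_dvd (Int.castRingHom (ZMod (p ^ n))) h⟩
  rintro ⟨c, hc⟩
  obtain ⟨c, rfl⟩ := ZMod.intCast_surjective c
  have hdiff : ((z - p ^ a * c : ℤ) : ZMod (p ^ n)) = 0 := by push_cast; rw [hc, sub_self]
  rw [ZMod.intCast_zmod_eq_zero_iff_dvd, Nat.cast_pow] at hdiff
  exact (dvd_sub_left (dvd_mul_right _ c)).1 ((pow_dvd_pow _ ha).trans hdiff)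

lemma hasVal_intCast_iff {v : ℕ} (hv : v < n) (z : ℤ) :
    HasVal π v (z : ZMod (p ^ n)) ↔ HasVal (p : ℤ) v z := by
  rw [hasVal_iff, hasVal_iff, pow_dvd_intCast_iff hv.le, pow_dvd_intCast_iff hv]

lemma HasVal.lt {v : ℕ} {z : ZMod (p ^ n)} (hz : HasVal π v z) : v < n := by
  by_contra! hv
  refine (hasVal_iff.1 hz).2 ?_
  rw [eq_zero_of_pow_dvd hv hz.pow_dvd]
  exact dvd_zero _

/-- The least exponent `e` such that the `p`-adic valuation of `k ^ p - 1` is one more than that of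
`k - 1` as soon as the latter is finite and at least `e`. -/
def liftExp (p : ℕ) : ℕ := if p = 2 then 2 else 1

lemma one_le_liftExp (p : ℕ) : 1 ≤ liftExp p := by unfold liftExp; split <;> decide

lemma liftExp_le_two (p : ℕ) : liftExp p ≤ 2 := by unfold liftExp; split <;> decide

variable [hp : Fact p.Prime]

lemma isUnit_iff_not_dvd (hn : 0 < n) (k : ZMod (p ^ n)) : IsUnit k ↔ ¬ π ∣ k := by
  obtain ⟨m, rfl⟩ := ZMod.natCast_zmod_surjective k
  have hdvd : π ∣ m ↔ p ∣ m := by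
    have := pow_dvd_intCast_iff (p := p) (n := n) (a := 1) hn m
    rwa [pow_one, pow_one, Int.cast_natCast, Int.natCast_dvd_natCast] at this
  rw [ZMod.isUnit_iff_coprime, hdvd, Nat.coprime_comm, Nat.coprime_pow_left_iff hn,
    hp.out.coprime_iff_not_dvd]

lemma hasVal_pow {v : ℕ} (hv : v < n) : HasVal π v (π ^ v) := by
  have := (hasVal_intCast_iff hv ((p : ℤ) ^ v)).2
    (emultiplicity_pow_self_of_prime (Nat.prime_iff_prime_int.1 hp.out) v)
  exact_mod_cast this

namespace HasVal

variable {v : ℕ} {y z : ZMod (p ^ n)}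

lemma exists_isUnit_eq_mul (hz : HasVal π v z) :
    ∃ k : ZMod (p ^ n), IsUnit k ∧ z = π ^ v * k := by
  obtain ⟨⟨k, rfl⟩, hnot⟩ := hasVal_iff.1 hz
  refine ⟨k, (isUnit_iff_not_dvd (v.zero_le.trans_lt hz.lt) k).2 fun hk => hnot ?_, rfl⟩
  rw [pow_succ]
  exact mul_dvd_mul_left _ hk

lemma dvd_of_pow_dvd (hy : HasVal π v y) (hz : π ^ v ∣ z) : y ∣ z := by
  obtain ⟨k, hk, rfl⟩ := hy.exists_isUnit_eq_mul
  exact hk.mul_right_dvd.2 hz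

lemma pow_dvd_of_pow_add_dvd_mul (hy : HasVal π v y) {j : ℕ} (hj : v + j ≤ n) {k : ZMod (p ^ n)}
    (h : π ^ (v + j) ∣ k * y) : π ^ j ∣ k := by
  by_contra hnot
  obtain ⟨w, -, hw, hk⟩ := exists_hasVal (a := 0) ⟨by simp, hnot⟩
  obtain ⟨s, hs, rfl⟩ := hk.exists_isUnit_eq_mul
  obtain ⟨t, ht, rfl⟩ := hy.exists_isUnit_eq_mul
  have hval := (hasVal_pow (p := p) (n := n) (v := v + w) (by omega)).unit_mul (hs.mul ht)
  have := hval.pow_dvd_iff.1 ((show s * t * p ^ (v + w) = p ^ w * s * (p ^ v * t) by ring) ▸ h)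
  omega

lemma exists_eq_mul (hy : HasVal π v y) (hz : π ^ v ∣ z) :
    ∃ k : ZMod (p ^ n), z = k * y :=
  exists_eq_mul_left_of_dvd (hy.dvd_of_pow_dvd hz)

lemma exists_isUnit_eq_mul_of_hasVal (hy : HasVal π v y) (hz : HasVal π v z) :
    ∃ k : ZMod (p ^ n), IsUnit k ∧ z = k * y := by
  obtain ⟨s, hs, rfl⟩ := hy.exists_isUnit_eq_mul
  obtain ⟨t, ht, rfl⟩ := hz.exists_isUnit_eq_mul
  obtain ⟨s, rfl⟩ := hs
  exact ⟨t * ↑s⁻¹, ht.mul s⁻¹.isUnit, by rw [mul_left_comm, Units.inv_mul_cancel_right]⟩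

lemma pow_mul_dvd_of_pow_add_dvd (hy : HasVal π v y) {j : ℕ}
    (hz : π ^ (v + j) ∣ z) : π ^ j * y ∣ z := by
  obtain ⟨t, rfl⟩ := hz
  rw [pow_add, mul_comm (π ^ v), mul_assoc]
  exact mul_dvd_mul_left _ (hy.dvd_of_pow_dvd (dvd_mul_right _ t))

lemma exists_isUnit_add_eq_mul (hy : HasVal π v y) {j : ℕ} (hj : 0 < j) (hz : π ^ (v + j) ∣ z) :
    ∃ k : ZMod (p ^ n), IsUnit k ∧ π ^ j ∣ k - 1 ∧ y + z = k * y := by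
  have hn := v.zero_le.trans_lt hy.lt
  obtain ⟨s, rfl⟩ := hy.pow_mul_dvd_of_pow_add_dvd hz
  refine ⟨1 + π ^ j * s, ?_, by simp, by ring⟩
  rw [isUnit_iff_not_dvd hn, dvd_add_left ((dvd_pow_self π hj.ne').mul_right s),
    ← isUnit_iff_not_dvd hn]
  exact isUnit_one

end HasVal

lemma ncard_setOf_pow_dvd {a : ℕ} (ha : a ≤ n) :
    {z : ZMod (p ^ n) | π ^ a ∣ z}.ncard = p ^ (n - a) := by
  have hmultiples : {z : ZMod (p ^ n) | π ^ a ∣ z} =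
      AddSubgroup.zmultiples ((p ^ a : ℕ) : ZMod (p ^ n)) := by
    ext z
    simp only [mem_ofPred_eq, SetLike.mem_coe, AddSubgroup.mem_zmultiples_iff, zsmul_eq_mul,
      Nat.cast_pow]
    refine ⟨fun ⟨c, hc⟩ => ?_, fun ⟨c, hc⟩ => ⟨c, by rw [← hc, mul_comm]⟩⟩
    obtain ⟨c, rfl⟩ := ZMod.intCast_surjective c
    exact ⟨c, by rw [hc, mul_comm]⟩
  rw [hmultiples, ← Nat.card_coe_set_eq]
  change Nat.card (AddSubgroup.zmultiples _) = _
  rw [Nat.card_zmultiples, ZMod.addOrderOf_coe _ (pow_ne_zero _ hp.out.ne_zero),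
    Nat.gcd_eq_right (pow_dvd_pow p ha), Nat.pow_div ha hp.out.pos]

lemma HasVal.int_pow_prime_pow_sub_one {K : ℤ} {j : ℕ} (hK : HasVal (p : ℤ) j (K - 1))
    (hj : liftExp p ≤ j) (r : ℕ) : HasVal (p : ℤ) (j + r) (K ^ p ^ r - 1) := by
  have hpK : (p : ℤ) ∣ K - 1 := by
    simpa using hK.pow_dvd_iff.2 ((one_le_liftExp p).trans hj)
  have hpnot : ¬ (p : ℤ) ∣ K := fun h =>
    (Nat.prime_iff_prime_int.1 hp.out).not_dvd_one (by simpa using dvd_sub h hpK)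
  have hpr : emultiplicity (p : ℤ) ((p ^ r : ℕ) : ℤ) = r := by
    rw [Nat.cast_pow]
    exact emultiplicity_pow_self_of_prime (Nat.prime_iff_prime_int.1 hp.out) r
  have hlift : emultiplicity (p : ℤ) (K ^ p ^ r - 1 ^ p ^ r) =
      emultiplicity (p : ℤ) (K - 1) + emultiplicity (p : ℤ) ((p ^ r : ℕ) : ℤ) := by
    rcases hp.out.eq_two_or_odd' with rfl | hodd
    · exact_mod_cast Int.two_pow_sub_pow' (x := K) (y := 1) (2 ^ r)
        (hK.pow_dvd_iff.2 hj) (by exact_mod_cast hpnot)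
    · rw [Int.emultiplicity_pow_sub_pow hp.out hodd hpK hpnot, Int.natCast_emultiplicity]
  rw [one_pow, hK, hpr] at hlift
  exact_mod_cast hlift

lemma HasVal.pow_prime_pow_sub_one {k : ZMod (p ^ n)} {j r : ℕ} (hk : HasVal π j (k - 1))
    (hj : liftExp p ≤ j) (hr : j + r < n) : HasVal π (j + r) (k ^ p ^ r - 1) := by
  obtain ⟨K, rfl⟩ := ZMod.intCast_surjective k
  have hK : HasVal (p : ℤ) j (K - 1) :=
    (hasVal_intCast_iff (n := n) (by omega) _).1 (by exact_mod_cast hk)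
  exact_mod_cast (hasVal_intCast_iff hr _).2 (hK.int_pow_prime_pow_sub_one hj r)

lemma exists_pow_sub_one_hasVal {k : ZMod (p ^ n)} {s : ℕ} (hs : s ≤ n)
    (hk : π ^ liftExp p ∣ k - 1) (hks : ¬ π ^ s ∣ k - 1) :
    ∃ r : ℕ, HasVal π (s - 1) (k ^ r - 1) := by
  obtain ⟨j, hj, hjs, hval⟩ := exists_hasVal ⟨hk, hks⟩
  have := hval.pow_prime_pow_sub_one (r := s - 1 - j) hj (by omega)
  rw [Nat.add_sub_cancel' (by omega)] at this
  exact ⟨_, this⟩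

end PrimePowerModulus

lemma IsSchurColoring.mul_eq_mul_iff {N : ℕ} [NeZero N] {D : ZMod N → κ}
    (S : IsSchurColoring D) {k : ZMod N} (hk : IsUnit k) {z z' : ZMod N} :
    D (k * z) = D (k * z') ↔ D z = D z' := by
  obtain ⟨m, rfl⟩ := ZMod.natCast_zmod_surjective k
  rw [ZMod.isUnit_iff_coprime] at hk
  simpa only [nsmul_eq_mul] using
    S.nsmul_eq_nsmul_iff (m := m) (by rw [Nat.card_zmod]; exact hk.symm) (z := z) (z' := z')

section Layers

/-- The ideal generated by `p ^ a` is a union of colour classes of `D`; for the colouring of a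
circulant scheme by its basis relations, this ideal is then an `X`-group. -/
def IsXIdeal (D : ZMod (p ^ n) → κ) (a : ℕ) : Prop := ∀ y z, D y = D z → π ^ a ∣ y → π ^ a ∣ z

/-- The colouring `D` is `p ^ m`-periodic on the multiples of `p ^ a` that are not multiples of
`p ^ u`. -/
def PeriodicBetween (D : ZMod (p ^ n) → κ) (a u m : ℕ) : Prop :=
  ∀ z ∈ layer π a u, ∀ w, π ^ m ∣ w → D (z + w) = D z

/-- A layer of the colouring `D`: `p ^ a` and `p ^ u` generate consecutive `X`-groups, and `p ^ l`
generates the largest subgroup of the latter under which `D` is periodic between the two. -/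
structure IsLayer (D : ZMod (p ^ n) → κ) (a u l : ℕ) : Prop where
  isXIdeal_bot : IsXIdeal D a
  lt : a < u
  le : u ≤ n
  isXIdeal_top : IsXIdeal D u
  not_isXIdeal : ∀ b, a < b → b < u → ¬ IsXIdeal D b
  le_period : u ≤ l
  period_le : l ≤ n
  periodic : PeriodicBetween D a u l
  period_min : ∀ m, u ≤ m → PeriodicBetween D a u m → l ≤ m

/-- The colours of `z` and `z'` agree up to a translation by a multiple of `p ^ l`. -/
def ColorEqMod (D : ZMod (p ^ n) → κ) (l : ℕ) (z z' : ZMod (p ^ n)) : Prop :=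
  ∃ w, π ^ l ∣ w ∧ D (z + w) = D z'

variable {D : ZMod (p ^ n) → κ} {a u l : ℕ}

lemma isXIdeal_zero : IsXIdeal D 0 := fun _ _ _ _ => by simp

lemma IsXIdeal.pow_dvd_iff {z z' : ZMod (p ^ n)} (h : IsXIdeal D a) (hz : D z = D z') :
    π ^ a ∣ z ↔ π ^ a ∣ z' :=
  ⟨h _ _ hz, h _ _ hz.symm⟩

namespace IsSchurColoring

lemma isXIdeal_self (S : IsSchurColoring D) : IsXIdeal D n := by
  intro z z' h hz
  rw [eq_zero_of_pow_dvd le_rfl hz] at h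
  rw [S.eq_zero _ h.symm]
  exact dvd_zero _

lemma exists_isLayer (S : IsSchurColoring D) (ha : IsXIdeal D a) (han : a < n) :
    ∃ u l, IsLayer D a u l := by
  classical
  have hu : ∃ u, a < u ∧ IsXIdeal D u := ⟨n, han, S.isXIdeal_self⟩
  have hun : Nat.find hu ≤ n := Nat.find_min' hu ⟨han, S.isXIdeal_self⟩
  have hperiodic : PeriodicBetween D a (Nat.find hu) n := fun z _ w hw => by
    rw [eq_zero_of_pow_dvd le_rfl hw, add_zero]
  have hl : ∃ l, Nat.find hu ≤ l ∧ PeriodicBetween D a (Nat.find hu) l := ⟨n, hun, hperiodic⟩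
  exact ⟨Nat.find hu, Nat.find hl, ha, (Nat.find_spec hu).1, hun, (Nat.find_spec hu).2,
    fun b hab hb hX => (Nat.find_min' hu ⟨hab, hX⟩).not_gt hb, (Nat.find_spec hl).1,
    Nat.find_min' hl ⟨hun, hperiodic⟩, (Nat.find_spec hl).2, fun m hm h => Nat.find_min' hl ⟨hm, h⟩⟩

end IsSchurColoring

namespace ColorEqMod

variable {z z' z'' : ZMod (p ^ n)}

lemma of_eq (h : D z = D z') : ColorEqMod D l z z' := ⟨0, dvd_zero _, by rw [add_zero, h]⟩

lemma of_pow_dvd_sub (h : π ^ l ∣ z' - z) : ColorEqMod D l z z' :=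
  ⟨z' - z, h, by rw [add_sub_cancel]⟩

lemma pow_dvd {b : ℕ} (hb : b ≤ l) (X : IsXIdeal D b) (h : ColorEqMod D l z z') (hz : π ^ b ∣ z) :
    π ^ b ∣ z' := by
  obtain ⟨w, hw, h⟩ := h
  exact X _ _ h (dvd_add hz ((pow_dvd_pow _ hb).trans hw))

lemma symm (S : IsSchurColoring D) (X : IsXIdeal D l) (h : ColorEqMod D l z z') :
    ColorEqMod D l z' z := by
  obtain ⟨w, hw, h⟩ := h
  obtain ⟨w', hcolor, hadd⟩ := S.exists_add_eq h (-w)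
  exact ⟨w', X _ _ hcolor.symm hw.neg_right, by rw [hadd, add_neg_cancel_right]⟩

lemma trans (S : IsSchurColoring D) (X : IsXIdeal D l) (h : ColorEqMod D l z z')
    (h' : ColorEqMod D l z' z'') : ColorEqMod D l z z'' := by
  obtain ⟨w, hw, h⟩ := h
  obtain ⟨w', hw', h'⟩ := h'
  obtain ⟨x, hcolor, hadd⟩ := S.exists_add_eq h.symm w'
  exact ⟨w + x, dvd_add hw (X _ _ hcolor.symm hw'), by rw [← add_assoc, hadd, h']⟩

end ColorEqMod

lemma IsLayer.eq_of_colorEqMod (L : IsLayer D a u l) {z z' : ZMod (p ^ n)}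
    (h : ColorEqMod D l z z') (hz : z ∈ layer π a u) : D z = D z' := by
  obtain ⟨w, hw, h⟩ := h
  rw [← h, L.periodic z hz w hw]

lemma IsLayer.add_mem_layer (L : IsLayer D a u l) {z w : ZMod (p ^ n)} (hz : z ∈ layer π a u)
    (hw : π ^ u ∣ w) : z + w ∈ layer π a u :=
  ⟨dvd_add hz.1 ((pow_dvd_pow _ L.lt.le).trans hw), fun h => hz.2 ((dvd_add_left hw).1 h)⟩

lemma IsLayer.mem_layer_of_eq (L : IsLayer D a u l) {z z' : ZMod (p ^ n)} (h : D z = D z')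
    (hz : z ∈ layer π a u) : z' ∈ layer π a u :=
  ⟨L.isXIdeal_bot _ _ h hz.1, mt (L.isXIdeal_top _ _ h.symm) hz.2⟩

lemma IsLayer.mem_layer_of_colorEqMod (L : IsLayer D a u l) {z z' : ZMod (p ^ n)}
    (h : ColorEqMod D u z z') (hz : z ∈ layer π a u) : z' ∈ layer π a u := by
  obtain ⟨w, hw, h⟩ := h
  exact L.mem_layer_of_eq h (L.add_mem_layer hz hw)

end Layers

section Multipliers

variable {D : ZMod (p ^ n) → κ} {a u l : ℕ} [Fact p.Prime]

lemma IsLayer.pow_dvd_of_forall_add_eq (L : IsLayer D a u l) {w : ZMod (p ^ n)} (hw : π ^ u ∣ w)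
    (hperiod : ∀ z ∈ layer π a u, D (z + w) = D z) : π ^ l ∣ w := by
  by_contra hl
  obtain ⟨m, hum, hml, hm⟩ := exists_hasVal ⟨hw, hl⟩
  refine (L.period_min m hum fun z hz x hx => ?_).not_gt hml
  obtain ⟨k, rfl⟩ := hm.exists_eq_mul hx
  obtain ⟨k, rfl⟩ := ZMod.natCast_zmod_surjective k
  clear hx
  induction k with
  | zero => simp
  | succ k ih =>
    have hkw : π ^ u ∣ k * w := hw.mul_left _
    rw [Nat.cast_succ, add_one_mul, ← add_assoc,
      hperiod _ (L.add_mem_layer hz hkw), ih]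

lemma IsSchurColoring.isXIdeal_period (S : IsSchurColoring D) (L : IsLayer D a u l) :
    IsXIdeal D l := by
  intro w w' h hw
  refine L.pow_dvd_of_forall_add_eq
    (L.isXIdeal_top _ _ h ((pow_dvd_pow _ L.le_period).trans hw)) fun z hzl => ?_
  obtain ⟨e, he⟩ := S.exists_equiv_add h
  obtain ⟨hz, hadd⟩ := he (e.symm z)
  rw [e.apply_symm_apply] at hz hadd
  rw [hadd, hz]
  exact L.periodic _ (L.mem_layer_of_eq hz hzl) _ hw

lemma IsSchurColoring.pow_mul_eq (S : IsSchurColoring D) {k y : ZMod (p ^ n)} (hk : IsUnit k)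
    (h : D (k * y) = D y) (i : ℕ) : D (k ^ i * y) = D y := by
  induction i with
  | zero => simp
  | succ i ih => rw [pow_succ', mul_assoc, ← h, S.mul_eq_mul_iff hk, ih]

lemma sq_dvd_pow_sub {R : Type*} [CommRing R] (k : R) (i : ℕ) :
    (k - 1) ^ 2 ∣ k ^ i - (1 + i * (k - 1)) := by
  obtain ⟨c, hc⟩ := Polynomial.powAddExpansion 1 (k - 1) i
  exact ⟨c, by rw [add_sub_cancel, one_pow, one_pow, mul_one] at hc; rw [hc]; ring⟩

namespace IsSchurColoring

variable {v : ℕ} {y k k' : ZMod (p ^ n)}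

-- The powers `k ^ i` fix the colour of `y`, and modulo the period they are `1 + i * (k - 1)`; if
-- `k - 1` had valuation `l - v - 1`, then `p ^ (l - 1)` would be a period too.
lemma pow_dvd_sub_one_of_pow_pred_dvd (S : IsSchurColoring D) (L : IsLayer D a u l)
    (hy : HasVal π v y) (hav : a ≤ v) (hvu : v < u) (ht : ∃ t, D (y + π ^ (l - 1) * t) ≠ D y)
    (hk : IsUnit k) (hky : D (k * y) = D y) (hvl : v + 2 ≤ l) (hdvd : π ^ (l - v - 1) ∣ k - 1) :
    π ^ (l - v) ∣ k - 1 := by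
  by_contra hnot
  obtain ⟨t, ht⟩ := ht
  have hln := L.period_le
  obtain ⟨j, rfl⟩ : ∃ j, l = v + j + 2 := ⟨l - v - 2, by omega⟩
  rw [show v + j + 2 - v - 1 = j + 1 by omega] at hdvd
  rw [show v + j + 2 - v = j + 1 + 1 by omega] at hnot
  rw [show v + j + 2 - 1 = v + (j + 1) by omega] at ht
  obtain ⟨x, hx, hkx⟩ := (hasVal_iff.2 ⟨hdvd, hnot⟩).exists_isUnit_eq_mul
  obtain ⟨s, hs⟩ := hy.pow_mul_dvd_of_pow_add_dvd (dvd_mul_right (π ^ (v + (j + 1))) t)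
  obtain ⟨x, rfl⟩ := hx
  obtain ⟨i, hi⟩ := ZMod.natCast_zmod_surjective (s * (↑x⁻¹ : ZMod (p ^ n)))
  have hlinear : (i : ZMod (p ^ n)) * (k - 1) = π ^ (j + 1) * s := by
    rw [hi, hkx, mul_mul_mul_comm, mul_comm s, Units.inv_mul, mul_one, mul_comm]
  have herror : π ^ (v + j + 2) ∣ (k ^ i - (1 + i * (k - 1))) * y := by
    rw [show v + j + 2 = (j + 2) + v by omega, pow_add]
    refine mul_dvd_mul (dvd_trans ?_ (sq_dvd_pow_sub k i)) hy.pow_dvd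
    exact (pow_dvd_pow _ (by omega)).trans (pow_mul π (j + 1) 2 ▸ pow_dvd_pow_of_dvd hdvd 2)
  have hki : HasVal π v (k ^ i * y) := hy.unit_mul (hk.pow i)
  refine ht ?_
  calc D (y + π ^ (v + (j + 1)) * t)
      = D (k ^ i * y + -((k ^ i - (1 + i * (k - 1))) * y)) := by
        rw [hs, mul_right_comm, ← hlinear]; ring_nf
    _ = D (k ^ i * y) := L.periodic _ (hki.mem_layer_iff.2 ⟨hav, hvu⟩) _ herror.neg_right
    _ = D y := S.pow_mul_eq hk hky i

lemma pow_dvd_sub_one (S : IsSchurColoring D) (L : IsLayer D a u l)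
    (hy : HasVal π v y) (hav : a ≤ v) (hvu : v < u) (ht : ∃ t, D (y + π ^ (l - 1) * t) ≠ D y)
    (hk : IsUnit k) (hky : D (k * y) = D y) (hdvd : π ^ liftExp p ∣ k - 1) :
    π ^ (l - v) ∣ k - 1 := by
  by_contra hnot
  have hln := L.period_le
  have hlt : liftExp p < l - v := by
    by_contra! hle
    exact hnot ((pow_dvd_pow _ hle).trans hdvd)
  have hpos := one_le_liftExp p
  obtain ⟨r, hr⟩ := exists_pow_sub_one_hasVal (by omega) hdvd hnot
  have := hr.pow_dvd_iff.1 (S.pow_dvd_sub_one_of_pow_pred_dvd L hy hav hvu ht (hk.pow r)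
    (S.pow_mul_eq hk hky r) (by omega) hr.pow_dvd)
  omega

lemma pow_dvd_sub (S : IsSchurColoring D) (L : IsLayer D a u l)
    (hy : HasVal π v y) (hav : a ≤ v) (hvu : v < u) (ht : ∃ t, D (y + π ^ (l - 1) * t) ≠ D y)
    (hk : IsUnit k) (hk' : IsUnit k') (hky : D (k * y) = D y) (hky' : D (k' * y) = D y)
    (hdvd : π ^ liftExp p ∣ k - k') : π ^ (l - v) ∣ k - k' := by
  obtain ⟨m, rfl⟩ := hk'.dvd (a := k)
  have hmy : D (m * y) = D y := by rw [← S.mul_eq_mul_iff hk', ← mul_assoc, hky, hky']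
  rw [← mul_sub_one, hk'.dvd_mul_left] at hdvd ⊢
  exact S.pow_dvd_sub_one L hy hav hvu ht (isUnit_of_mul_isUnit_right hk) hmy hdvd

end IsSchurColoring

end Multipliers

lemma ncard_mul_le_ncard_mul {α β : Type*} [Finite α] [Finite β] (r : α → β → Prop) {s : Set α}
    {t : Set β} {m k : ℕ} (hm : ∀ a ∈ s, m ≤ {b ∈ t | r a b}.ncard)
    (hk : ∀ b ∈ t, {a ∈ s | r a b}.ncard ≤ k) : s.ncard * m ≤ t.ncard * k := by
  classical
  have := Fintype.ofFinite α
  have := Fintype.ofFinite β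
  rw [ncard_eq_toFinset_card', ncard_eq_toFinset_card']
  refine Finset.card_mul_le_card_mul r (fun a ha => ?_) fun b hb => ?_
  · convert hm a (by simpa using ha) using 1
    rw [ncard_eq_toFinset_card', Finset.bipartiteAbove]
    congr 1; ext; simp
  · convert hk b (by simpa using hb) using 1
    rw [ncard_eq_toFinset_card', Finset.bipartiteBelow]
    congr 1; ext; simp

section ColorsOfLayer

variable {D : ZMod (p ^ n) → κ} {a u l v : ℕ} [Fact p.Prime]

namespace IsSchurColoring

lemma isXIdeal_of_forall_pow_dvd (S : IsSchurColoring D) {b : ℕ} {z : ZMod (p ^ n)}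
    (hz : HasVal π b z) (hclass : ∀ w, D w = D z → π ^ b ∣ w) : IsXIdeal D b := by
  have dvd_of_eq_mul (m : ℕ) : ∀ w, D w = D (m * z) → π ^ b ∣ w := by
    induction m with
    | zero =>
      intro w hw
      rw [S.eq_zero w (by simpa using hw)]
      exact dvd_zero _
    | succ m ih =>
      intro w hw
      rw [Nat.cast_succ, add_one_mul] at hw
      obtain ⟨x, y, rfl, hx, hy⟩ := S.exists_eq_add hw
      exact dvd_add (ih _ hx) (hclass _ hy)
  intro w w' hw hwb
  obtain ⟨k, rfl⟩ := hz.exists_eq_mul hwb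
  obtain ⟨m, rfl⟩ := ZMod.natCast_zmod_surjective k
  exact dvd_of_eq_mul m w' hw.symm

lemma exists_eq_hasVal_bot (S : IsSchurColoring D) (L : IsLayer D a u l) {z : ZMod (p ^ n)}
    (hz : z ∈ layer π a u) : ∃ z', D z' = D z ∧ HasVal π a z' := by
  classical
  have hex : ∃ b z', D z' = D z ∧ HasVal π b z' := by
    obtain ⟨v, -, -, hv⟩ := exists_hasVal hz
    exact ⟨v, z, rfl, hv⟩
  obtain ⟨z', hz', hval⟩ := Nat.find_spec hex
  have hmem := hval.mem_layer_iff.1 (L.mem_layer_of_eq hz'.symm hz)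
  rcases hmem.1.eq_or_lt with heq | hlt
  · rw [← heq] at hval
    exact ⟨z', hz', hval⟩
  · refine absurd (S.isXIdeal_of_forall_pow_dvd hval fun w hw => ?_) (L.not_isXIdeal _ hlt hmem.2)
    obtain ⟨v, -, -, hv⟩ := exists_hasVal (L.mem_layer_of_eq (hw.trans hz').symm hz)
    exact hv.pow_dvd_iff.2 (Nat.find_min' hex ⟨w, hw.trans hz', hv⟩)

lemma exists_eq_hasVal (S : IsSchurColoring D) (L : IsLayer D a u l) {z : ZMod (p ^ n)}
    (hz : z ∈ layer π a u) (hav : a ≤ v) (hvu : v < u) : ∃ z', D z' = D z ∧ HasVal π v z' := by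
  have hv : HasVal π v (π ^ v) := hasVal_pow (hvu.trans_le L.le)
  obtain ⟨x, hx, hxa⟩ := S.exists_eq_hasVal_bot L (hv.mem_layer_iff.2 ⟨hav, hvu⟩)
  obtain ⟨y, hy, hya⟩ := S.exists_eq_hasVal_bot L hz
  obtain ⟨k, hk, rfl⟩ := hxa.exists_isUnit_eq_mul_of_hasVal hya
  exact ⟨k * π ^ v, by rw [← hy, S.mul_eq_mul_iff hk, hx], hv.unit_mul hk⟩

lemma colorEqMod_mul (S : IsSchurColoring D) (L : IsLayer D a u l) {k y : ZMod (p ^ n)}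
    (hk : IsUnit k) (hdvd : π ∣ k - 1) (hy : y ∈ layer π a u) : ColorEqMod D u (k * y) y := by
  have hau := L.lt
  obtain ⟨m, rfl⟩ : ∃ m, u = m + 1 := ⟨u - 1, by omega⟩
  obtain ⟨y', hcolor, hval⟩ := S.exists_eq_hasVal L hy (Nat.le_of_lt_succ hau) m.lt_succ_self
  have hky : ColorEqMod D (m + 1) (k * y) (k * y') :=
    .of_eq ((S.mul_eq_mul_iff hk).2 hcolor.symm)
  have hky' : ColorEqMod D (m + 1) (k * y') y' := .of_pow_dvd_sub <| by
    rw [dvd_sub_comm, ← sub_one_mul, mul_comm, pow_succ]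
    exact mul_dvd_mul hval.pow_dvd hdvd
  exact (hky.trans S L.isXIdeal_top hky').trans S L.isXIdeal_top (.of_eq hcolor)

lemma colorEqMod_add (S : IsSchurColoring D) (L : IsLayer D a u l) {y g : ZMod (p ^ n)}
    (hy : HasVal π v y) (hav : a ≤ v) (hvu : v + 1 < u) (hg : π ^ (u - 1) ∣ g) :
    ColorEqMod D u (y + g) y := by
  obtain ⟨k, hk, hdvd, hadd⟩ := hy.exists_isUnit_add_eq_mul one_pos
    ((pow_dvd_pow _ (by omega)).trans hg)
  rw [hadd]
  exact S.colorEqMod_mul L hk (by simpa using hdvd) (hy.mem_layer_iff.2 ⟨hav, by omega⟩)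

section Counting

variable {x g z : ZMod (p ^ n)}

lemma ncard_boundary_le (S : IsSchurColoring D) (L : IsLayer D a u l) (hx : x ∈ layer π a u)
    (hg : g ∈ layer π a u) :
    {v | ColorEqMod D u x v ∧ ¬ ColorEqMod D u x (v + g)}.ncard ≤
      {v | ColorEqMod D u x v ∧ π ^ (u - 1) ∣ v}.ncard := by
  have hau := L.lt
  obtain ⟨g', hcolor, hg'⟩ := S.exists_eq_hasVal L hg (Nat.le_sub_one_of_lt hau) (by omega)
  obtain ⟨e, he⟩ := S.exists_equiv_add hcolor.symm
  refine ncard_le_ncard_of_injOn e (fun v hv => ?_) e.injective.injOn (toFinite _)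
  have hev : ColorEqMod D u x (e v) := hv.1.trans S L.isXIdeal_top (.of_eq (he v).1.symm)
  refine ⟨hev, by_contra fun hdvd => hv.2 ?_⟩
  obtain ⟨w, haw, hwu, hw⟩ := exists_hasVal ⟨(L.mem_layer_of_colorEqMod hev hx).1, hdvd⟩
  have hshift := S.colorEqMod_add L hw haw (by omega) hg'.pow_dvd
  exact (hev.trans S L.isXIdeal_top (hshift.symm S L.isXIdeal_top)).trans S L.isXIdeal_top
    (.of_eq (he v).2)

lemma ncard_compl_le (S : IsSchurColoring D) (L : IsLayer D a u l) (hx : x ∈ layer π a u)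
    (hz : ColorEqMod D u x z) :
    {w | π ^ a ∣ w ∧ ¬ ColorEqMod D u x w}.ncard ≤
      {g ∈ layer π a u | ¬ ColorEqMod D u x (z + g)}.ncard := by
  refine ncard_le_ncard_of_injOn (fun w => w - z) (fun w hw => ?_) sub_left_injective.injOn
    (toFinite _)
  refine ⟨⟨dvd_sub hw.1 (L.mem_layer_of_colorEqMod hz hx).1, fun h => hw.2 ?_⟩, ?_⟩
  · exact hz.trans S L.isXIdeal_top (.of_pow_dvd_sub h)
  · rw [add_sub_cancel]
    exact hw.2

lemma two_mul_ncard_lt (S : IsSchurColoring D) (L : IsLayer D a u l) (hau : a + 2 ≤ u)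
    (hx : x ∈ layer π a u) :
    2 * {v | ColorEqMod D u x v ∧ π ^ (u - 1) ∣ v}.ncard < {v | ColorEqMod D u x v}.ncard := by
  have hlt : {v | ColorEqMod D u x v ∧ π ^ (u - 1) ∣ v}.ncard < {v | π ^ (u - 1) ∣ v}.ncard :=
    ncard_lt_ncard ⟨fun v hv => hv.2, fun h => (L.mem_layer_of_colorEqMod
      (h (dvd_zero _ : (0 : ZMod (p ^ n)) ∈ {v | π ^ (u - 1) ∣ v})).1 hx).2 (dvd_zero _)⟩
  have hle : {v | π ^ (u - 1) ∣ v}.ncard ≤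
      {v | ColorEqMod D u x v ∧ ¬ π ^ (u - 1) ∣ v}.ncard := by
    obtain ⟨z, hcolor, hz⟩ := S.exists_eq_hasVal_bot L hx
    refine ncard_le_ncard_of_injOn (fun g => z + g) (fun g hg => ⟨?_, ?_⟩)
      (add_right_injective z).injOn (toFinite _)
    · exact (ColorEqMod.of_eq hcolor.symm).trans S L.isXIdeal_top
        ((S.colorEqMod_add L hz le_rfl hau hg).symm S L.isXIdeal_top)
    · rw [dvd_add_left hg, hz.pow_dvd_iff]
      omega
  have hsplit := ncard_inter_add_ncard_sdiff_eq_ncard {v | ColorEqMod D u x v}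
    {v | π ^ (u - 1) ∣ v}
  have hinter : {v | ColorEqMod D u x v} ∩ {v | π ^ (u - 1) ∣ v} =
    {v | ColorEqMod D u x v ∧ π ^ (u - 1) ∣ v} := rfl
  have hdiff : {v | ColorEqMod D u x v} \ {v | π ^ (u - 1) ∣ v} =
    {v | ColorEqMod D u x v ∧ ¬ π ^ (u - 1) ∣ v} := rfl
  rw [hinter, hdiff] at hsplit
  omega

-- Translating by any `g` in the layer moves at most as many elements out of the class as there are
-- multiples of `p ^ (u - 1)` in it, which is less than half; now count the pairs `(v, g)` such that
-- `v + g` leaves the class.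
lemma ncard_layer_lt (S : IsSchurColoring D) (L : IsLayer D a u l) (hau : a + 2 ≤ u)
    (hx : x ∈ layer π a u) : (layer π a u).ncard < 2 * {v | ColorEqMod D u x v}.ncard := by
  have hcount := ncard_mul_le_ncard_mul (s := {v | ColorEqMod D u x v})
    (fun v g => ¬ ColorEqMod D u x (v + g))
    (fun v hv => S.ncard_compl_le L hx hv) (fun g hg => S.ncard_boundary_le L hx hg)
  have hlt := S.two_mul_ncard_lt L hau hx
  have hlayer : (layer π a u).ncard ≤ {z : ZMod (p ^ n) | π ^ a ∣ z}.ncard :=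
    ncard_le_ncard fun z hz => hz.1
  have hcompl : {w | π ^ a ∣ w ∧ ¬ ColorEqMod D u x w}.ncard + {v | ColorEqMod D u x v}.ncard =
      {z : ZMod (p ^ n) | π ^ a ∣ z}.ncard :=
    ncard_sdiff_add_ncard_of_subset fun z hz => (L.mem_layer_of_colorEqMod hz hx).1
  by_contra!
  nlinarith

end Counting

lemma colorEqMod_of_mem_layer (S : IsSchurColoring D) (L : IsLayer D a u l) (hau : a + 2 ≤ u)
    {x x' : ZMod (p ^ n)} (hx : x ∈ layer π a u) (hx' : x' ∈ layer π a u) :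
    ColorEqMod D u x x' := by
  by_contra hne
  have hdisj : Disjoint {v | ColorEqMod D u x v} {v | ColorEqMod D u x' v} :=
    Set.disjoint_left.2 fun z hz hz' =>
      hne (ColorEqMod.trans S L.isXIdeal_top hz (hz'.symm S L.isXIdeal_top))
  have hunion : {v | ColorEqMod D u x v} ∪ {v | ColorEqMod D u x' v} ⊆ layer π a u := by
    rintro z (hz | hz)
    exacts [L.mem_layer_of_colorEqMod hz hx, L.mem_layer_of_colorEqMod hz hx']
  have hle := ncard_le_ncard hunion
  rw [ncard_union_eq hdisj] at hle
  have hlt := S.ncard_layer_lt L hau hx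
  have hlt' := S.ncard_layer_lt L hau hx'
  omega

end IsSchurColoring

end ColorsOfLayer

section Dyadic

variable [Fact p.Prime]

lemma dvd_sub_one_of_eq_two (hp : p = 2) (hn : 0 < n) {k : ZMod (p ^ n)} (hk : IsUnit k) :
    π ∣ k - 1 := by
  obtain ⟨K, rfl⟩ := ZMod.intCast_surjective k
  have hK := pow_dvd_intCast_iff (p := p) (n := n) (a := 1) hn K
  have hK' := pow_dvd_intCast_iff (p := p) (n := n) (a := 1) hn (K - 1)
  rw [isUnit_iff_not_dvd hn] at hk
  rw [pow_one, pow_one] at hK hK'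
  rw [hK] at hk
  push_cast at hK'
  rw [hK']
  subst hp
  omega

lemma HasVal.pow_succ_dvd_sub (hp : p = 2) {v : ℕ} {x y : ZMod (p ^ n)} (hx : HasVal π v x)
    (hy : HasVal π v y) : π ^ (v + 1) ∣ x - y := by
  obtain ⟨k, hk, rfl⟩ := hy.exists_isUnit_eq_mul_of_hasVal hx
  rw [← sub_one_mul, mul_comm, pow_succ]
  exact mul_dvd_mul hy.pow_dvd (dvd_sub_one_of_eq_two hp (v.zero_le.trans_lt hy.lt) hk)

end Dyadic

section Period

/-- The multiples of `p ^ u` by which `z` can be translated inside its colour class. -/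
def colorTranslations (D : ZMod (p ^ n) → κ) (u : ℕ) (z : ZMod (p ^ n)) : Set (ZMod (p ^ n)) :=
  {w | π ^ u ∣ w ∧ D (z + w) = D z}

variable {D : ZMod (p ^ n) → κ} {a u l v : ℕ} {y z w : ZMod (p ^ n)} [Fact p.Prime]

namespace IsSchurColoring

lemma ncard_colorTranslations_le (S : IsSchurColoring D) (X : IsXIdeal D u) (h : D y = D z) :
    (colorTranslations D u y).ncard ≤ (colorTranslations D u z).ncard := by
  obtain ⟨e, he⟩ := S.exists_equiv_add h
  refine ncard_le_ncard_of_injOn e (fun w hw => ?_) e.injective.injOn (toFinite _)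
  exact ⟨X _ _ (he w).1.symm hw.1, by rw [add_comm, (he w).2, add_comm, hw.2, h]⟩

lemma mul_eq_self (S : IsSchurColoring D) (L : IsLayer D a u l) {k : ZMod (p ^ n)} (hk : IsUnit k)
    (hdvd : π ^ (l - u + 1) ∣ k - 1) (hz : z ∈ layer π a u) : D (k * z) = D z := by
  have hau := L.lt
  have hul := L.le_period
  obtain ⟨y, hcolor, hy⟩ := S.exists_eq_hasVal L hz (Nat.le_sub_one_of_lt hau) (by omega)
  rw [← (S.mul_eq_mul_iff hk).2 hcolor, ← hcolor, ← add_sub_cancel y (k * y)]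
  refine L.periodic y (hy.mem_layer_iff.2 (by omega)) _ ?_
  rw [← sub_one_mul, show l = l - u + 1 + (u - 1) by omega, pow_add]
  exact mul_dvd_mul hdvd hy.pow_dvd

lemma add_eq_self (S : IsSchurColoring D) (L : IsLayer D a u l) (hz : HasVal π v z) (hav : a ≤ v)
    (hvu : v < u) (hw : π ^ (v + (l - u + 1)) ∣ w) : D (z + w) = D z := by
  obtain ⟨k, hk, hdvd, hadd⟩ := hz.exists_isUnit_add_eq_mul (Nat.succ_pos _) hw
  rw [hadd]
  exact S.mul_eq_self L hk hdvd (hz.mem_layer_iff.2 ⟨hav, hvu⟩)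

lemma exists_add_ne (S : IsSchurColoring D) (L : IsLayer D a u l) (hul : u < l)
    (hy : HasVal π (u - 1) y) : ∃ t, D (y + π ^ (l - 1) * t) ≠ D y := by
  by_contra! hperiod
  have hmin := L.period_min (l - 1) (by omega) fun z hz w hw => ?_
  · omega
  obtain ⟨v, hav, hvu, hv⟩ := exists_hasVal hz
  rcases Nat.lt_or_ge v (u - 1) with hlt | hge
  · exact S.add_eq_self L hv hav hvu ((pow_dvd_pow _ (by omega)).trans hw)
  · obtain rfl : v = u - 1 := by omega
    obtain ⟨_, ⟨k, rfl⟩, rfl⟩ := hy.exists_isUnit_eq_mul_of_hasVal hv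
    obtain ⟨t, rfl⟩ := hw
    rw [show k * y + π ^ (l - 1) * t = k * (y + π ^ (l - 1) * (↑k⁻¹ * t)) by
      rw [mul_add, mul_left_comm (k : ZMod (p ^ n)), k.mul_inv_cancel_left],
      S.mul_eq_mul_iff k.isUnit, hperiod]

lemma pow_dvd_of_add_eq (S : IsSchurColoring D) (L : IsLayer D a u l) (hul : u < l)
    (hz : HasVal π v z) (hav : a ≤ v) (hvu : v + liftExp p ≤ u)
    (hw : w ∈ colorTranslations D u z) : π ^ (v + (l - u + 1)) ∣ w := by
  have hpos := one_le_liftExp p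
  obtain ⟨k, hk, hdvd, hadd⟩ := hz.exists_isUnit_add_eq_mul hpos ((pow_dvd_pow _ hvu).trans hw.1)
  obtain ⟨y, hcolor, hy⟩ := S.exists_eq_hasVal L (v := u - 1)
    (hz.mem_layer_iff.2 ⟨hav, by omega⟩) (by omega) (by omega)
  have hky : D (k * y) = D y := by
    rw [(S.mul_eq_mul_iff hk).2 hcolor, ← hadd, hw.2, hcolor]
  have := S.pow_dvd_sub_one L hy (by omega) (by omega) (S.exists_add_ne L hul hy) hk hky hdvd
  rw [show l - (u - 1) = l - u + 1 by omega] at this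
  rw [eq_sub_of_add_eq' hadd, ← sub_one_mul, add_comm v, pow_add]
  exact mul_dvd_mul this hz.pow_dvd

lemma le_of_color_eq (S : IsSchurColoring D) (L : IsLayer D a u l) (hul : u < l) {v' : ℕ}
    (hy : HasVal π v y) (hz : HasVal π v' z) (hcolor : D y = D z) (hav : a ≤ v)
    (hvu : v + liftExp p ≤ u) (hav' : a ≤ v') (hvu' : v' < u) (hul' : u ≤ v' + (l - u + 1)) :
    v ≤ v' := by
  have hpos := one_le_liftExp p
  have hln := L.period_le
  have hle : {w : ZMod (p ^ n) | π ^ (v' + (l - u + 1)) ∣ w}.ncard ≤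
      {w : ZMod (p ^ n) | π ^ (v + (l - u + 1)) ∣ w}.ncard :=
    calc _ ≤ (colorTranslations D u z).ncard := ncard_le_ncard fun w hw =>
          ⟨(pow_dvd_pow _ hul').trans hw, S.add_eq_self L hz hav' hvu' hw⟩
      _ ≤ (colorTranslations D u y).ncard := S.ncard_colorTranslations_le L.isXIdeal_top hcolor.symm
      _ ≤ _ := ncard_le_ncard fun w hw => S.pow_dvd_of_add_eq L hul hy hav hvu hw
  rw [ncard_setOf_pow_dvd (by omega), ncard_setOf_pow_dvd (by omega),
    Nat.pow_le_pow_iff_right (Fact.out : p.Prime).one_lt] at hle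
  omega

lemma period_ne_succ (S : IsSchurColoring D) (L : IsLayer D a u l) (hau : a + 2 ≤ u) :
    l ≠ u + 1 := by
  rintro rfl
  have hun := L.le
  have hy : HasVal π (u - 1) (π ^ (u - 1)) := hasVal_pow (by omega)
  obtain ⟨z, hcolor, hz⟩ := S.exists_eq_hasVal L (v := u - 2)
    (hy.mem_layer_iff.2 ⟨by omega, by omega⟩) (by omega) (by omega)
  have hle : {w : ZMod (p ^ n) | π ^ u ∣ w}.ncard ≤ (colorTranslations D u (π ^ (u - 1))).ncard :=
    (ncard_le_ncard (t := colorTranslations D u z) fun w hw => ⟨hw, S.add_eq_self L hz (by omega)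
      (by omega) ((pow_dvd_pow _ (by omega)).trans hw)⟩).trans
      (S.ncard_colorTranslations_le L.isXIdeal_top hcolor)
  have hfull : colorTranslations D u (π ^ (u - 1)) = {w | π ^ u ∣ w} :=
    eq_of_subset_of_ncard_le (fun w hw => hw.1) hle
  obtain ⟨t, ht⟩ := S.exists_add_ne L u.lt_succ_self hy
  have hmem : π ^ u * t ∈ colorTranslations D u (π ^ (u - 1)) := by
    rw [hfull]
    exact dvd_mul_right _ _
  exact ht hmem.2

section TwoStepDyadicLayer

variable {g x : ZMod (p ^ n)}

lemma ncard_translate_inter_le (S : IsSchurColoring D) (L : IsLayer D a (a + 2) l) (hp : p = 2)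
    (hal : a + 2 < l) (hy : HasVal π (a + 1) y) (hx : π ^ (a + 2) ∣ x)
    (hxl : ¬ π ^ (l - 1) ∣ x) :
    {v | D v = D y ∧ D (v + x) = D y}.ncard ≤ (colorTranslations D (a + 2) y).ncard := by
  have hlift : liftExp p = 2 := if_pos hp
  refine ncard_le_ncard_of_injOn (fun v => v - y) (fun v hv => ?_) sub_left_injective.injOn
    (toFinite _)
  have hvl : v ∈ layer π a (a + 2) :=
    L.mem_layer_of_eq hv.1.symm (hy.mem_layer_iff.2 ⟨by omega, by omega⟩)
  obtain ⟨b, hab, hbu, hb⟩ := exists_hasVal hvl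
  obtain rfl | rfl : b = a ∨ b = a + 1 := by omega
  · refine absurd ((pow_dvd_pow π (by omega)).trans (S.pow_dvd_of_add_eq L hal hb le_rfl
      (by omega) ⟨hx, hv.2.trans hv.1.symm⟩)) hxl
  · exact ⟨hb.pow_succ_dvd_sub hp hy, by rw [add_sub_cancel, hv.1]⟩

lemma image_colorTranslations_subset (S : IsSchurColoring D) (L : IsLayer D a u l)
    (hz : HasVal π a z) (hg : π ^ (a + (l - u + 1)) ∣ g) :
    (fun w => z + w) '' colorTranslations D u z ⊆ {v | D v = D z ∧ D (v + g) = D z} := by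
  rintro _ ⟨w, hw, rfl⟩
  exact ⟨hw.2, (S.add_eq_self L (hz.add hw.1 L.lt) le_rfl L.lt hg).trans hw.2⟩

lemma two_mul_ncard_colorTranslations_le (S : IsSchurColoring D) (L : IsLayer D a (a + 2) l)
    (hp : p = 2) (hz : HasVal π a z) (hg : π ^ (l - 1) ∣ g) :
    2 * (colorTranslations D (a + 2) z).ncard ≤ {v | D v = D z ∧ D (v + g) = D z}.ncard := by
  have hul := L.le_period
  have hun := L.le
  rw [show l - 1 = a + (l - (a + 2) + 1) by omega] at hg
  obtain ⟨x, hx, hcolor⟩ := S.colorEqMod_of_mem_layer L le_rfl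
    (hz.neg.mem_layer_iff.2 ⟨le_rfl, by omega⟩) (hz.mem_layer_iff.2 ⟨le_rfl, by omega⟩)
  have hz' : HasVal π a (-z + x) := hz.neg.add hx (by omega)
  have hdisj : Disjoint ((fun w => z + w) '' colorTranslations D (a + 2) z)
      ((fun w => -z + x + w) '' colorTranslations D (a + 2) (-z + x)) := by
    rw [Set.disjoint_left]
    rintro _ ⟨w, hw, rfl⟩ ⟨w', hw', heq⟩
    have hpz : π * z = x + w' - w := by
      rw [show π = 1 + 1 by rw [hp]; norm_num]
      linear_combination -heq
    have hdvd := hz.pow_dvd_of_pow_add_dvd_mul hun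
      (hpz ▸ dvd_sub (dvd_add hx hw'.1) hw.1)
    have hle : 2 ≤ 1 := (hasVal_pow (p := p) (n := n) (v := 1) (by omega)).pow_dvd_iff.1
      (by rwa [pow_one])
    omega
  have hsubset' := S.image_colorTranslations_subset L hz' hg
  rw [hcolor] at hsubset'
  have hle := ncard_le_ncard (union_subset (S.image_colorTranslations_subset L hz hg) hsubset')
  rw [ncard_union_eq hdisj, ncard_image_of_injective _ (add_right_injective _),
    ncard_image_of_injective _ (add_right_injective _)] at hle
  have := S.ncard_colorTranslations_le L.isXIdeal_top hcolor.symm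
  omega

lemma pow_dvd_of_color_eq_pow (S : IsSchurColoring D) (L : IsLayer D a (a + 2) l) (hp : p = 2)
    (hal : a + 2 < l) (hx : D x = D (π ^ (l - 1))) : π ^ (l - 1) ∣ x := by
  by_contra hxl
  have hun := L.le
  have hdvd : π ^ (a + 2) ∣ x := L.isXIdeal_top _ _ hx.symm (pow_dvd_pow _ (by omega))
  have hy : HasVal π (a + 1) (π ^ (a + 1)) := hasVal_pow (by omega)
  obtain ⟨z, hcolor, hz⟩ := S.exists_eq_hasVal_bot L (hy.mem_layer_iff.2 ⟨by omega, by omega⟩)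
  obtain ⟨e, he⟩ := S.exists_equiv_add hx.symm
  have hupper := S.ncard_translate_inter_le L hp hal hy hdvd hxl
  have hlower := S.two_mul_ncard_colorTranslations_le L hp hz (dvd_refl (π ^ (l - 1)))
  have hle : {v | D v = D z ∧ D (v + π ^ (l - 1)) = D z}.ncard ≤
      {v | D v = D (π ^ (a + 1)) ∧ D (v + x) = D (π ^ (a + 1))}.ncard :=
    ncard_le_ncard_of_injOn e (fun v hv => ⟨(he v).1.trans (hv.1.trans hcolor),
      (he v).2.trans (hv.2.trans hcolor)⟩) e.injective.injOn (toFinite _)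
  have htransfer := S.ncard_colorTranslations_le L.isXIdeal_top hcolor.symm
  have hpos : 0 < (colorTranslations D (a + 2) (π ^ (a + 1))).ncard :=
    (ncard_pos).2 ⟨0, dvd_zero _, by rw [add_zero]⟩
  omega

lemma pow_dvd_sub_of_color_eq_pow (S : IsSchurColoring D) (L : IsLayer D a (a + 2) l) (hp : p = 2)
    (hal : a + 2 < l) (hx : D x = D (π ^ (l - 1))) : π ^ l ∣ x - π ^ (l - 1) := by
  have hln := L.period_le
  have hg : HasVal π (l - 1) (π ^ (l - 1)) := hasVal_pow (by omega)
  have hl : l - 1 + 1 = l := by omega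
  have hval : HasVal π (l - 1) x := hasVal_iff.2 ⟨S.pow_dvd_of_color_eq_pow L hp hal hx, by
    rw [hl, (S.isXIdeal_period L).pow_dvd_iff hx, hg.pow_dvd_iff]
    omega⟩
  rw [← hl, Nat.add_sub_cancel]
  exact hval.pow_succ_dvd_sub hp hg

lemma add_pow_eq_self (S : IsSchurColoring D) (L : IsLayer D a (a + 2) l) (hp : p = 2)
    (hal : a + 2 < l) (hy : HasVal π (a + 1) y) : D (y + π ^ (l - 1)) = D y := by
  have hyl : y ∈ layer π a (a + 2) := hy.mem_layer_iff.2 ⟨by omega, by omega⟩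
  obtain ⟨z, hcolor, hz⟩ := S.exists_eq_hasVal_bot L hyl
  obtain ⟨x, hx, hadd⟩ := S.exists_add_eq hcolor (π ^ (l - 1))
  calc D (y + π ^ (l - 1)) = D (y + π ^ (l - 1) + (x - π ^ (l - 1))) :=
        (L.periodic _ (L.add_mem_layer hyl (pow_dvd_pow _ (by omega))) _
          (S.pow_dvd_sub_of_color_eq_pow L hp hal hx)).symm
    _ = D (z + π ^ (l - 1)) := by rw [← hadd]; congr 1; abel
    _ = D z := S.add_eq_self L hz le_rfl L.lt (pow_dvd_pow _ (by omega))
    _ = D y := hcolor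

lemma period_le_of_two_step (S : IsSchurColoring D) (L : IsLayer D a (a + 2) l) (hp : p = 2) :
    l ≤ a + 2 := by
  by_contra! hal
  have hun := L.le
  have hy : HasVal π (a + 1) (π ^ (a + 1)) := hasVal_pow (by omega)
  have hyl : π ^ (a + 1) ∈ layer π a (a + 2) := hy.mem_layer_iff.2 ⟨by omega, by omega⟩
  have hstep {t : ZMod (p ^ n)} (ht : π ∣ t) : π ^ l ∣ π ^ (l - 1) * t := by
    nth_rw 1 [show l = l - 1 + 1 by omega, pow_succ]
    exact mul_dvd_mul_left _ ht
  obtain ⟨t, ht⟩ := S.exists_add_ne L hal hy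
  refine ht ?_
  by_cases hunit : IsUnit t
  · rw [show π ^ (a + 1) + π ^ (l - 1) * t =
        π ^ (a + 1) + π ^ (l - 1) + π ^ (l - 1) * (t - 1) by ring,
      L.periodic _ (L.add_mem_layer hyl (pow_dvd_pow _ (by omega))) _
        (hstep (dvd_sub_one_of_eq_two hp (by omega) hunit)), S.add_pow_eq_self L hp hal hy]
  · rw [isUnit_iff_not_dvd (by omega), not_not] at hunit
    exact L.periodic _ hyl _ (hstep hunit)

end TwoStepDyadicLayer

lemma period_eq (S : IsSchurColoring D) (L : IsLayer D a u l) (hau : a + 2 ≤ u) : l = u := by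
  refine (L.le_period.eq_or_lt.resolve_right fun hul => ?_).symm
  have hun := L.le
  have hne := S.period_ne_succ L hau
  have hlift : liftExp p = if p = 2 then 2 else 1 := rfl
  have hlayer {b : ℕ} (hab : a ≤ b) (hbu : b < u) :
      ∃ z, D z = D (π ^ (u - 1)) ∧ HasVal π b z :=
    S.exists_eq_hasVal L ((hasVal_pow (by omega)).mem_layer_iff.2 ⟨by omega, by omega⟩) hab hbu
  obtain ⟨x, hx, hvx⟩ := hlayer (b := u - 2) (by omega) (by omega)
  by_cases hp : p = 2
  · rw [if_pos hp] at hlift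
    rcases hau.eq_or_lt with rfl | hlt
    · exact (S.period_le_of_two_step L hp).not_gt hul
    · obtain ⟨y, hy, hvy⟩ := hlayer (b := u - 3) (by omega) (by omega)
      have := S.le_of_color_eq L hul hvx hvy (hx.trans hy.symm) (by omega) (by omega) (by omega)
        (by omega) (by omega)
      omega
  · rw [if_neg hp] at hlift
    obtain ⟨y, hy, hvy⟩ := hlayer (b := u - 1) (by omega) (by omega)
    have := S.le_of_color_eq L hul hvy hvx (hy.trans hx.symm) (by omega) (by omega) (by omega)
      (by omega) (by omega)
    omega

theorem layer_classification (S : IsSchurColoring D) (L : IsLayer D a u l) :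
    u = a + 1 ∨ (l = u ∧ ∀ z ∈ layer π a u, ∀ z' ∈ layer π a u, D z = D z') := by
  rcases (Nat.succ_le_of_lt L.lt).eq_or_lt with heq | hau
  · exact .inl heq.symm
  · have hl := S.period_eq L hau
    subst hl
    exact .inr ⟨rfl, fun z hz z' hz' =>
      L.eq_of_colorEqMod (S.colorEqMod_of_mem_layer L hau hz hz') hz⟩

end IsSchurColoring

end Period

lemma pow_dvd_mul_of_pow_sub_dvd {M : Type*} [CommMonoid M] {x k y : M} {a l : ℕ} (hal : a ≤ l)
    (hk : x ^ (l - a) ∣ k) (hy : x ^ a ∣ y) : x ^ l ∣ k * y :=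
  pow_sub_mul_pow x hal ▸ mul_dvd_mul hk hy

section PrimeIndexLayer

variable {D : ZMod (p ^ n) → κ} {a l : ℕ}

lemma IsLayer.hasVal_of_eq (L : IsLayer D a (a + 1) l) {z z' : ZMod (p ^ n)} (h : D z = D z')
    (hz : HasVal π a z) : HasVal π a z' :=
  hasVal_iff.2 (L.mem_layer_of_eq h (hasVal_iff.1 hz))

variable [Fact p.Prime]

lemma pow_add_liftExp_dvd_sub_one_mul (hn : 0 < n) {k z : ZMod (p ^ n)} (hk : IsUnit k)
    (hz : π ^ (a + 1) ∣ z) : π ^ (a + liftExp p) ∣ (k - 1) * z := by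
  by_cases hp : p = 2
  · rw [liftExp, if_pos hp, mul_comm, pow_succ _ (a + 1)]
    exact mul_dvd_mul hz (dvd_sub_one_of_eq_two hp hn hk)
  · rw [liftExp, if_neg hp]
    exact hz.mul_left _

lemma HasVal.natCast_mul {w : ZMod (p ^ n)} (hw : HasVal π a w) (han : a + 1 < n) :
    HasVal π (a + 1) (π * w) := by
  obtain ⟨s, hs, rfl⟩ := hw.exists_isUnit_eq_mul
  rw [← mul_assoc, ← pow_succ', mul_comm]
  exact (hasVal_pow han).unit_mul hs

namespace IsSchurColoring

lemma mul_eq_self_of_hasVal (S : IsSchurColoring D) {k x z : ZMod (p ^ n)} (hx : HasVal π a x)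
    (hz : HasVal π a z) (h : D (k * x) = D x) : D (k * z) = D z := by
  obtain ⟨m, hm, rfl⟩ := hx.exists_isUnit_eq_mul_of_hasVal hz
  rw [mul_left_comm, S.mul_eq_mul_iff hm, h]

section

variable {x y z z' k k' : ZMod (p ^ n)}

lemma pow_dvd_multiplier_sub (S : IsSchurColoring D) (L : IsLayer D a (a + 1) l) (hal : a + 1 < l)
    (hy : HasVal π a y) (hk : IsUnit k) (hk' : IsUnit k') (hky : D (k * y) = D y)
    (hky' : D (k' * y) = D y) (hdvd : π ^ liftExp p ∣ k - k') : π ^ (l - a) ∣ k - k' :=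
  S.pow_dvd_sub L hy le_rfl a.lt_succ_self (S.exists_add_ne L hal hy) hk hk' hky hky' hdvd

lemma pow_dvd_multiplier_sub_one (S : IsSchurColoring D) (L : IsLayer D a (a + 1) l)
    (hal : a + 1 < l) (hy : HasVal π a y) (hk : IsUnit k) (hky : D (k * y) = D y)
    (hdvd : π ^ (l - a - 1) ∣ k - 1) : π ^ (l - a) ∣ k - 1 :=
  S.pow_dvd_sub_one_of_pow_pred_dvd L hy le_rfl a.lt_succ_self (S.exists_add_ne L hal hy) hk hky hal
    hdvd

lemma pow_dvd_sub_of_color_eq (S : IsSchurColoring D) (L : IsLayer D a (a + 1) l) (hp : p = 2)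
    (hal : a + 1 < l) (hx : HasVal π a x) (hy : D y = D x) (hy' : D (π * x - y) = D x) :
    π ^ l ∣ y - x := by
  have hln := L.period_le
  obtain ⟨k, hk, rfl⟩ := hx.exists_isUnit_eq_mul_of_hasVal (L.hasVal_of_eq hy.symm hx)
  have hk' : IsUnit (π - k) := by
    rwa [isUnit_iff_not_dvd (by omega), dvd_sub_right (dvd_refl π), ← isUnit_iff_not_dvd (by omega)]
  have hsub : k - (π - k) = π * (k - 1) := by
    rw [show π = 1 + 1 by rw [hp]; norm_num]
    ring
  have hdvd : π ^ (l - a) ∣ π * (k - 1) := by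
    rw [← hsub]
    refine S.pow_dvd_multiplier_sub L hal hx hk hk' hy (by rwa [sub_mul]) ?_
    rw [hsub, liftExp, if_pos hp, pow_two]
    exact mul_dvd_mul_left _ (dvd_sub_one_of_eq_two hp (by omega) hk)
  have hpred : π ^ (l - a - 1) ∣ k - 1 := by
    refine HasVal.pow_dvd_of_pow_add_dvd_mul (v := 1) (y := π ^ 1) (hasVal_pow (by omega))
      (by omega) ?_
    rwa [show 1 + (l - a - 1) = l - a by omega, pow_one, mul_comm]
  rw [← sub_one_mul]
  exact pow_dvd_mul_of_pow_sub_dvd (by omega)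
    (S.pow_dvd_multiplier_sub_one L hal hx hk hy hpred) hx.pow_dvd

-- If `2 * x` had the colour of a multiple `z = b + c` of `p ^ (a + 2)` with `b`, `c` of the colour
-- of `x`, then counting such decompositions of `2 * x` and of `z` would show `p ^ l ∣ c - b`.
lemma isXIdeal_add_two (S : IsSchurColoring D) (L : IsLayer D a (a + 1) l) (hp : p = 2)
    (hal : a + 1 < l) : IsXIdeal D (a + 2) := by
  intro z z' h hz
  by_contra hz'
  have hln := L.period_le
  have hval : HasVal π (a + 1) z' := hasVal_iff.2
    ⟨L.isXIdeal_top _ _ h ((pow_dvd_pow _ (Nat.le_succ _)).trans hz), hz'⟩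
  obtain ⟨s, hs, hzs⟩ := hval.exists_isUnit_eq_mul
  obtain ⟨x, rfl, hx⟩ : ∃ x, z' = π * x ∧ HasVal π a x :=
    ⟨s * π ^ a, by rw [hzs, pow_succ]; ring, (hasVal_pow (by omega)).unit_mul hs⟩
  have htwo (c : ZMod (p ^ n)) : π * c = c + c := by rw [show π = 1 + 1 by rw [hp]; norm_num]; ring
  obtain ⟨b, c, rfl, hb, hc⟩ := S.exists_eq_add (h.trans (by rw [htwo]))
  have hbl := hasVal_iff.1 (L.hasVal_of_eq hb.symm hx)
  have hcl := hasVal_iff.1 (L.hasVal_of_eq hc.symm hx)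
  obtain ⟨e, he⟩ := S.exists_equiv _ _ h
  have hcoset : (fun w => b + w) '' {w | π ^ l ∣ w} ⊆ {v | D v = D x ∧ D (b + c - v) = D x} := by
    rintro _ ⟨w, hw, rfl⟩
    refine ⟨(L.periodic b hbl w hw).trans hb, ?_⟩
    rw [show b + c - (b + w) = c + -w by ring]
    exact (L.periodic c hcl _ hw.neg_right).trans hc
  have hle : {v | D v = D x ∧ D (b + c - v) = D x}.ncard ≤ {w : ZMod (p ^ n) | π ^ l ∣ w}.ncard :=
    ncard_le_ncard_of_injOn (fun v => e v - x) (fun v hv => S.pow_dvd_sub_of_color_eq L hp hal hx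
      ((he v).1.trans hv.1) ((he v).2.trans hv.2)) fun v _ v' _ => by simp
  have heq := eq_of_subset_of_ncard_le hcoset
    (by rwa [ncard_image_of_injective _ (add_right_injective b)])
  obtain ⟨w, hw, hbw⟩ : c ∈ (fun w => b + w) '' {w | π ^ l ∣ w} := by
    rw [heq]
    exact ⟨hc, by rw [add_sub_cancel_right, hb]⟩
  have hpb : π ^ (a + 2) ∣ π * b := by
    rw [htwo, show b + b = b + c - w by rw [← hbw]; ring]
    exact dvd_sub hz ((pow_dvd_pow _ hal).trans hw)
  have hval' := (HasVal.natCast_mul (hasVal_iff.2 hbl) (by omega)).pow_dvd_iff.1 hpb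
  omega

lemma pow_dvd_sub_of_colorEqMod (S : IsSchurColoring D) (L : IsLayer D a (a + 1) l)
    (hal : a + 1 < l) (hz : π ^ (a + 1) ∣ z) (h : ColorEqMod D l z z') :
    π ^ (a + liftExp p) ∣ z - z' := by
  obtain ⟨w, hw, h⟩ := h
  have hzw : π ^ (a + 1) ∣ z + w := dvd_add hz ((pow_dvd_pow _ hal.le).trans hw)
  have hz' := L.isXIdeal_top _ _ h hzw
  rw [liftExp]
  split_ifs with hp
  · rw [← dvd_add_left ((pow_dvd_pow _ hal).trans hw), show z - z' + w = z + w - z' by ring]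
    have X := (S.isXIdeal_add_two L hp hal).pow_dvd_iff h
    by_cases hdvd : π ^ (a + 2) ∣ z'
    · exact dvd_sub (X.2 hdvd) hdvd
    · exact (hasVal_iff.2 ⟨hzw, mt X.1 hdvd⟩).pow_succ_dvd_sub hp (hasVal_iff.2 ⟨hz', hdvd⟩)
  · exact dvd_sub hz hz'

lemma colorEqMod_mul_of_color_eq (S : IsSchurColoring D) (L : IsLayer D a (a + 1) l)
    (hk : IsUnit k) (hx : HasVal π a x) (hkx : D (k * x) = D x) (hz : π ^ a ∣ z) :
    ColorEqMod D l (k * z) z := by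
  by_cases hz1 : π ^ (a + 1) ∣ z
  swap
  · exact .of_eq (S.mul_eq_self_of_hasVal hx (hasVal_iff.2 ⟨hz, hz1⟩) hkx)
  have hln := L.period_le
  rcases L.le_period.eq_or_lt with rfl | hal
  · exact .of_pow_dvd_sub (dvd_sub hz1 (hz1.mul_left _))
  have hlift := liftExp_le_two p
  obtain ⟨b, z', hb, hbx, hzz'⟩ :=
    S.exists_eq_add (S.mul_eq_self_of_hasVal hx (hx.add hz1 a.lt_succ_self) hkx)
  obtain ⟨m, hm, rfl⟩ := hx.exists_isUnit_eq_mul_of_hasVal (L.hasVal_of_eq hbx.symm hx)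
  have hmk : π ^ liftExp p ∣ m - k := by
    refine hx.pow_dvd_of_pow_add_dvd_mul (by omega) ?_
    rw [show (m - k) * x = z - z' + (k - 1) * z by linear_combination -hb]
    exact dvd_add (S.pow_dvd_sub_of_colorEqMod L hal hz1 (.of_eq hzz'.symm))
      (pow_add_liftExp_dvd_sub_one_mul (by omega) hk hz1)
  refine ⟨z' - k * z, ?_, by rw [add_sub_cancel, hzz']⟩
  rw [← dvd_neg, show -(z' - k * z) = (m - k) * x by linear_combination hb]
  exact pow_dvd_mul_of_pow_sub_dvd (by omega)
    (S.pow_dvd_multiplier_sub L hal hx hm hk hbx hkx hmk) hx.pow_dvd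

end

section Rigidity

variable {c w x x' y y' : ZMod (p ^ n)}

lemma pow_dvd_sub_of_dvd_sub (S : IsSchurColoring D) (L : IsLayer D a (a + 1) l) (hal : a + 1 < l)
    (hw : HasVal π a w) (hyw : π ^ (a + 1) ∣ y - w) (hy : ColorEqMod D l y y')
    (hy' : ColorEqMod D l (y - w) (y' - w)) : π ^ l ∣ y' - y := by
  have hln := L.period_le
  have hlift := liftExp_le_two p
  have hval : HasVal π a y := by
    rw [← add_sub_cancel w y]
    exact hw.add hyw a.lt_succ_self
  have hcolor := L.eq_of_colorEqMod hy (hasVal_iff.1 hval)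
  obtain ⟨k, hk, rfl⟩ := hval.exists_isUnit_eq_mul_of_hasVal (L.hasVal_of_eq hcolor hval)
  have hdvd : π ^ liftExp p ∣ k - 1 := by
    refine hval.pow_dvd_of_pow_add_dvd_mul (by omega) ?_
    rw [← dvd_neg, show -((k - 1) * y) = y - w - (k * y - w) by ring]
    exact S.pow_dvd_sub_of_colorEqMod L hal hyw hy'
  rw [← sub_one_mul]
  exact pow_dvd_mul_of_pow_sub_dvd (by omega) (S.pow_dvd_multiplier_sub L hal hval hk isUnit_one
    hcolor.symm (by rw [one_mul]) hdvd) hval.pow_dvd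

lemma pow_dvd_sub_of_hasVal (S : IsSchurColoring D) (L : IsLayer D a (a + 1) l) (hal : a + 1 < l)
    (hc : HasVal π (a + 1) c) (hx : HasVal π a x) (hxx' : ColorEqMod D l x x')
    (hcx : ColorEqMod D l (c - x) (c - x')) : π ^ l ∣ x' - x := by
  have hln := L.period_le
  have hlift := liftExp_le_two p
  have hcolor := L.eq_of_colorEqMod hxx' (hasVal_iff.1 hx)
  obtain ⟨k, hk, rfl⟩ := hx.exists_isUnit_eq_mul_of_hasVal (L.hasVal_of_eq hcolor hx)
  have hval : HasVal π a (c - x) := by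
    rw [sub_eq_neg_add]
    exact hx.neg.add hc.pow_dvd a.lt_succ_self
  have hcolor' := L.eq_of_colorEqMod hcx (hasVal_iff.1 hval)
  obtain ⟨k', hk', hcx'⟩ := hval.exists_isUnit_eq_mul_of_hasVal (L.hasVal_of_eq hcolor' hval)
  have hkx : D (k' * x) = D x := S.mul_eq_self_of_hasVal hval hx (by rw [← hcx', hcolor'])
  have hrel : (k' - 1) * c = (k' - k) * x := by linear_combination -hcx'
  have hdvd : π ^ (l - a) ∣ k' - k := by
    refine S.pow_dvd_multiplier_sub L hal hx hk' hk hkx hcolor.symm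
      (hx.pow_dvd_of_pow_add_dvd_mul (by omega) ?_)
    rw [← hrel]
    exact pow_add_liftExp_dvd_sub_one_mul (by omega) hk' hc.pow_dvd
  have hpred : π ^ (l - a - 1) ∣ k' - 1 := by
    refine hc.pow_dvd_of_pow_add_dvd_mul (by omega) ?_
    rw [show a + 1 + (l - a - 1) = l by omega, hrel]
    exact pow_dvd_mul_of_pow_sub_dvd (by omega) hdvd hx.pow_dvd
  have hdvd' := S.pow_dvd_multiplier_sub_one L hal hx hk' hkx hpred
  rw [show k * x - x = (k' - 1 - (k' - k)) * x by ring]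
  exact pow_dvd_mul_of_pow_sub_dvd (by omega) (dvd_sub hdvd' hdvd) hx.pow_dvd

end Rigidity

end IsSchurColoring

end PrimeIndexLayer

section HadamardProduct

open Polynomial

lemma coeff_mul_of_X_pow_dvd {R : Type*} [CommSemiring R] {f g : R[X]} {i j : ℕ} (hf : X ^ i ∣ f)
    (hg : X ^ j ∣ g) : (f * g).coeff (i + j) = f.coeff i * g.coeff j := by
  obtain ⟨f, rfl⟩ := hf
  obtain ⟨g, rfl⟩ := hg
  rw [mul_mul_mul_comm, ← pow_add]
  simp [coeff_X_pow_mul']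

lemma coeff_one_sub_X_pow {R : Type*} [CommRing R] (d i : ℕ) :
    ((1 - X) ^ d : R[X]).coeff i = (-1) ^ i * (d.choose i : R) := by
  have h : ((1 - X) ^ d : R[X]) = ((X + 1) ^ d : R[X]).comp (C (-1) * X) := by
    simp [sub_eq_neg_add]
  rw [h, comp_C_mul_X_coeff, coeff_X_add_one_pow, mul_comm]

lemma X_pow_mem_of_forall_exists {k : Type*} [Field k] {A : Subalgebra k k[X]} {d : ℕ}
    (h : ∀ i ≤ d, ∃ g ∈ A, g.natDegree ≤ d ∧ X ^ i ∣ g ∧ g.coeff i ≠ 0) (i : ℕ) :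
    i ≤ d → (X ^ i : k[X]) ∈ A := by
  induction i using Nat.strong_decreasing_induction with
  | base => exact ⟨d, fun m hm hmd => (hm.not_ge hmd).elim⟩
  | step i ih =>
    intro hi
    obtain ⟨g, hgA, hgd, hgX, hgi⟩ := h i hi
    have hsum := g.as_sum_range_C_mul_X_pow' (Nat.lt_succ_of_le hgd)
    rw [← Finset.add_sum_erase _ _ (Finset.mem_range_succ_iff.2 hi)] at hsum
    have hrest : ∑ j ∈ (Finset.range (d + 1)).erase i, C (g.coeff j) * X ^ j ∈ A := by
      refine sum_mem fun j hj => ?_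
      rw [Finset.mem_erase, Finset.mem_range_succ_iff] at hj
      rw [← smul_eq_C_mul]
      rcases hj.1.lt_or_gt with hji | hij
      · rw [X_pow_dvd_iff.1 hgX j hji, zero_smul]
        exact A.zero_mem
      · exact A.smul_mem (ih j hij hj.2) _
    rw [← inv_smul_smul₀ hgi (X ^ i : k[X]), smul_eq_C_mul (g.coeff i), ← sub_eq_of_eq_add hsum]
    exact A.smul_mem (sub_mem hgA hrest) _

/-- The coefficientwise product of two polynomials, truncated below degree `p - 1`. -/
noncomputable def hadamardProduct (f g : (ZMod p)[X]) : (ZMod p)[X] :=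
  ∑ i ∈ Finset.range (p - 1), C (f.coeff i * g.coeff i) * X ^ i

lemma coeff_hadamardProduct (f g : (ZMod p)[X]) (i : ℕ) :
    (hadamardProduct f g).coeff i = if i < p - 1 then f.coeff i * g.coeff i else 0 := by
  simp only [hadamardProduct, finsetSum_coeff, coeff_C_mul, coeff_X_pow, mul_ite, mul_one,
    mul_zero, Finset.sum_ite_eq, Finset.mem_range]

variable [Fact p.Prime]

lemma coeff_one_sub_X_pow_ne_zero {d i : ℕ} (hd : d < p) (hi : i ≤ d) :
    ((1 - X) ^ d : (ZMod p)[X]).coeff i ≠ 0 := by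
  rw [coeff_one_sub_X_pow]
  refine mul_ne_zero (pow_ne_zero _ (neg_ne_zero.2 one_ne_zero)) ?_
  rw [Ne, ZMod.natCast_eq_zero_iff]
  exact fun h => hd.not_ge ((Fact.out : p.Prime).dvd_factorial.1
    (Nat.choose_mul_factorial_mul_factorial hi ▸ (h.mul_right _).mul_right _))

section

variable {A : Subalgebra (ZMod p) (ZMod p)[X]} {d : ℕ}

lemma exists_mem_X_dvd (hd : 2 ≤ d) (hdp : d < p) (hX : (X ^ d : (ZMod p)[X]) ∈ A)
    (hE : ((1 - X) ^ d : (ZMod p)[X]) ∈ A) :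
    ∃ h ∈ A, h.natDegree < d ∧ X ∣ h ∧ h.coeff 1 ≠ 0 := by
  have hcoeff := coeff_one_sub_X_pow (R := ZMod p) d
  refine ⟨(1 - X) ^ d - 1 - C ((-1) ^ d) * X ^ d, sub_mem (sub_mem hE A.one_mem)
    (smul_eq_C_mul (R := ZMod p) _ ▸ A.smul_mem hX _), ?_, X_dvd_iff.2 ?_, ?_⟩
  · refine Nat.lt_of_le_pred (by omega) (natDegree_le_iff_coeff_eq_zero.2 fun i hi => ?_)
    rw [coeff_sub, coeff_sub, hcoeff, coeff_one, coeff_C_mul_X_pow, if_neg (by omega)]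
    rcases (Nat.le_of_pred_lt hi).eq_or_lt with rfl | hdi
    · simp
    · simp [Nat.choose_eq_zero_of_lt hdi, hdi.ne']
  · simp only [coeff_sub, hcoeff, coeff_one, coeff_C_mul_X_pow, if_neg (show 0 ≠ d by omega)]
    simp
  · simp only [coeff_sub, coeff_one, coeff_C_mul_X_pow, if_neg (show 1 ≠ d by omega), sub_zero,
      if_neg one_ne_zero]
    exact coeff_one_sub_X_pow_ne_zero hdp (by omega)

lemma exists_mem_X_pow_dvd (hd : 2 ≤ d) (hdp : 2 * d ≤ p - 1) (hX : (X ^ d : (ZMod p)[X]) ∈ A)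
    (hE : ((1 - X) ^ d : (ZMod p)[X]) ∈ A)
    (hA : ∀ f ∈ A, ∀ g ∈ A, f.natDegree < p - 1 → g.natDegree < p - 1 → hadamardProduct f g ∈ A)
    (i : ℕ) : i ≤ d → ∃ g ∈ A, g.natDegree ≤ d ∧ X ^ i ∣ g ∧ g.coeff i ≠ 0 := by
  obtain ⟨h, hhA, hhd, hhX, hh1⟩ := exists_mem_X_dvd hd (by omega) hX hE
  have hEd : ((1 - X) ^ d : (ZMod p)[X]).natDegree ≤ d := by compute_degree
  have hne {i : ℕ} (hi : i ≤ d) := coeff_one_sub_X_pow_ne_zero (p := p) (by omega) hi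
  induction i with
  | zero => exact fun hi => ⟨_, hE, hEd, by simp, hne hi⟩
  | succ i ih =>
    intro hi
    obtain ⟨g, hgA, hgd, hgX, hgi⟩ := ih (by omega)
    have hdeg := natDegree_mul_le (p := g) (q := h)
    have hghX : X ^ (i + 1) ∣ g * h := pow_succ (X : (ZMod p)[X]) i ▸ mul_dvd_mul hgX hhX
    refine ⟨hadamardProduct (g * h) ((1 - X) ^ d),
      hA _ (mul_mem hgA hhA) _ hE (by omega) (by omega),
      natDegree_le_iff_coeff_eq_zero.2 fun j hj => ?_, X_pow_dvd_iff.2 fun j hj => ?_, ?_⟩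
    · rw [coeff_hadamardProduct, natDegree_le_iff_coeff_eq_zero.1 hEd j hj, mul_zero, ite_self]
    · rw [coeff_hadamardProduct, X_pow_dvd_iff.1 hghX j hj, zero_mul, ite_self]
    · rw [coeff_hadamardProduct, if_pos (by omega),
        coeff_mul_of_X_pow_dvd hgX (by rwa [pow_one])]
      exact mul_ne_zero (mul_ne_zero hgi hh1) (hne hi)

theorem X_mem_of_hadamardProduct_mem (hd : 1 ≤ d) (hdp : 2 * d ≤ p - 1)
    (hX : (X ^ d : (ZMod p)[X]) ∈ A) (hE : ((1 - X) ^ d : (ZMod p)[X]) ∈ A)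
    (hA : ∀ f ∈ A, ∀ g ∈ A, f.natDegree < p - 1 → g.natDegree < p - 1 → hadamardProduct f g ∈ A) :
    (X : (ZMod p)[X]) ∈ A := by
  rcases hd.eq_or_lt with rfl | hd'
  · rwa [pow_one] at hX
  · exact pow_one (X : (ZMod p)[X]) ▸
      X_pow_mem_of_forall_exists (exists_mem_X_pow_dvd hd' hdp hX hE hA) 1 hd

end

lemma sum_units_pow_add_sub {i j : ℕ} (hi : i < p - 1) (hj : j < p - 1) :
    ∑ t : (ZMod p)ˣ, (t : ZMod p) ^ (i + (p - 1 - j)) = if i = j then -1 else 0 := by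
  have hdvd : p - 1 ∣ i + (p - 1 - j) ↔ i = j := by
    refine ⟨?_, fun h => ⟨1, by omega⟩⟩
    rintro ⟨c, hc⟩
    have hc2 : c < 2 := lt_of_mul_lt_mul_left (a := p - 1) (by omega) (Nat.zero_le _)
    interval_cases c <;> omega
  have hsum := FiniteField.sum_pow_units (ZMod p) (i + (p - 1 - j))
  simpa only [ZMod.card, hdvd, Units.val_pow_eq_pow_val] using hsum

lemma sum_units_eval_mul_eval {f g : (ZMod p)[X]} (hf : f.natDegree < p - 1)
    (hg : g.natDegree < p - 1) (r : ZMod p) :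
    ∑ t : (ZMod p)ˣ, f.eval (t : ZMod p) * g.eval (r * (↑t⁻¹ : ZMod p)) =
      -(hadamardProduct f g).eval r := by
  have hterm (t : (ZMod p)ˣ) : f.eval (t : ZMod p) * g.eval (r * (↑t⁻¹ : ZMod p)) =
      ∑ i ∈ Finset.range (p - 1), ∑ j ∈ Finset.range (p - 1),
        f.coeff i * g.coeff j * r ^ j * (t : ZMod p) ^ (i + (p - 1 - j)) := by
    rw [eval_eq_sum_range' hf, eval_eq_sum_range' hg, Finset.sum_mul_sum]
    refine Finset.sum_congr rfl fun i _ => Finset.sum_congr rfl fun j hj => ?_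
    have hinv : (↑t⁻¹ : ZMod p) ^ j = (t : ZMod p) ^ (p - 1 - j) := by
      rw [← Units.val_pow_eq_pow_val, ← Units.val_pow_eq_pow_val, inv_pow, inv_eq_iff_mul_eq_one.2]
      rw [← pow_add, Nat.add_sub_cancel' (Finset.mem_range.1 hj).le,
        ZMod.units_pow_card_sub_one_eq_one]
    rw [mul_pow, hinv, pow_add]
    ring
  calc ∑ t : (ZMod p)ˣ, f.eval (t : ZMod p) * g.eval (r * (↑t⁻¹ : ZMod p))
      = ∑ i ∈ Finset.range (p - 1), ∑ j ∈ Finset.range (p - 1), f.coeff i * g.coeff j * r ^ j *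
          ∑ t : (ZMod p)ˣ, (t : ZMod p) ^ (i + (p - 1 - j)) := by
        simp only [hterm, Finset.mul_sum]
        rw [Finset.sum_comm]
        exact Finset.sum_congr rfl fun i _ => Finset.sum_comm
    _ = ∑ i ∈ Finset.range (p - 1), -(f.coeff i * g.coeff i * r ^ i) := by
        refine Finset.sum_congr rfl fun i hi => ?_
        rw [Finset.sum_eq_single_of_mem i hi fun j hj hji => ?_,
          sum_units_pow_add_sub (Finset.mem_range.1 hi) (Finset.mem_range.1 hi), if_pos rfl,
          mul_neg_one]
        rw [sum_units_pow_add_sub (Finset.mem_range.1 hi) (Finset.mem_range.1 hj), if_neg hji.symm,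
          mul_zero]
    _ = -(hadamardProduct f g).eval r := by
        simp [hadamardProduct, eval_finsetSum]

end HadamardProduct

section Digits

variable {a : ℕ}

/-- The coefficient of `p ^ a` in the base `p` expansion of the representative in `[0, p ^ n)`,
modulo `p`. It is additive on multiples of `p ^ a`. -/
def digit (a : ℕ) (z : ZMod (p ^ n)) : ZMod p :=
  (z.val / p ^ a : ℕ)

lemma exists_intCast_of_pow_dvd {z : ZMod (p ^ n)} (hz : π ^ a ∣ z) :
    ∃ m : ℤ, z = ((p ^ a * m : ℤ) : ZMod (p ^ n)) := by
  obtain ⟨s, rfl⟩ := hz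
  obtain ⟨m, rfl⟩ := ZMod.intCast_surjective s
  exact ⟨m, by push_cast; rfl⟩

variable [hp : Fact p.Prime]

lemma digit_intCast (ha : a < n) (m : ℤ) :
    digit a ((p ^ a * m : ℤ) : ZMod (p ^ n)) = m := by
  have hpa : (0 : ℤ) < p ^ a := by exact_mod_cast pow_pos hp.out.pos a
  have hval : ((((p ^ a * m : ℤ) : ZMod (p ^ n)).val / p ^ a : ℕ) : ℤ) = m % p ^ (n - a) := by
    rw [Int.natCast_div, ZMod.val_intCast, Nat.cast_pow, Nat.cast_pow,
      ← pow_mul_pow_sub (p : ℤ) ha.le, Int.mul_emod_mul_of_pos _ _ hpa,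
      Int.mul_ediv_cancel_left _ hpa.ne']
  rw [digit, ← Int.cast_natCast, hval, ZMod.intCast_eq_intCast_iff]
  exact (Int.mod_modEq _ _).of_dvd (dvd_pow_self _ (by omega))

section

variable {y z : ZMod (p ^ n)}

lemma digit_add (ha : a < n) (hy : π ^ a ∣ y) (hz : π ^ a ∣ z) :
    digit a (y + z) = digit a y + digit a z := by
  obtain ⟨m, rfl⟩ := exists_intCast_of_pow_dvd hy
  obtain ⟨k, rfl⟩ := exists_intCast_of_pow_dvd hz
  rw [← Int.cast_add, ← mul_add, digit_intCast ha, digit_intCast ha, digit_intCast ha,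
    Int.cast_add]

lemma digit_sub (ha : a < n) (hy : π ^ a ∣ y) (hz : π ^ a ∣ z) :
    digit a (y - z) = digit a y - digit a z := by
  rw [eq_sub_iff_add_eq, ← digit_add ha (dvd_sub hy hz) hz, sub_add_cancel]

lemma digit_eq_zero_iff (ha : a < n) (hz : π ^ a ∣ z) : digit a z = 0 ↔ π ^ (a + 1) ∣ z := by
  obtain ⟨m, rfl⟩ := exists_intCast_of_pow_dvd hz
  rw [digit_intCast ha, pow_dvd_intCast_iff ha, pow_succ, ZMod.intCast_zmod_eq_zero_iff_dvd,
    mul_dvd_mul_iff_left (pow_ne_zero _ (by exact_mod_cast hp.out.ne_zero))]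

lemma digit_ne_zero (hz : HasVal π a z) : digit a z ≠ 0 :=
  mt (digit_eq_zero_iff hz.lt hz.pow_dvd).1 (hasVal_iff.1 hz).2

lemma digit_mul (ha : a < n) (hn : n ≠ 0) (u : (ZMod (p ^ n))ˣ)
    (hz : π ^ a ∣ z) :
    digit a ((u : ZMod (p ^ n)) * z) =
      (ZMod.unitsMap (dvd_pow_self p hn) u : ZMod p) * digit a z := by
  obtain ⟨m, rfl⟩ := exists_intCast_of_pow_dvd hz
  obtain ⟨k, hk⟩ := ZMod.intCast_surjective (u : ZMod (p ^ n))
  rw [ZMod.unitsMap_val, ← hk, ← Int.cast_mul, mul_left_comm, digit_intCast ha, digit_intCast ha,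
    Int.cast_mul, ZMod.cast_intCast (dvd_pow_self p hn)]

end

lemma exists_digit_eq (ha : a < n) (i : ZMod p) :
    ∃ z : ZMod (p ^ n), π ^ a ∣ z ∧ digit a z = i := by
  obtain ⟨m, rfl⟩ := ZMod.intCast_surjective i
  exact ⟨_, by push_cast; exact dvd_mul_right _ _, digit_intCast ha m⟩

lemma ncard_setOf_digit_mem (ha : a < n) (P : Set (ZMod p)) :
    {z : ZMod (p ^ n) | π ^ a ∣ z ∧ digit a z ∈ P}.ncard =
      P.ncard * {w : ZMod (p ^ n) | π ^ (a + 1) ∣ w}.ncard := by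
  choose g hg hgi using exists_digit_eq (p := p) ha
  have hdigit {i : ZMod p} {w : ZMod (p ^ n)} (hw : π ^ (a + 1) ∣ w) :
      π ^ a ∣ g i + w ∧ digit a (g i + w) = i := by
    have haw := (pow_dvd_pow _ a.le_succ).trans hw
    exact ⟨dvd_add (hg i) haw, by
      rw [digit_add ha (hg i) haw, hgi, (digit_eq_zero_iff ha haw).2 hw, add_zero]⟩
  have himage : {z : ZMod (p ^ n) | π ^ a ∣ z ∧ digit a z ∈ P} =
      (fun q : ZMod p × ZMod (p ^ n) => g q.1 + q.2) '' (P ×ˢ {w | π ^ (a + 1) ∣ w}) := by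
    ext z
    constructor
    · rintro ⟨hz, hzP⟩
      refine ⟨(digit a z, z - g (digit a z)), ⟨hzP, ?_⟩, add_sub_cancel _ _⟩
      rw [mem_ofPred_eq, ← digit_eq_zero_iff ha (dvd_sub hz (hg _)), digit_sub ha hz (hg _), hgi,
        sub_self]
    · rintro ⟨⟨i, w⟩, ⟨hi, hw⟩, rfl⟩
      exact ⟨(hdigit hw).1, (hdigit hw).2.symm ▸ hi⟩
  rw [himage, InjOn.ncard_image, ncard_prod]
  rintro ⟨i, w⟩ ⟨-, hw⟩ ⟨j, v⟩ ⟨-, hv⟩ h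
  have hij : i = j := (hdigit hw).2.symm.trans ((congrArg _ h).trans (hdigit hv).2)
  subst hij
  exact Prod.ext rfl (add_left_cancel h)

end Digits

namespace IsSchurColoring

variable {D : ZMod (p ^ n) → κ} {a : ℕ} [Fact p.Prime]

/-- The group of units preserving the colour of `x` under multiplication. -/
def multiplierGroup (S : IsSchurColoring D) (x : ZMod (p ^ n)) : Subgroup (ZMod (p ^ n))ˣ where
  carrier := {u | D (u * x) = D x}
  mul_mem' {u v} hu hv := by
    rw [mem_ofPred_eq, Units.val_mul, mul_assoc, (S.mul_eq_mul_iff u.isUnit).2 hv, hu]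
  one_mem' := by rw [mem_ofPred_eq, Units.val_one, one_mul]
  inv_mem' {u} hu := by
    rw [mem_ofPred_eq, ← S.mul_eq_mul_iff u.isUnit, Units.mul_inv_cancel_left, hu]

/-- The image in `(ℤ/p)ˣ` of the group of units preserving the colour of `x`. -/
def reducedMultiplierGroup (S : IsSchurColoring D) (hn : n ≠ 0) (x : ZMod (p ^ n)) :
    Subgroup (ZMod p)ˣ :=
  (S.multiplierGroup x).map (ZMod.unitsMap (dvd_pow_self p hn))

variable {z z' : ZMod (p ^ n)}

lemma reducedMultiplierGroup_ne_top (S : IsSchurColoring D) (L : IsLayer D a (a + 1) (a + 1))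
    (hn : n ≠ 0) (hz : HasVal π a z) (hz' : HasVal π a z') (hzz' : D z ≠ D z') :
    S.reducedMultiplierGroup hn z ≠ ⊤ := by
  intro htop
  obtain ⟨k, hk, rfl⟩ := hz.exists_isUnit_eq_mul_of_hasVal hz'
  lift k to (ZMod (p ^ n))ˣ using hk
  obtain ⟨u, hu, huk⟩ : ZMod.unitsMap _ k ∈ S.reducedMultiplierGroup hn z :=
    htop ▸ Subgroup.mem_top _
  have hdvd : π ^ (a + 1) ∣ k * z - u * z := by
    have huz : π ^ a ∣ (u : ZMod (p ^ n)) * z := hz.pow_dvd.mul_left _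
    rw [← digit_eq_zero_iff L.le (dvd_sub hz'.pow_dvd huz), digit_sub L.le hz'.pow_dvd huz,
      digit_mul L.le hn k hz.pow_dvd, digit_mul L.le hn u hz.pow_dvd, huk, sub_self]
  refine hzz' (hu.symm.trans ?_)
  rw [← L.periodic (u * z) (L.mem_layer_of_eq (Eq.symm hu) (hasVal_iff.1 hz)) _ hdvd,
    add_sub_cancel]

lemma two_mul_card_reducedMultiplierGroup_le (S : IsSchurColoring D)
    (L : IsLayer D a (a + 1) (a + 1)) (hn : n ≠ 0) (hz : HasVal π a z) (hz' : HasVal π a z')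
    (hzz' : D z ≠ D z') : 2 * Nat.card (S.reducedMultiplierGroup hn z) ≤ p - 1 := by
  have hindex := Subgroup.one_lt_index_of_ne_top
    (S.reducedMultiplierGroup_ne_top L hn hz hz' hzz')
  have hcard := (S.reducedMultiplierGroup hn z).index_mul_card
  rw [Nat.card_eq_fintype_card (α := (ZMod p)ˣ), ZMod.card_units] at hcard
  exact (Nat.mul_le_mul_right _ hindex).trans hcard.le

theorem exists_digit_pow_eq (S : IsSchurColoring D) (L : IsLayer D a (a + 1) (a + 1))
    (hz : HasVal π a z) (hz' : HasVal π a z') (hzz' : D z ≠ D z') :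
    ∃ d, 1 ≤ d ∧ 2 * d ≤ p - 1 ∧
      ∀ x y, π ^ a ∣ x → D x = D y → digit a x ^ d = digit a y ^ d := by
  have hn : n ≠ 0 := Nat.ne_zero_of_lt L.le
  refine ⟨Nat.card (S.reducedMultiplierGroup hn z), Nat.card_pos,
    S.two_mul_card_reducedMultiplierGroup_le L hn hz hz' hzz', fun x y hx hxy => ?_⟩
  by_cases hx1 : π ^ (a + 1) ∣ x
  · rw [(digit_eq_zero_iff L.le hx).2 hx1,
      (digit_eq_zero_iff L.le (L.isXIdeal_bot _ _ hxy hx)).2 (L.isXIdeal_top _ _ hxy hx1)]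
  · have hval : HasVal π a x := hasVal_iff.2 ⟨hx, hx1⟩
    obtain ⟨k, hk, rfl⟩ := hval.exists_isUnit_eq_mul_of_hasVal (L.hasVal_of_eq hxy hval)
    lift k to (ZMod (p ^ n))ˣ using hk
    have hmem : ZMod.unitsMap (dvd_pow_self p hn) k ∈ S.reducedMultiplierGroup hn z :=
      ⟨k, S.mul_eq_self_of_hasVal hval hz hxy.symm, rfl⟩
    have hpow := orderOf_dvd_iff_pow_eq_one.1 (Subgroup.orderOf_dvd_natCard _ hmem)
    rw [digit_mul L.le hn k hx, mul_pow, ← Units.val_pow_eq_pow_val, hpow, Units.val_one, one_mul]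

end IsSchurColoring

section PointExtensions

variable {Ω Ω' κ' : Type*}

/-- Two arc colourings `d` and `d'` that stand for an `(α, α')`-extension of the algebraic
isomorphism given by the arc colourings `c` and `c'`: arcs of equal `d`-colour correspond under the
extension, and the loops at `α` and `α'` are singled out. -/
structure IsPointExtension (c : Ω → Ω → κ) (c' : Ω' → Ω' → κ) (α : Ω) (α' : Ω')
    (d : Ω → Ω → κ') (d' : Ω' → Ω' → κ') : Prop where
  sameIntersectionNumbers : SameIntersectionNumbers d d'
  color_eq : ∀ {a b a' b'}, d a b = d' a' b' → c a b = c' a' b'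
  converse_eq : ∀ {a b a' b'}, d a b = d' a' b' → d b a = d' b' a'
  base_eq : d α α = d' α' α'
  eq_base : ∀ {a' b'}, d α α = d' a' b' → a' = α' ∧ b' = α'

namespace IsPointExtension

variable [Finite Ω] [Finite Ω'] {c : Ω → Ω → κ} {c' : Ω' → Ω' → κ} {α : Ω} {α' : Ω'}
  {d : Ω → Ω → κ'} {d' : Ω' → Ω' → κ'} {x y : Ω} {x' y' : Ω'}

lemma exists_triangle (E : IsPointExtension c c' α α' d d') (h : d x y = d' x' y') (z : Ω) :
    ∃ z', d x z = d' x' z' ∧ d z y = d' z' y' := by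
  obtain ⟨e, he⟩ := E.sameIntersectionNumbers.exists_equiv h
  exact ⟨e z, (he z).1.symm, (he z).2.symm⟩

lemma exists_triangle_symm (E : IsPointExtension c c' α α' d d') (h : d x y = d' x' y') (z' : Ω') :
    ∃ z, d x z = d' x' z' ∧ d z y = d' z' y' := by
  obtain ⟨e, he⟩ := E.sameIntersectionNumbers.exists_equiv h
  have := he (e.symm z')
  rw [e.apply_symm_apply] at this
  exact ⟨e.symm z', this.1.symm, this.2.symm⟩

lemma color_from_base_eq (E : IsPointExtension c c' α α' d d') (h : d x y = d' x' y') :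
    d α x = d' α' x' ∧ d α y = d' α' y' := by
  obtain ⟨z', hxz, hzy⟩ := E.exists_triangle h α
  obtain ⟨w', -, hwz⟩ := E.exists_triangle hxz α
  obtain ⟨-, rfl⟩ := E.eq_base hwz
  exact ⟨E.converse_eq hxz, hzy⟩

lemma exists_color_eq (E : IsPointExtension c c' α α' d d') (x y : Ω) :
    ∃ x' y', d x y = d' x' y' := by
  obtain ⟨y', hy, -⟩ := E.exists_triangle E.base_eq y
  obtain ⟨x', -, hxy⟩ := E.exists_triangle hy x
  exact ⟨x', y', hxy⟩

lemma self (E : IsPointExtension c c' α α' d d') : IsPointExtension c c α α d d where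
  sameIntersectionNumbers a b a₁ b₁ h r s := by
    obtain ⟨a', b', h'⟩ := E.exists_color_eq a b
    rw [E.sameIntersectionNumbers _ _ _ _ h', E.sameIntersectionNumbers _ _ _ _ (h.symm.trans h')]
  color_eq {a b a₁ b₁} h := by
    obtain ⟨a', b', h'⟩ := E.exists_color_eq a b
    exact (E.color_eq h').trans (E.color_eq (h.symm.trans h')).symm
  converse_eq {a b a₁ b₁} h := by
    obtain ⟨a', b', h'⟩ := E.exists_color_eq a b
    exact (E.converse_eq h').trans (E.converse_eq (h.symm.trans h')).symm
  base_eq := rfl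
  eq_base {a b} h := by
    obtain ⟨e, he⟩ := E.sameIntersectionNumbers.exists_equiv E.base_eq
    have eq_of_color_eq {z : Ω} (hz : d α z = d α α) : z = α :=
      e.injective <| (E.eq_base (hz.symm.trans (he z).1.symm)).2.trans
        (E.eq_base (he α).1.symm).2.symm
    have := E.color_from_base_eq (h.symm.trans E.base_eq)
    exact ⟨eq_of_color_eq (this.1.trans E.base_eq.symm),
      eq_of_color_eq (this.2.trans E.base_eq.symm)⟩

end IsPointExtension

end PointExtensions

section RatioFunctions

variable [Fact p.Prime]

open Polynomial

/-- The function `f (y / x)` of a pair of residues `x`, `y`, extended by `0` to the pairs with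
`x = 0` or `y = 0`. -/
noncomputable def ratioFun (f : (ZMod p)[X]) (x y : ZMod p) : ZMod p :=
  if x = 0 ∨ y = 0 then 0 else f.eval (y / x)

lemma ratioFun_add (f g : (ZMod p)[X]) (x y : ZMod p) :
    ratioFun (f + g) x y = ratioFun f x y + ratioFun g x y := by
  unfold ratioFun
  split_ifs
  · rw [add_zero]
  · exact eval_add

lemma ratioFun_mul (f g : (ZMod p)[X]) (x y : ZMod p) :
    ratioFun (f * g) x y = ratioFun f x y * ratioFun g x y := by
  unfold ratioFun
  split_ifs
  · rw [mul_zero]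
  · exact eval_mul

lemma ratioFun_C (r x y : ZMod p) : ratioFun (C r) x y = r * ratioFun 1 x y := by
  simp only [ratioFun, eval_C, eval_one, mul_ite, mul_zero, mul_one]

lemma ratioFun_X (x y : ZMod p) : ratioFun X x y = y / x := by
  unfold ratioFun
  split_ifs with h
  · rcases h with rfl | rfl <;> simp
  · exact eval_X

lemma ratioFun_X_pow {d : ℕ} (hd : d ≠ 0) (x y : ZMod p) :
    ratioFun (X ^ d) x y = y ^ d / x ^ d := by
  unfold ratioFun
  split_ifs with h
  · rcases h with rfl | rfl <;> simp [hd]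
  · rw [eval_pow, eval_X, div_pow]

lemma ratioFun_one_sub_X_pow (d : ℕ) (x y : ZMod p) :
    ratioFun ((1 - X) ^ d) x y = (-1) ^ d * (y - x) ^ d / x ^ d * ratioFun 1 x y := by
  unfold ratioFun
  split_ifs with h
  · rw [mul_zero]
  · push Not at h
    rw [eval_pow, eval_sub, eval_one, eval_X, ← mul_pow, ← div_pow, mul_one]
    congr 1
    field_simp [h.1]
    ring

lemma sum_ratioFun_mul_ratioFun {f g : (ZMod p)[X]} (hf : f.natDegree < p - 1)
    (hg : g.natDegree < p - 1) (x y : ZMod p) :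
    ∑ z, ratioFun f x z * ratioFun g z y = -ratioFun (hadamardProduct f g) x y := by
  by_cases h : x = 0 ∨ y = 0
  · rw [ratioFun, if_pos h, neg_zero]
    refine Finset.sum_eq_zero fun z _ => ?_
    rcases h with rfl | rfl <;> simp [ratioFun]
  · rw [ratioFun, if_neg h, ← sum_units_eval_mul_eval hf hg]
    push Not at h
    refine (Fintype.sum_of_injective (fun t : (ZMod p)ˣ => x * t)
      ((mul_right_injective₀ h.1).comp Units.val_injective) _ _ (fun z hz => ?_) fun t => ?_).symm
    · obtain rfl : z = 0 := by
        by_contra hz0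
        exact hz ⟨Units.mk0 (z / x) (div_ne_zero hz0 h.1), mul_div_cancel₀ _ h.1⟩
      simp [ratioFun]
    · have ht := t.ne_zero
      simp only [ratioFun, h.1, h.2, ht, mul_eq_zero, or_self, if_false, Units.val_inv_eq_inv_val]
      congr 2 <;> field_simp [h.1]

end RatioFunctions

/-- The colouring of the arcs of an additive group by the colours of differences. -/
abbrev cayleyColoring {A : Type*} [AddGroup A] (D : A → κ) (x y : A) : κ := D (y - x)

section CyclicPointExtensions

variable {κ' : Type*} {D : ZMod (p ^ n) → κ} {a l : ℕ} {d : ZMod (p ^ n) → ZMod (p ^ n) → κ'}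
  {w x y z z' x' y' : ZMod (p ^ n)}

/-- On pairs of multiples of `p ^ a`, the value of `F` at the leading digits depends only on the
`d`-colour of the pair. -/
def IsColorMeasurable (a : ℕ) (d : ZMod (p ^ n) → ZMod (p ^ n) → κ')
    (F : ZMod p → ZMod p → ZMod p) : Prop :=
  ∀ x y x' y', π ^ a ∣ x → π ^ a ∣ y → d x y = d x' y' →
    F (digit a x) (digit a y) = F (digit a x') (digit a y')

variable [Fact p.Prime]

open Polynomial in
/-- The polynomials `f` for which `f (y / x)` is measurable. -/
noncomputable def measurableRatios (h : IsColorMeasurable a d (ratioFun 1)) :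
    Subalgebra (ZMod p) (ZMod p)[X] where
  carrier := {f | IsColorMeasurable a d (ratioFun f)}
  add_mem' hf hg _ _ _ _ hx hy hd := by
    rw [ratioFun_add, hf _ _ _ _ hx hy hd, hg _ _ _ _ hx hy hd, ratioFun_add]
  mul_mem' hf hg _ _ _ _ hx hy hd := by
    rw [ratioFun_mul, hf _ _ _ _ hx hy hd, hg _ _ _ _ hx hy hd, ratioFun_mul]
  algebraMap_mem' r _ _ _ _ hx hy hd := by
    rw [← C_eq_algebraMap, ratioFun_C, h _ _ _ _ hx hy hd, ratioFun_C]

namespace IsPointExtension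

lemma translate {Ω' : Type*} [Finite Ω'] {c' : Ω' → Ω' → κ} {α : ZMod (p ^ n)} {α' : Ω'}
    {d' : Ω' → Ω' → κ'} (E : IsPointExtension (cayleyColoring D) c' α α' d d') :
    IsPointExtension (cayleyColoring D) (cayleyColoring D) 0 0
      (fun x y => d (α + x) (α + y)) (fun x y => d (α + x) (α + y)) where
  sameIntersectionNumbers :=
    E.self.sameIntersectionNumbers.comp_equiv (Equiv.addLeft α) (Equiv.addLeft α)
  color_eq h := by simpa only [cayleyColoring, add_sub_add_left_eq_sub] using E.self.color_eq h
  converse_eq h := E.self.converse_eq h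
  base_eq := rfl
  eq_base {x y} h := by
    simpa only [add_eq_left] using
      E.self.eq_base (a' := α + x) (b' := α + y) (by rwa [add_zero] at h)

lemma color_eq_of_eq (E : IsPointExtension (cayleyColoring D) (cayleyColoring D) 0 0 d d)
    (h : d x y = d x' y') : D x = D x' ∧ D y = D y' := by
  have := E.color_from_base_eq h
  simpa only [cayleyColoring, sub_zero] using And.intro (E.color_eq this.1) (E.color_eq this.2)

lemma ncard_setOf_eq (E : IsPointExtension (cayleyColoring D) (cayleyColoring D) 0 0 d d)
    (ha : a < n) (X : IsXIdeal D a) {F G : ZMod p → ZMod p → ZMod p}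
    (hF : IsColorMeasurable a d F) (hG : IsColorMeasurable a d G)
    (hx : π ^ a ∣ x) (hy : π ^ a ∣ y) (h : d x y = d x' y') (r : ZMod p × ZMod p) :
    {i | (F (digit a x) i, G i (digit a y)) = r}.ncard =
      {i | (F (digit a x') i, G i (digit a y')) = r}.ncard := by
  obtain ⟨e, he⟩ := E.sameIntersectionNumbers.exists_equiv h
  have hdvd (z : ZMod (p ^ n)) : π ^ a ∣ e z ↔ π ^ a ∣ z :=
    X.pow_dvd_iff (E.color_eq_of_eq (he z).1).2
  have hpos : 0 < {v : ZMod (p ^ n) | π ^ (a + 1) ∣ v}.ncard :=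
    (ncard_pos (toFinite _)).2 ⟨0, dvd_zero _⟩
  refine Nat.eq_of_mul_eq_mul_right hpos ?_
  rw [← ncard_setOf_digit_mem ha, ← ncard_setOf_digit_mem ha,
    ← ncard_image_of_injective _ e.injective, e.image_eq_preimage_symm]
  congr 1
  ext z
  obtain ⟨z, rfl⟩ := e.surjective z
  simp only [mem_preimage, e.symm_apply_apply, mem_ofPred_eq, hdvd]
  refine and_congr_right fun hz => ?_
  rw [hF _ _ _ _ hx hz (he z).1.symm, hG _ _ _ _ hz hy (he z).2.symm]

lemma isColorMeasurable_sum (E : IsPointExtension (cayleyColoring D) (cayleyColoring D) 0 0 d d)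
    (ha : a < n) (X : IsXIdeal D a) {F G : ZMod p → ZMod p → ZMod p}
    (hF : IsColorMeasurable a d F) (hG : IsColorMeasurable a d G) :
    IsColorMeasurable a d fun x y => ∑ z, F x z * G z y := by
  intro x y x' y' hx hy h
  obtain ⟨e, he⟩ := exists_equiv_comp_eq _ _ (E.ncard_setOf_eq ha X hF hG hx hy h)
  simp only [Prod.mk.injEq] at he
  exact Fintype.sum_equiv e _ _ fun i => by rw [(he i).1, (he i).2]

open Polynomial in
lemma isColorMeasurable_ratioFun_X
    (E : IsPointExtension (cayleyColoring D) (cayleyColoring D) 0 0 d d)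
    (S : IsSchurColoring D) (L : IsLayer D a (a + 1) (a + 1)) (hz : HasVal π a z)
    (hz' : HasVal π a z') (hzz' : D z ≠ D z') : IsColorMeasurable a d (ratioFun X) := by
  obtain ⟨m, hm, hmp, hpow⟩ := S.exists_digit_pow_eq L hz hz' hzz'
  have hpow_eq {x y x' y' : ZMod (p ^ n)} (hx : π ^ a ∣ x) (hy : π ^ a ∣ y) (h : d x y = d x' y') :
      digit a x ^ m = digit a x' ^ m ∧ digit a y ^ m = digit a y' ^ m ∧
        (digit a y - digit a x) ^ m = (digit a y' - digit a x') ^ m := by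
    obtain ⟨hx', hy'⟩ := E.color_eq_of_eq h
    rw [← digit_sub L.le hy hx, ← digit_sub L.le (L.isXIdeal_bot _ _ hy' hy)
      (L.isXIdeal_bot _ _ hx' hx)]
    exact ⟨hpow _ _ hx hx', hpow _ _ hy hy', hpow _ _ (dvd_sub hy hx) (E.color_eq h)⟩
  have hone : IsColorMeasurable a d (ratioFun 1) := by
    intro x y x' y' hx hy h
    obtain ⟨hx', hy', -⟩ := hpow_eq hx hy h
    have hm0 : m ≠ 0 := by omega
    have hzero {s t : ZMod p} (hst : s ^ m = t ^ m) : s = 0 ↔ t = 0 := by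
      rw [← pow_eq_zero_iff hm0, hst, pow_eq_zero_iff hm0]
    simp only [ratioFun, hzero hx', hzero hy', eval_one]
  refine X_mem_of_hadamardProduct_mem (A := measurableRatios hone) hm hmp ?_ ?_ ?_
  · intro x y x' y' hx hy h
    obtain ⟨hx', hy', -⟩ := hpow_eq hx hy h
    rw [ratioFun_X_pow (by omega), ratioFun_X_pow (by omega), hx', hy']
  · intro x y x' y' hx hy h
    obtain ⟨hx', -, hsub⟩ := hpow_eq hx hy h
    rw [ratioFun_one_sub_X_pow, ratioFun_one_sub_X_pow, hx', hsub, hone _ _ _ _ hx hy h]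
  · intro f hf g hg hfp hgp x y x' y' hx hy h
    have hsum := E.isColorMeasurable_sum L.le L.isXIdeal_bot hf hg _ _ _ _ hx hy h
    simpa only [sum_ratioFun_mul_ratioFun hfp hgp, neg_inj] using hsum

lemma pow_succ_dvd_sub (E : IsPointExtension (cayleyColoring D) (cayleyColoring D) 0 0 d d)
    (S : IsSchurColoring D) (L : IsLayer D a (a + 1) (a + 1)) (hz : HasVal π a z)
    (hz' : HasVal π a z') (hzz' : D z ≠ D z') (hw : HasVal π a w) (hy : π ^ a ∣ y)
    (h : d w y = d w y') : π ^ (a + 1) ∣ y' - y := by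
  have hy' : π ^ a ∣ y' := L.isXIdeal_bot _ _ (E.color_eq_of_eq h).2 hy
  have hratio := E.isColorMeasurable_ratioFun_X S L hz hz' hzz' _ _ _ _ hw.pow_dvd hy h
  rw [ratioFun_X, ratioFun_X, div_left_inj' (digit_ne_zero hw)] at hratio
  rw [← digit_eq_zero_iff L.le (dvd_sub hy' hy), digit_sub L.le hy' hy, hratio, sub_self]

end IsPointExtension

lemma IsSchurColoring.pow_dvd_sub_of_relation (S : IsSchurColoring D)
    (L : IsLayer D a (a + 1) l) (hal : a + 1 < l) (hw : HasVal π a w)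
    (R : ZMod (p ^ n) → ZMod (p ^ n) → Prop)
    (hR : ∀ y y', R y y' → π ^ a ∣ y →
      ColorEqMod D l y y' ∧ ColorEqMod D l (y - w) (y' - w))
    (hext : ∀ y y' v, R y y' → π ^ a ∣ y → π ^ a ∣ v →
      ∃ v', R v v' ∧ ColorEqMod D l (v - y) (v' - y'))
    (hy : π ^ a ∣ y) (h : R y y') : π ^ l ∣ y' - y := by
  have near {v v'} (hvw : π ^ (a + 1) ∣ v - w) (hv : R v v') : π ^ l ∣ v' - v := by
    have hav : π ^ a ∣ v := (dvd_sub_left hw.pow_dvd).1 ((pow_dvd_pow _ a.le_succ).trans hvw)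
    exact S.pow_dvd_sub_of_dvd_sub L hal hw hvw (hR v v' hv hav).1 (hR v v' hv hav).2
  by_cases hyw : π ^ (a + 1) ∣ y - w
  · exact near hyw h
  have hc : HasVal π (a + 1) (π * w) := hw.natCast_mul (hal.trans_le L.period_le)
  obtain ⟨v', hv, hvy⟩ := hext y y' (w + π * w) h hy
    (dvd_add hw.pow_dvd (hw.pow_dvd.mul_left _))
  have hv' : π ^ l ∣ v' - (w + π * w) := near (by simpa using hc.pow_dvd) hv
  have hcx : ColorEqMod D l (π * w - (y - w)) (π * w - (y' - w)) := by
    convert hvy.trans S (S.isXIdeal_period L)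
      (.of_pow_dvd_sub (z' := w + π * w - y') (by simpa using hv'.neg_right)) using 1 <;> ring
  simpa using S.pow_dvd_sub_of_hasVal L hal hc (hasVal_iff.2 ⟨dvd_sub hy hw.pow_dvd, hyw⟩)
    (hR y y' h hy).2 hcx

namespace IsPointExtension

lemma pow_dvd_sub (E : IsPointExtension (cayleyColoring D) (cayleyColoring D) 0 0 d d)
    (S : IsSchurColoring D) (L : IsLayer D a (a + 1) l) (hal : a + 1 < l) (hw : HasVal π a w)
    (hy : π ^ a ∣ y) (h : d w y = d w y') : π ^ l ∣ y' - y := by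
  refine S.pow_dvd_sub_of_relation L hal hw (fun y y' => d w y = d w y') ?_ ?_ hy h
  · exact fun y y' hyy' _ => ⟨.of_eq (E.color_eq_of_eq hyy').2, .of_eq (E.color_eq hyy')⟩
  · intro y y' v hyy' _ _
    obtain ⟨v', hwv, hvy⟩ := E.exists_triangle hyy' v
    exact ⟨v', hwv, .of_eq (E.color_eq (E.converse_eq hvy))⟩

variable {Ω' : Type*} [Finite Ω'] {c' : Ω' → Ω' → κ} {α : ZMod (p ^ n)} {α' : Ω'}
  {d' : Ω' → Ω' → κ'}

lemma pow_dvd_sub_of_eq (E : IsPointExtension (cayleyColoring D) c' α α' d d')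
    (S : IsSchurColoring D) (L : IsLayer D a (a + 1) l)
    (hne : ∃ z z', HasVal π a z ∧ HasVal π a z' ∧ D z ≠ D z') (hw : HasVal π a (w - α))
    (hy : π ^ a ∣ y - α) (h : d w y = d w y') : π ^ l ∣ y' - y := by
  have h' : d (α + (w - α)) (α + (y - α)) = d (α + (w - α)) (α + (y' - α)) := by
    simpa only [add_sub_cancel] using h
  rw [← sub_sub_sub_cancel_right y' y α]
  obtain rfl | hal := L.le_period.eq_or_lt
  · obtain ⟨z, z', hz, hz', hzz'⟩ := hne
    exact E.translate.pow_succ_dvd_sub S L hz hz' hzz' hw hy h'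
  · exact E.translate.pow_dvd_sub S L hal hw hy h'

end IsPointExtension

end CyclicPointExtensions

section UniformPartitions

variable {A I : Type*} [Finite A] {f : A → I} {m : ℕ}

lemma card_eq_card_range_mul (hf : ∀ x, Nat.card {y // f y = f x} = m) :
    Nat.card A = Nat.card (range f) * m := by
  have := Fintype.ofFinite (range f)
  have hfiber : ∀ i : range f, Nat.card {x // rangeFactorization f x = i} = m := by
    rintro ⟨_, x, rfl⟩
    simpa only [Subtype.ext_iff, rangeFactorization_coe] using hf x
  rw [← Nat.card_congr (Equiv.sigmaFiberEquiv (rangeFactorization f)), Nat.card_sigma,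
    Finset.sum_congr rfl fun i _ => hfiber i, Finset.sum_const, Finset.card_univ,
    ← Nat.card_eq_fintype_card, smul_eq_mul]

lemma exists_map_eq_iff {B J : Type*} [Finite B] {g : B → J}
    (hf : ∀ x, Nat.card {y // f y = f x} = m) (hg : ∀ x, Nat.card {y // g y = g x} = m)
    (hAB : Nat.card A = Nat.card B) (x₀ : A) (y₀ : B) :
    ∃ φ : A → B, φ x₀ = y₀ ∧ ∀ x y, f x = f y ↔ g (φ x) = g (φ y) := by
  classical
  have hm : 0 < m := by
    rw [← hf x₀]
    exact Nat.card_pos_iff.2 ⟨⟨x₀, rfl⟩, inferInstance⟩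
  have hcard : Nat.card (range f) = Nat.card (range g) := by
    rw [card_eq_card_range_mul hf, card_eq_card_range_mul hg] at hAB
    exact Nat.eq_of_mul_eq_mul_right hm hAB
  obtain ⟨e⟩ := Finite.card_eq.1 hcard
  let q := e.trans (Equiv.swap (e (rangeFactorization f x₀)) (rangeFactorization g y₀))
  have hq : q (rangeFactorization f x₀) = rangeFactorization g y₀ := by simp [q]
  choose φ hφ using fun x => (q (rangeFactorization f x)).2
  have hφ' : ∀ x, g (Function.update φ x₀ y₀ x) = q (rangeFactorization f x) := by
    intro x
    obtain rfl | hx := eq_or_ne x x₀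
    · rw [Function.update_self, hq, rangeFactorization_coe]
    · rw [Function.update_of_ne hx, hφ]
  refine ⟨Function.update φ x₀ y₀, Function.update_self .., fun x y => ?_⟩
  rw [hφ', hφ', ← Subtype.ext_iff, q.apply_eq_iff_eq, Subtype.ext_iff, rangeFactorization_coe,
    rangeFactorization_coe]

end UniformPartitions

section IsomorphismsModulo

variable {Ω' : Type*} {D : ZMod (p ^ n) → κ} {a b u l : ℕ} {c' : Ω' → Ω' → κ}

/-- The arc colouring `c'` is the image of the Cayley colouring of `D` under an algebraic
isomorphism, along which the colours are identified. -/
structure IsCayleyImage (D : ZMod (p ^ n) → κ) (c' : Ω' → Ω' → κ) : Prop where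
  sameIntersectionNumbers : SameIntersectionNumbers (cayleyColoring D) c'
  eq_zero_iff : ∀ {x y}, c' x y = D 0 ↔ x = y

/-- The colour of the arc `(x, y)` is that of the difference `v`, up to a translation of `v` by a
multiple of `p ^ l`. -/
def HasColorMod (D : ZMod (p ^ n) → κ) (c' : Ω' → Ω' → κ) (l : ℕ) (x y : Ω')
    (v : ZMod (p ^ n)) : Prop :=
  ∃ w, π ^ l ∣ w ∧ c' x y = D (v + w)

/-- On the coset of `α` modulo `p ^ a`, the map `g` preserves colours up to translations by
multiples of `p ^ l`. -/
def IsIsoMod (D : ZMod (p ^ n) → κ) (c' : Ω' → Ω' → κ) (a l : ℕ) (α : ZMod (p ^ n))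
    (g : ZMod (p ^ n) → Ω') : Prop :=
  ∀ y z, π ^ a ∣ y - α → π ^ a ∣ z - α → HasColorMod D c' l (g y) (g z) (z - y)

namespace HasColorMod

variable {x y z : Ω'} {v v' : ZMod (p ^ n)}

lemma of_eq (h : c' x y = D v) : HasColorMod D c' l x y v := ⟨0, dvd_zero _, by rw [add_zero, h]⟩

lemma mono {l' : ℕ} (hl : l ≤ l') (h : HasColorMod D c' l' x y v) : HasColorMod D c' l x y v := by
  obtain ⟨w, hw, h⟩ := h
  exact ⟨w, (pow_dvd_pow _ hl).trans hw, h⟩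

lemma colorEqMod (S : IsSchurColoring D) (X : IsXIdeal D l) (h : HasColorMod D c' l x y v)
    (h' : ColorEqMod D l v v') : HasColorMod D c' l x y v' := by
  obtain ⟨w, hw, h⟩ := h
  obtain ⟨w', hw', h'⟩ := (ColorEqMod.of_pow_dvd_sub (D := D) (l := l) (z := v + w) (z' := v)
    (by simpa using hw)).trans S X h' |>.symm S X
  exact ⟨w', hw', by rw [h, h']⟩

lemma congr_of_pow_dvd_sub (S : IsSchurColoring D) (X : IsXIdeal D l)
    (h : HasColorMod D c' l x y v) (h' : π ^ l ∣ v' - v) : HasColorMod D c' l x y v' :=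
  h.colorEqMod S X (.of_pow_dvd_sub h')

lemma unique (S : IsSchurColoring D) (X : IsXIdeal D l) (h : HasColorMod D c' l x y v)
    (h' : HasColorMod D c' l x y v') : ColorEqMod D l v v' := by
  obtain ⟨w, hw, h⟩ := h
  obtain ⟨w', hw', h'⟩ := h'
  exact ColorEqMod.trans S X ⟨w, hw, h.symm.trans h'⟩ (.of_pow_dvd_sub (by simpa using hw'))

lemma zero_iff (X : IsXIdeal D l) (h : c' x y = D v) : HasColorMod D c' l x y 0 ↔ π ^ l ∣ v := by
  refine ⟨fun ⟨w, hw, h'⟩ => ?_, fun hv => ⟨v, hv, by rw [zero_add, h]⟩⟩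
  rw [zero_add, h] at h'
  exact X _ _ h'.symm hw

lemma color_eq (L : IsLayer D a u l) (h : HasColorMod D c' l x y v) (hv : v ∈ layer π a u) :
    c' x y = D v := by
  obtain ⟨w, hw, h⟩ := h
  rw [h, L.periodic v hv w hw]

end HasColorMod

namespace IsIsoMod

variable {α : ZMod (p ^ n)} {g : ZMod (p ^ n) → Ω'}

lemma mono {l' : ℕ} (hab : a ≤ b) (hl : l' ≤ l) (h : IsIsoMod D c' a l α g) :
    IsIsoMod D c' b l' α g :=
  fun y z hy hz =>
    (h y z ((pow_dvd_pow _ hab).trans hy) ((pow_dvd_pow _ hab).trans hz)).mono hl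

end IsIsoMod

namespace IsCayleyImage

variable [NeZero (p ^ n)] [Finite Ω'] {x y z : Ω'} {v r s : ZMod (p ^ n)}

lemma exists_equiv (I : IsCayleyImage D c') (x : Ω') : ∃ e : ZMod (p ^ n) ≃ Ω', ∀ v,
    c' x (e v) = D v := by
  have hloop : cayleyColoring D 0 0 = c' x x := by
    rw [cayleyColoring, sub_self, I.eq_zero_iff.2 rfl]
  obtain ⟨e, he⟩ := I.sameIntersectionNumbers.exists_equiv hloop
  exact ⟨e, fun v => by rw [(he v).1, cayleyColoring, sub_zero]⟩

lemma exists_eq (I : IsCayleyImage D c') (x y : Ω') : ∃ v, c' x y = D v := by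
  obtain ⟨e, he⟩ := I.exists_equiv x
  exact ⟨e.symm y, by rw [← he, e.apply_symm_apply]⟩

lemma converse_eq (I : IsCayleyImage D c') (S : IsSchurColoring D) (h : c' x y = D v) :
    c' y x = D (-v) := by
  have hdiag : SeparatesDiagonal (cayleyColoring D) := fun a b x hab =>
    (sub_eq_zero.1 (S.eq_zero _ (by simpa only [cayleyColoring, sub_self] using hab))).symm
  have hdiag' : SeparatesDiagonal c' := fun a b x hab =>
    I.eq_zero_iff.1 (by rw [hab, I.eq_zero_iff])
  have hconv : ConverseCompatible (cayleyColoring D) := fun a b a₁ b₁ hab => by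
    simpa only [neg_sub] using S.neg _ _ hab
  have hv : cayleyColoring D 0 v = c' x y := by rw [cayleyColoring, sub_zero, h]
  rw [← I.sameIntersectionNumbers.converse_eq hdiag hdiag' hconv hv, cayleyColoring, zero_sub]

lemma exists_add_eq (I : IsCayleyImage D c') (hxy : c' x y = D r) (hyz : c' y z = D s) :
    ∃ r' s', D r' = D r ∧ D s' = D s ∧ c' x z = D (r' + s') := by
  obtain ⟨v, hv⟩ := I.exists_eq x z
  obtain ⟨e, he⟩ := I.sameIntersectionNumbers.exists_equiv (a := 0) (b := v) (a' := x) (b' := z)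
    (by rw [cayleyColoring, sub_zero, hv])
  obtain ⟨hleft, hright⟩ := he (e.symm y)
  rw [e.apply_symm_apply, cayleyColoring] at hleft hright
  rw [sub_zero] at hleft
  exact ⟨e.symm y, v - e.symm y, by rw [← hleft, hxy], by rw [← hright, hyz],
    by rw [hv, add_sub_cancel]⟩

end IsCayleyImage

namespace HasColorMod

variable [NeZero (p ^ n)] [Finite Ω'] {x y z : Ω'} {v : ZMod (p ^ n)}

lemma trans_zero (h : HasColorMod D c' l x y v) (h' : HasColorMod D c' l y z 0)
    (S : IsSchurColoring D) (I : IsCayleyImage D c') (X : IsXIdeal D l) :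
    HasColorMod D c' l x z v := by
  obtain ⟨w, hw, h⟩ := h
  obtain ⟨w', hw', h'⟩ := h'
  rw [zero_add] at h'
  obtain ⟨r, s, hr, hs, hrs⟩ := I.exists_add_eq h h'
  obtain ⟨t, ht, hadd⟩ := S.exists_add_eq hr s
  refine ⟨w + t, dvd_add hw (X _ _ ht.symm (X _ _ hs.symm hw')), ?_⟩
  rw [hrs, ← add_assoc, hadd]

lemma neg (h : HasColorMod D c' l x y v) (S : IsSchurColoring D) (I : IsCayleyImage D c') :
    HasColorMod D c' l y x (-v) := by
  obtain ⟨w, hw, h⟩ := h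
  exact ⟨-w, hw.neg_right, by rw [I.converse_eq S h, neg_add]⟩

lemma symm (h : HasColorMod D c' l x y 0) (S : IsSchurColoring D) (I : IsCayleyImage D c') :
    HasColorMod D c' l y x 0 := by
  simpa only [neg_zero] using h.neg S I

lemma zero_trans (h : HasColorMod D c' l x y 0) (h' : HasColorMod D c' l y z v)
    (S : IsSchurColoring D) (I : IsCayleyImage D c') (X : IsXIdeal D l) :
    HasColorMod D c' l x z v := by
  simpa only [neg_neg] using ((h'.neg S I).trans_zero (h.symm S I) S I X).neg S I

end HasColorMod

variable [Finite Ω'] {κ' : Type*} {α : ZMod (p ^ n)} {α' : Ω'}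

section TrivialLayer

variable [NeZero (p ^ n)]

namespace IsCayleyImage

/-- The relation of having a colour in the ideal generated by `p ^ b`, which is a parabolic of the
coherent configuration coloured by `c'`. -/
def parabolic (I : IsCayleyImage D c') (S : IsSchurColoring D) (X : IsXIdeal D b) :
    Setoid Ω' where
  r x y := HasColorMod D c' b x y 0
  iseqv :=
    ⟨fun _ => .of_eq (I.eq_zero_iff.2 rfl), fun h => h.symm S I, fun h h' => h.trans_zero h' S I X⟩

lemma card_parabolic (I : IsCayleyImage D c') (S : IsSchurColoring D) (X : IsXIdeal D b) (x : Ω') :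
    Nat.card {y // I.parabolic S X x y} = Nat.card {v : ZMod (p ^ n) // π ^ b ∣ v} := by
  obtain ⟨e, he⟩ := I.exists_equiv x
  exact (Nat.card_congr (e.subtypeEquiv fun v => (HasColorMod.zero_iff X (he v)).symm)).symm

lemma exists_map_parabolic_iff (I : IsCayleyImage D c') (S : IsSchurColoring D)
    (Xa : IsXIdeal D a) (Xu : IsXIdeal D u) (hau : a ≤ u) (α : ZMod (p ^ n)) (α' : Ω') :
    ∃ g : {y // π ^ a ∣ y - α} → {y // I.parabolic S Xa α' y}, (g ⟨α, by simp⟩).1 = α' ∧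
      ∀ y z, π ^ u ∣ z.1 - y.1 ↔ HasColorMod D c' u (g y).1 (g z).1 0 := by
  let f (y : {y : ZMod (p ^ n) // π ^ a ∣ y - α}) := Ideal.Quotient.mk (Ideal.span {π ^ u}) y.1
  let f' (y : {y // I.parabolic S Xa α' y}) := (⟦y.1⟧ : Quotient (I.parabolic S Xu))
  have hf {y z} : f y = f z ↔ π ^ u ∣ y.1 - z.1 := by
    rw [Ideal.Quotient.eq, Ideal.mem_span_singleton]
  have hf' {y z} : f' y = f' z ↔ I.parabolic S Xu y.1 z.1 := Quotient.eq
  have hcard (b : ℕ) (x : ZMod (p ^ n)) :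
      Nat.card {y // π ^ b ∣ y - x} = Nat.card {v : ZMod (p ^ n) // π ^ b ∣ v} :=
    Nat.card_congr ((Equiv.subRight x).subtypeEquiv fun _ => Iff.rfl)
  have hfiber (x) : Nat.card {y // f y = f x} = Nat.card {v : ZMod (p ^ n) // π ^ u ∣ v} := by
    simp only [hf]
    rw [← hcard u x.1]
    exact Nat.card_congr (Equiv.subtypeSubtypeEquivSubtype fun {y} (hy : π ^ u ∣ y - x.1) =>
      by simpa using dvd_add ((pow_dvd_pow _ hau).trans hy) x.2)
  have hfiber' (x) : Nat.card {y // f' y = f' x} = Nat.card {v : ZMod (p ^ n) // π ^ u ∣ v} := by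
    simp only [hf', Setoid.comm']
    rw [← I.card_parabolic S Xu x.1]
    exact Nat.card_congr (Equiv.subtypeSubtypeEquivSubtype fun {y} (hy : HasColorMod _ _ _ _ y _) =>
      x.2.trans_zero (hy.mono hau) S I Xa)
  obtain ⟨g, hg, hgf⟩ := exists_map_eq_iff hfiber hfiber'
    ((hcard a α).trans (I.card_parabolic S Xa α').symm) ⟨α, by simp⟩
    ⟨α', (I.parabolic S Xa).refl α'⟩
  exact ⟨g, by rw [hg], fun y z => by rw [← hf, eq_comm, hgf, hf']; rfl⟩

end IsCayleyImage

lemma exists_isIsoMod_of_layer_constant (S : IsSchurColoring D) (I : IsCayleyImage D c')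
    (Xa : IsXIdeal D a) (Xu : IsXIdeal D u) (hau : a ≤ u)
    (hconst : ∀ z ∈ layer π a u, ∀ z' ∈ layer π a u, D z = D z') (α : ZMod (p ^ n)) (α' : Ω') :
    ∃ g, g α = α' ∧ IsIsoMod D c' a u α g := by
  classical
  obtain ⟨g, hgα, hg⟩ := I.exists_map_parabolic_iff S Xa Xu hau α α'
  refine ⟨fun y => if hy : π ^ a ∣ y - α then (g ⟨y, hy⟩).1 else α', by simp [hgα],
    fun y z hy hz => ?_⟩
  simp only [hy, hz, dif_pos]
  by_cases hu : π ^ u ∣ z - y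
  · exact ((hg ⟨y, hy⟩ ⟨z, hz⟩).1 hu).congr_of_pow_dvd_sub S Xu (by rwa [sub_zero])
  · obtain ⟨v, hv⟩ := I.exists_eq (g ⟨y, hy⟩).1 (g ⟨z, hz⟩).1
    have hav : π ^ a ∣ v := (HasColorMod.zero_iff Xa hv).1
      (((g ⟨y, hy⟩).2.symm S I).trans_zero (g ⟨z, hz⟩).2 S I Xa)
    have huv : ¬π ^ u ∣ v := fun h => hu ((hg _ _).2 ((HasColorMod.zero_iff Xu hv).2 h))
    refine .of_eq (hv.trans (hconst v ⟨hav, huv⟩ _ ⟨?_, hu⟩))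
    simpa using dvd_sub hz hy

end TrivialLayer

variable [Fact p.Prime]

namespace IsPointExtension

variable {d : ZMod (p ^ n) → ZMod (p ^ n) → κ'} {d' : Ω' → Ω' → κ'} {w y z : ZMod (p ^ n)}
  {w' y' z' : Ω'}

lemma hasColorMod (E : IsPointExtension (cayleyColoring D) c' α α' d d') (S : IsSchurColoring D)
    (L : IsLayer D a (a + 1) l) (hne : ∃ z z', HasVal π a z ∧ HasVal π a z' ∧ D z ≠ D z')
    (hw : HasVal π a (w - α)) (hy : π ^ a ∣ y - α) (hwy : d w y = d' w' y')
    (hwz : d w z = d' w' z') : HasColorMod D c' l y' z' (z - y) := by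
  obtain ⟨y₁, hwy₁, hyz₁⟩ := E.exists_triangle_symm hwz y'
  have hyy₁ := E.pow_dvd_sub_of_eq S L hne hw hy (hwy.trans hwy₁.symm)
  refine ⟨y - y₁, by simpa using hyy₁.neg_right, ?_⟩
  rw [sub_add_sub_cancel, ← E.color_eq hyz₁]

lemma exists_isIsoMod (E : IsPointExtension (cayleyColoring D) c' α α' d d')
    (S : IsSchurColoring D) (L : IsLayer D a (a + 1) l)
    (hne : ∃ z z', HasVal π a z ∧ HasVal π a z' ∧ D z ≠ D z') (hw : HasVal π a (w - α))
    (hwα : d w α = d' w' α') :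
    ∃ g, g α = α' ∧ IsIsoMod D c' a l α g ∧ ∀ y, d w y = d' w' (g y) := by
  classical
  choose g hg _ using E.exists_triangle hwα
  have hgα : ∀ y, d w y = d' w' (Function.update g α α' y) := by
    intro y
    obtain rfl | hy := eq_or_ne y α
    · rwa [Function.update_self]
    · rw [Function.update_of_ne hy, hg]
  exact ⟨Function.update g α α', Function.update_self .., fun y z hy _ =>
    E.hasColorMod S L hne hw hy (hgα y) (hgα z), hgα⟩

end IsPointExtension

/-- The algebraic isomorphism given by the Cayley colouring of `D` and `c'` has an
`(α, α')`-extension for all `α` and `α'`. -/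
def HasPointExtensions (D : ZMod (p ^ n) → κ) (c' : Ω' → Ω' → κ) : Prop :=
  ∀ α α', ∃ (κ' : Type u) (d : ZMod (p ^ n) → ZMod (p ^ n) → κ') (d' : Ω' → Ω' → κ'),
    IsPointExtension (cayleyColoring D) c' α α' d d'

lemma IsSchurColoring.exists_color_ne (S : IsSchurColoring D) (L : IsLayer D a (a + 1) l)
    (h : ¬(l = a + 1 ∧ ∀ z ∈ layer π a (a + 1), ∀ z' ∈ layer π a (a + 1), D z = D z')) :
    ∃ z z', HasVal π a z ∧ HasVal π a z' ∧ D z ≠ D z' := by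
  obtain rfl | hal := L.le_period.eq_or_lt
  · by_contra! hconst
    exact h ⟨rfl, fun z hz z' hz' => hconst z z' (hasVal_iff.2 hz) (hasVal_iff.2 hz')⟩
  · have hπ : HasVal π a (π ^ a) := hasVal_pow L.le
    obtain ⟨t, ht⟩ := S.exists_add_ne L hal hπ
    exact ⟨_, _, hasVal_iff.2 (L.add_mem_layer (hasVal_iff.1 hπ)
      ((pow_dvd_pow _ (Nat.le_sub_one_of_lt hal)).mul_right t)), hπ, ht⟩

theorem exists_isIsoMod (S : IsSchurColoring D) (I : IsCayleyImage D c')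
    (Q : HasPointExtensions.{u} D c') (L : IsLayer D a u l) (α : ZMod (p ^ n)) (α' : Ω') :
    ∃ g, g α = α' ∧ IsIsoMod D c' a l α g := by
  by_cases hdich : l = u ∧ ∀ z ∈ layer π a u, ∀ z' ∈ layer π a u, D z = D z'
  · obtain ⟨rfl, hconst⟩ := hdich
    exact exists_isIsoMod_of_layer_constant S I L.isXIdeal_bot L.isXIdeal_top L.lt.le hconst α α'
  obtain rfl := (S.layer_classification L).resolve_right hdich
  obtain ⟨_, d, d', E⟩ := Q α α'
  obtain ⟨x', hx', -⟩ := E.exists_triangle E.base_eq (α + π ^ a)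
  obtain ⟨g, hg, hiso, -⟩ := E.exists_isIsoMod S L (S.exists_color_ne L hdich)
    (by simpa using hasVal_pow (p := p) L.le) (E.converse_eq hx')
  exact ⟨g, hg, hiso⟩

end IsomorphismsModulo

section Refinement

variable {κ' Ω' : Type*} [Fact p.Prime]
  {D : ZMod (p ^ n) → κ} {a b u l m : ℕ} {c' : Ω' → Ω' → κ} {α k : ZMod (p ^ n)}
  {α' : Ω'} {g g₀ : ZMod (p ^ n) → Ω'}

lemma IsSchurColoring.exists_isUnit_mul_of_colorEqMod (S : IsSchurColoring D)
    (L : IsLayer D a (a + 1) l) (hal : a + 1 < l) (t : ZMod (p ^ n) → ZMod (p ^ n))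
    (ht : ∀ s, π ^ a ∣ s → ColorEqMod D l s (t s))
    (htt : ∀ s s', π ^ a ∣ s → π ^ a ∣ s' → ColorEqMod D l (s' - s) (t s' - t s)) :
    ∃ k, IsUnit k ∧ D (k * π ^ a) = D (π ^ a) ∧ ∀ s, π ^ a ∣ s → π ^ l ∣ t s - k * s := by
  have hπ : HasVal π a (π ^ a) := hasVal_pow L.le
  have hdvd (s) (hs : π ^ a ∣ s) : π ^ a ∣ t s := (ht s hs).pow_dvd (by omega) L.isXIdeal_bot hs
  have hcolor : D (π ^ a) = D (t (π ^ a)) :=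
    L.eq_of_colorEqMod (ht _ dvd_rfl) (hasVal_iff.1 hπ)
  obtain ⟨k, hk, hkt⟩ := hπ.exists_isUnit_eq_mul_of_hasVal (L.hasVal_of_eq hcolor hπ)
  refine ⟨k, hk, by rw [← hkt, hcolor], fun s hs => ?_⟩
  obtain ⟨k, rfl⟩ := hk
  have mul_inv {z z'} (hz' : π ^ a ∣ z') (h : ColorEqMod D l z z') :
      ColorEqMod D l z (↑k⁻¹ * z') := by
    refine h.trans S (S.isXIdeal_period L) ?_
    simpa using S.colorEqMod_mul_of_color_eq L k.isUnit hπ (by rw [← hkt, hcolor])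
      (hz'.mul_left (↑k⁻¹ : ZMod (p ^ n)))
  have hrigid := S.pow_dvd_sub_of_relation L hal hπ (fun y y' => y' = ↑k⁻¹ * t y) ?_ ?_ hs rfl
  · simpa [mul_sub] using hrigid.mul_left (k : ZMod (p ^ n))
  · rintro y _ rfl hy
    refine ⟨mul_inv (hdvd y hy) (ht y hy), ?_⟩
    have := mul_inv (dvd_sub (hdvd y hy) (hdvd _ dvd_rfl)) (htt _ y dvd_rfl hy)
    simpa [mul_sub, hkt] using this
  · rintro y _ v rfl hy hv
    refine ⟨_, rfl, ?_⟩
    rw [← mul_sub]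
    exact mul_inv (dvd_sub (hdvd v hv) (hdvd y hy)) (htt y v hy hv)

lemma IsSchurColoring.exists_isUnit_mul_eq_pow (S : IsSchurColoring D)
    (L : IsLayer D a (a + 1) l) (Lb : IsLayer D b (b + 1) m) (hab : a ≤ b)
    (hk : IsUnit k) (hkπ : D (k * π ^ a) = D (π ^ a)) :
    ∃ k₁, IsUnit k₁ ∧ D (k₁ * π ^ b) = D (π ^ b) ∧ ∀ z, π ^ b ∣ z → π ^ l ∣ k * z - k₁ * z := by
  have hπb : HasVal π b (π ^ b) := hasVal_pow Lb.le
  obtain ⟨w, hw, hwb⟩ := S.colorEqMod_mul_of_color_eq L hk (hasVal_pow L.le) hkπ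
    (pow_dvd_pow π hab)
  obtain ⟨k₁, hk₁, hkw⟩ := hπb.exists_isUnit_eq_mul_of_hasVal (Lb.hasVal_of_eq hwb.symm hπb)
  refine ⟨k₁, hk₁, by rw [← hkw, hwb], ?_⟩
  rintro _ ⟨s, rfl⟩
  rw [← mul_assoc, ← mul_assoc, ← hkw, ← sub_mul, sub_add_cancel_left]
  exact hw.neg_right.mul_right s

lemma IsIsoMod.comp_mul (hg : IsIsoMod D c' a l α g) (S : IsSchurColoring D)
    (L : IsLayer D a (a + 1) l) (hk : IsUnit k) (hkπ : D (k * π ^ a) = D (π ^ a)) :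
    IsIsoMod D c' a l α fun y => g (α + k * (y - α)) := by
  intro y z hy hz
  have h := hg (α + k * (y - α)) (α + k * (z - α)) (by simpa using hy.mul_left k)
    (by simpa using hz.mul_left k)
  rw [add_sub_add_left_eq_sub, ← mul_sub, sub_sub_sub_cancel_right] at h
  refine h.colorEqMod S (S.isXIdeal_period L)
    (S.colorEqMod_mul_of_color_eq L hk (hasVal_pow L.le) hkπ ?_)
  simpa using dvd_sub hz hy

variable [Finite Ω']

lemma IsPointExtension.exists_isIsoMod_pair {d : ZMod (p ^ n) → ZMod (p ^ n) → κ'}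
    {d' : Ω' → Ω' → κ'} (E : IsPointExtension (cayleyColoring D) c' α α' d d')
    (S : IsSchurColoring D) (La : IsLayer D a (a + 1) l) (hal : a + 1 < l)
    (Lb : IsLayer D b (b + 1) m) (hbm : b + 1 < m) (hab : a ≤ b) (hlm : l ≤ m) :
    ∃ g₀ g₁, g₀ α = α' ∧ IsIsoMod D c' a l α g₀ ∧ IsIsoMod D c' b m α g₁ ∧
      (∀ y' v, c' α' y' = D v → π ^ a ∣ v →
        ∃ t, π ^ a ∣ t - α ∧ HasColorMod D c' l (g₀ t) y' 0) ∧
      ∀ z, π ^ b ∣ z - α → HasColorMod D c' l (g₁ z) (g₀ z) 0 := by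
  have hnea := S.exists_color_ne La (by omega)
  have hneb := S.exists_color_ne Lb (by omega)
  have hwa : HasVal π a (α + π ^ a - α) := by simpa using hasVal_pow (p := p) La.le
  have hwb : HasVal π b (α + π ^ b - α) := by simpa using hasVal_pow (p := p) Lb.le
  obtain ⟨wa', hwaα, -⟩ := E.exists_triangle E.base_eq (α + π ^ a)
  obtain ⟨wb', hwab, hwbα⟩ := E.exists_triangle (E.converse_eq hwaα) (α + π ^ b)
  obtain ⟨g₀, hg₀, hiso₀, hcol₀⟩ := E.exists_isIsoMod S La hnea hwa (E.converse_eq hwaα)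
  obtain ⟨g₁, -, hiso₁, hcol₁⟩ := E.exists_isIsoMod S Lb hneb hwb hwbα
  refine ⟨g₀, g₁, hg₀, hiso₀, hiso₁, fun y' v hv hav => ?_, fun z hz => ?_⟩
  · obtain ⟨t, hwt, htα⟩ := E.exists_triangle_symm (E.converse_eq hwaα) y'
    have hat : π ^ a ∣ t - α :=
      La.isXIdeal_bot _ _ (hv.symm.trans (E.color_eq (E.converse_eq htα)).symm) hav
    exact ⟨t, hat, by simpa only [sub_self] using E.hasColorMod S La hnea hwa hat (hcol₀ t) hwt⟩
  · obtain ⟨y, hwy, hyb⟩ := E.exists_triangle_symm hwab (g₁ z)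
    have hzy := E.pow_dvd_sub_of_eq S Lb hneb hwb hz ((hcol₁ z).trans (E.converse_eq hyb).symm)
    have hay : π ^ a ∣ y - α := by
      have := dvd_add ((pow_dvd_pow π (hab.trans (by omega : b ≤ m))).trans hzy)
        ((pow_dvd_pow π hab).trans hz)
      rwa [sub_add_sub_cancel] at this
    refine (E.hasColorMod S La hnea hwa hay hwy (hcol₀ z)).congr_of_pow_dvd_sub S
      (S.isXIdeal_period La) ?_
    simpa using (pow_dvd_pow π hlm).trans hzy

namespace IsIsoMod

lemma exists_isUnit_mul (hg : IsIsoMod D c' a l α g) (hg₀ : IsIsoMod D c' a l α g₀)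
    (hα : g₀ α = g α) (S : IsSchurColoring D) (I : IsCayleyImage D c')
    (L : IsLayer D a (a + 1) l) (hal : a + 1 < l)
    (hsurj : ∀ s, π ^ a ∣ s → ∃ t, π ^ a ∣ t ∧ HasColorMod D c' l (g₀ (α + t)) (g (α + s)) 0) :
    ∃ k, IsUnit k ∧ D (k * π ^ a) = D (π ^ a) ∧
      ∀ s, π ^ a ∣ s → HasColorMod D c' l (g (α + s)) (g₀ (α + k * s)) 0 := by
  have Xl := S.isXIdeal_period L
  have hblock {s} (hs : π ^ a ∣ s) : π ^ a ∣ α + s - α := by rwa [add_sub_cancel_left]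
  choose! t hdvd ht using hsurj
  have ht_color (s) (hs : π ^ a ∣ s) : ColorEqMod D l s (t s) := by
    have h := hg α _ (by simp) (hblock hs)
    have h₀ := (hg₀ α _ (by simp) (hblock (hdvd s hs))).trans_zero (ht s hs) S I Xl
    rw [hα] at h₀
    simpa only [add_sub_cancel_left] using h.unique S Xl h₀
  have ht_sub (s s') (hs : π ^ a ∣ s) (hs' : π ^ a ∣ s') :
      ColorEqMod D l (s' - s) (t s' - t s) := by
    have h := hg _ _ (hblock hs) (hblock hs')
    have h₀ := ((ht s hs).symm S I).zero_trans
      ((hg₀ _ _ (hblock (hdvd s hs)) (hblock (hdvd s' hs'))).trans_zero (ht s' hs') S I Xl) S I Xl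
    simpa only [add_sub_add_left_eq_sub] using h.unique S Xl h₀
  obtain ⟨k, hk, hkπ, hkt⟩ := S.exists_isUnit_mul_of_colorEqMod L hal t ht_color ht_sub
  refine ⟨k, hk, hkπ, fun s hs => ?_⟩
  have h := hg₀ _ _ (hblock (hdvd s hs)) (hblock (hs.mul_left k))
  refine ((ht s hs).symm S I).trans_zero (h.congr_of_pow_dvd_sub S Xl ?_) S I Xl
  simpa using hkt s hs

lemma exists_refinement (hg : IsIsoMod D c' a l α g) (S : IsSchurColoring D)
    (I : IsCayleyImage D c') (Q : HasPointExtensions.{u} D c') (La : IsLayer D a (a + 1) l)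
    (hal : a + 1 < l) (Lb : IsLayer D b u m) (hab : a ≤ b) (hbl : b < l) (hlm : l ≤ m) :
    ∃ g₁, IsIsoMod D c' b m α g₁ ∧ ∀ y, π ^ b ∣ y - α → HasColorMod D c' l (g₁ y) (g y) 0 := by
  have Xl := S.isXIdeal_period La
  obtain rfl | hlm := hlm.eq_or_lt
  · refine ⟨g, hg.mono hab le_rfl, fun y hy => ?_⟩
    have hy := (pow_dvd_pow _ hab).trans hy
    simpa only [sub_self] using hg y y hy hy
  obtain rfl : u = b + 1 := (S.layer_classification Lb).resolve_right
    fun h => Lb.not_isXIdeal l hbl (h.1 ▸ hlm) Xl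
  obtain ⟨_, d, d', E⟩ := Q α (g α)
  obtain ⟨g₀, g₁, hα, hg₀, hg₁, hsurj, hnear⟩ :=
    E.exists_isIsoMod_pair S La hal Lb (by omega) hab hlm.le
  have hsurj_g (s) (hs : π ^ a ∣ s) :
      ∃ t, π ^ a ∣ t ∧ HasColorMod D c' l (g₀ (α + t)) (g (α + s)) 0 := by
    obtain ⟨w, hw, hcol⟩ := hg α (α + s) (by simp) (by simpa using hs)
    rw [add_sub_cancel_left] at hcol
    obtain ⟨t, hat, ht⟩ := hsurj _ _ hcol (dvd_add hs ((pow_dvd_pow _ (by omega)).trans hw))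
    exact ⟨t - α, hat, by rwa [add_sub_cancel]⟩
  obtain ⟨k, hk, hkπ, hgk⟩ := hg.exists_isUnit_mul hg₀ hα S I La hal hsurj_g
  obtain ⟨k₁, hk₁, hk₁π, hkk₁⟩ := S.exists_isUnit_mul_eq_pow La Lb hab hk hkπ
  refine ⟨_, hg₁.comp_mul S Lb hk₁ hk₁π, fun y hy => ?_⟩
  have hay : π ^ a ∣ y - α := (pow_dvd_pow _ hab).trans hy
  have h₀ := hg₀ (α + k₁ * (y - α)) (α + k * (y - α)) (by simpa using hay.mul_left k₁)
    (by simpa using hay.mul_left k)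
  have h₁ := (hgk _ hay).symm S I
  rw [add_sub_cancel] at h₁
  refine (hnear _ (by simpa using hy.mul_left k₁)).trans_zero
    (h₀.congr_of_pow_dvd_sub S Xl ?_ |>.trans_zero h₁ S I Xl) S I Xl
  simpa [mul_sub] using (hkk₁ _ hy).neg_right

end IsIsoMod

end Refinement

lemma exists_residue_representative {R : Type*} [CommRing R] (x : R) :
    ∃ ρ : R → R, (∀ y, x ∣ y - ρ y) ∧ ∀ y z, x ∣ z - y → ρ y = ρ z := by
  have hmk (y z : R) :
      Ideal.Quotient.mk (Ideal.span {x}) z = Ideal.Quotient.mk _ y ↔ x ∣ z - y := by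
    rw [Ideal.Quotient.mk_eq_mk_iff_sub_mem, Ideal.mem_span_singleton]
  refine ⟨fun y => (Ideal.Quotient.mk (Ideal.span {x}) y).out, fun y => (hmk _ _).1 ?_,
    fun y z h => by simp only [(hmk y z).2 h]⟩
  exact (Quotient.out_eq _).symm

section Gluing

variable {Ω' : Type*} {D : ZMod (p ^ n) → κ} {a b u l : ℕ} {c' : Ω' → Ω' → κ}

lemma IsSchurColoring.exists_isLayer_of_mem_layer (S : IsSchurColoring D) (X : IsXIdeal D a)
    (hbn : b ≤ n) {v : ZMod (p ^ n)} (hv : v ∈ layer π a b) :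
    ∃ i j m, a ≤ i ∧ i < b ∧ IsLayer D i j m ∧ v ∈ layer π i j := by
  classical
  have hab : a < b := by
    by_contra! hba
    exact hv.2 ((pow_dvd_pow _ hba).trans hv.1)
  let P : ℕ → Prop := fun i => IsXIdeal D i ∧ π ^ i ∣ v
  obtain ⟨hX, hdvd⟩ : P (Nat.findGreatest P b) := Nat.findGreatest_spec hab.le ⟨X, hv.1⟩
  have hlt : Nat.findGreatest P b < b :=
    (Nat.findGreatest_le b).lt_of_ne fun h => hv.2 (h ▸ hdvd)
  obtain ⟨j, m, L⟩ := S.exists_isLayer hX (by omega)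
  refine ⟨_, j, m, Nat.le_findGreatest hab.le ⟨X, hv.1⟩, hlt, L, hdvd, fun hj => ?_⟩
  obtain hjb | hbj := le_or_gt j b
  · have := Nat.le_findGreatest (P := P) hjb ⟨L.isXIdeal_top, hj⟩
    have := L.lt
    omega
  · exact hv.2 ((pow_dvd_pow _ hbj.le).trans hj)

lemma IsSchurColoring.exists_isLayer_le_period (S : IsSchurColoring D) (X : IsXIdeal D a)
    (hal : a < l) (hln : l ≤ n) :
    ∃ b u m, a ≤ b ∧ b < l ∧ IsLayer D b u m ∧ l ≤ m ∧
      ∀ i j k, a ≤ i → i < b → IsLayer D i j k → k < l := by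
  classical
  have hex : ∃ b, a ≤ b ∧ b < l ∧ ∃ u m, IsLayer D b u m ∧ l ≤ m := by
    have hX : IsXIdeal D (Nat.findGreatest (IsXIdeal D) (l - 1)) :=
      Nat.findGreatest_spec (m := a) (by omega) X
    have hle := Nat.findGreatest_le (P := IsXIdeal D) (l - 1)
    obtain ⟨u, m, L⟩ := S.exists_isLayer hX (by omega)
    refine ⟨_, Nat.le_findGreatest (by omega) X, by omega, u, m, L, ?_⟩
    by_contra! hml
    have := Nat.le_findGreatest (n := l - 1) (by linarith [L.le_period, Nat.le_sub_one_of_lt hml])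
      L.isXIdeal_top
    linarith [L.lt]
  obtain ⟨hab, hbl, u, m, L, hlm⟩ := Nat.find_spec hex
  refine ⟨_, u, m, hab, hbl, L, hlm, fun i j k hai hib Li => ?_⟩
  by_contra! hlk
  exact Nat.find_min hex hib ⟨hai, hib.trans hbl, j, k, Li, hlk⟩

/-- Every colour preserving map modulo `p ^ l` on a coset of `p ^ a` is approximated modulo `p ^ l`
by an exactly colour preserving one. -/
def LiftsIsos (D : ZMod (p ^ n) → κ) (c' : Ω' → Ω' → κ) (a l : ℕ) : Prop :=
  ∀ α g, IsIsoMod D c' a l α g →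
    ∃ f, IsIsoMod D c' a n α f ∧ ∀ y, π ^ a ∣ y - α → HasColorMod D c' l (f y) (g y) 0

lemma IsIsoMod.rebase {α β : ZMod (p ^ n)} {g : ZMod (p ^ n) → Ω'} (hg : IsIsoMod D c' a l α g)
    (hβ : π ^ a ∣ β - α) : IsIsoMod D c' a l β g := by
  intro y z hy hz
  refine hg y z ?_ ?_
  · simpa using dvd_add hy hβ
  · simpa using dvd_add hz hβ

variable [Fact p.Prime] [Finite Ω']

lemma IsIsoMod.exists_glue {α : ZMod (p ^ n)} {g : ZMod (p ^ n) → Ω'}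
    (hg : IsIsoMod D c' a l α g) (S : IsSchurColoring D) (I : IsCayleyImage D c')
    (X : IsXIdeal D l) (hab : a ≤ b)
    (hF : ∀ β, π ^ a ∣ β - α → ∃ f, IsIsoMod D c' b n β f ∧
      ∀ y, π ^ b ∣ y - β → HasColorMod D c' l (f y) (g y) 0)
    (hlayer : ∀ v ∈ layer π a b, ∃ i j k, IsLayer D i j k ∧ k ≤ l ∧ v ∈ layer π i j) :
    ∃ f, IsIsoMod D c' a n α f ∧ ∀ y, π ^ a ∣ y - α → HasColorMod D c' l (f y) (g y) 0 := by
  have : Nonempty (ZMod (p ^ n) → Ω') := ⟨g⟩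
  choose! F hFiso hFg using hF
  obtain ⟨ρ, hρ, hρ_eq⟩ := exists_residue_representative (π ^ b)
  have hρα (y) (hy : π ^ a ∣ y - α) : π ^ a ∣ ρ y - α := by
    simpa using dvd_sub hy ((pow_dvd_pow _ hab).trans (hρ y))
  have hnear (y) (hy : π ^ a ∣ y - α) : HasColorMod D c' l (F (ρ y) y) (g y) 0 :=
    hFg _ (hρα y hy) y (hρ y)
  refine ⟨fun y => F (ρ y) y, fun y z hy hz => ?_, hnear⟩
  by_cases hyz : π ^ b ∣ z - y
  · have heq := hρ_eq y z hyz
    have hz' : π ^ b ∣ z - ρ y := heq ▸ hρ z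
    simpa only [heq] using hFiso _ (hρα y hy) y z (hρ y) hz'
  · obtain ⟨i, j, k, L, hkl, hmem⟩ := hlayer (z - y) ⟨by simpa using dvd_sub hz hy, hyz⟩
    have hcol := ((hnear y hy).zero_trans (hg y z hy hz) S I X).trans_zero
      ((hnear z hz).symm S I) S I X
    exact .of_eq ((hcol.mono hkl).color_eq L hmem)

lemma IsLayer.exists_extension (L : IsLayer D a u l) (S : IsSchurColoring D)
    (I : IsCayleyImage D c') (Q : HasPointExtensions.{u} D c') (lift : LiftsIsos D c' a l)
    (β : ZMod (p ^ n)) (β' : Ω') :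
    ∃ f, IsIsoMod D c' a n β f ∧ ∀ y, π ^ a ∣ y - β → HasColorMod D c' a (f y) β' 0 := by
  obtain ⟨g, hgβ, hg⟩ := exists_isIsoMod S I Q L β β'
  obtain ⟨f, hf, hfg⟩ := lift β g hg
  refine ⟨f, hf, fun y hy => ?_⟩
  have hyβ : HasColorMod D c' a (f y) (f β) 0 := by
    refine ((hf y β hy (by simp)).mono (L.lt.le.trans L.le)).congr_of_pow_dvd_sub S
      L.isXIdeal_bot ?_
    simpa using hy
  have hβ : HasColorMod D c' a (f β) β' 0 :=
    hgβ ▸ (hfg β (by simp)).mono (L.lt.le.trans L.le_period)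
  exact hyβ.trans_zero hβ S I L.isXIdeal_bot

lemma IsLayer.liftsIsos_of_period_eq (L : IsLayer D a u u) (S : IsSchurColoring D)
    (I : IsCayleyImage D c') (Q : HasPointExtensions.{u} D c')
    (lift : ∀ j m, IsLayer D u j m → LiftsIsos D c' u m) : LiftsIsos D c' a u := by
  intro α g hg
  refine hg.exists_glue S I L.isXIdeal_top L.lt.le (fun β hβ => ?_)
    fun v hv => ⟨a, u, u, L, le_rfl, hv⟩
  obtain ⟨f, hf, hfβ⟩ : ∃ f, IsIsoMod D c' u n β f ∧
      ∀ y, π ^ u ∣ y - β → HasColorMod D c' u (f y) (g β) 0 := by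
    obtain rfl | hun := L.le.eq_or_lt
    · refine ⟨fun _ => g β, fun y z hy hz => ?_, fun y _ => .of_eq (I.eq_zero_iff.2 rfl)⟩
      have hyz : z - y = 0 := eq_zero_of_pow_dvd le_rfl (by simpa using dvd_sub hz hy)
      exact .of_eq (hyz ▸ I.eq_zero_iff.2 rfl)
    · obtain ⟨j, m, Lu⟩ := S.exists_isLayer L.isXIdeal_top hun
      exact Lu.exists_extension S I Q (lift j m Lu) β (g β)
  refine ⟨f, hf, fun y hy => (hfβ y hy).trans_zero ?_ S I L.isXIdeal_top⟩
  exact (hg.rebase hβ β y (by simp) ((pow_dvd_pow _ L.lt.le).trans hy)).congr_of_pow_dvd_sub S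
    L.isXIdeal_top (by simpa using hy.neg_right)

lemma IsLayer.liftsIsos_of_lt_period (L : IsLayer D a (a + 1) l) (hal : a + 1 < l)
    (S : IsSchurColoring D) (I : IsCayleyImage D c') (Q : HasPointExtensions.{u} D c')
    (lift : ∀ b u m, a < b → IsLayer D b u m → LiftsIsos D c' b m) : LiftsIsos D c' a l := by
  intro α g hg
  have X := S.isXIdeal_period L
  obtain ⟨b, u, m, hab, hbl, Lb, hlm, hmin⟩ :=
    S.exists_isLayer_le_period L.isXIdeal_top hal L.period_le
  refine hg.exists_glue S I X (Nat.le_of_succ_le hab) (fun β hβ => ?_) fun v hv => ?_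
  · obtain ⟨g₁, hg₁, hg₁g⟩ :=
      (hg.rebase hβ).exists_refinement S I Q L hal Lb (by omega) hbl hlm
    obtain ⟨f, hf, hfg₁⟩ := lift b u m (by omega) Lb β g₁ hg₁
    exact ⟨f, hf, fun y hy => ((hfg₁ y hy).mono hlm).trans_zero (hg₁g y hy) S I X⟩
  · by_cases hv' : π ^ (a + 1) ∣ v
    · obtain ⟨i, j, k, hai, hib, Li, hmem⟩ :=
        S.exists_isLayer_of_mem_layer L.isXIdeal_top (hbl.le.trans L.period_le) ⟨hv', hv.2⟩
      exact ⟨i, j, k, Li, (hmin i j k hai hib Li).le, hmem⟩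
    · exact ⟨a, a + 1, l, L, le_rfl, hv.1, hv'⟩

theorem IsLayer.liftsIsos (L : IsLayer D a u l) (S : IsSchurColoring D)
    (I : IsCayleyImage D c') (Q : HasPointExtensions.{u} D c') : LiftsIsos D c' a l := by
  induction hk : n - a using Nat.strong_induction_on generalizing a u l with
  | h k ih =>
    subst hk
    have han := L.lt.trans_le L.le
    have lift (b j m) (hab : a < b) (Lb : IsLayer D b j m) : LiftsIsos D c' b m :=
      ih (n - b) (by omega) Lb rfl
    obtain rfl | hul := L.le_period.eq_or_lt
    · exact L.liftsIsos_of_period_eq S I Q fun j m => lift u j m L.lt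
    · obtain rfl := (S.layer_classification L).resolve_right fun h => hul.ne' h.1
      exact L.liftsIsos_of_lt_period hul S I Q lift

theorem exists_map_color_eq [Nonempty Ω'] (hn : n ≠ 0) (S : IsSchurColoring D)
    (I : IsCayleyImage D c') (Q : HasPointExtensions.{u} D c') :
    ∃ f : ZMod (p ^ n) → Ω', ∀ y z, c' (f y) (f z) = D (z - y) := by
  obtain ⟨u, l, L⟩ := S.exists_isLayer isXIdeal_zero hn.pos
  obtain ⟨g, -, hg⟩ := exists_isIsoMod S I Q L 0 (Classical.arbitrary Ω')
  obtain ⟨f, hf, -⟩ := L.liftsIsos S I Q 0 g hg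
  refine ⟨f, fun y z => ?_⟩
  obtain ⟨w, hw, hcol⟩ := hf y z (by simp) (by simp)
  rw [hcol, eq_zero_of_pow_dvd le_rfl hw, add_zero]

end Gluing

end PrimePowerCirculant

namespace CohCfg

open PrimePowerCirculant

variable {Ω Ω' : Type u} {X : CohCfg Ω} {X' : CohCfg Ω'} {φ : Set (Ω × Ω) → Set (Ω' × Ω')}

lemma eq_of_mem (X : CohCfg Ω) {s t : Set (Ω × Ω)} (hs : s ∈ X.S) (ht : t ∈ X.S) {q : Ω × Ω}
    (hqs : q ∈ s) (hqt : q ∈ t) : s = t := by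
  by_contra hne
  have hempty := X.disj s hs t ht hne
  exact hempty.subset ⟨hqs, hqt⟩

namespace IsAlgIso

lemma refl (X : CohCfg Ω) : IsAlgIso X X id where
  bijOn := bijOn_id X.S
  cnum_eq := X.inum

lemma exists_mem_apply (h : IsAlgIso X X' φ) (q : Ω' × Ω') : ∃ s ∈ X.S, q ∈ φ s := by
  obtain ⟨t, ht, hq⟩ := X'.cover q
  obtain ⟨s, hs, rfl⟩ := h.bijOn.surjOn ht
  exact ⟨s, hs, hq⟩

/-- The colouring of the arcs of the target of an algebraic isomorphism `φ` by the basis relations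
of the source: the colour of `(x, y)` is the basis relation `s` with `(x, y) ∈ φ s`. -/
noncomputable def color (h : IsAlgIso X X' φ) (x y : Ω') : Set (Ω × Ω) :=
  (h.exists_mem_apply (x, y)).choose

lemma color_mem (h : IsAlgIso X X' φ) (x y : Ω') : h.color x y ∈ X.S :=
  (h.exists_mem_apply (x, y)).choose_spec.1

lemma mem_apply_color (h : IsAlgIso X X' φ) (x y : Ω') : (x, y) ∈ φ (h.color x y) :=
  (h.exists_mem_apply (x, y)).choose_spec.2

lemma color_eq_iff (h : IsAlgIso X X' φ) {x y : Ω'} {s : Set (Ω × Ω)} (hs : s ∈ X.S) :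
    h.color x y = s ↔ (x, y) ∈ φ s := by
  refine ⟨fun heq => heq ▸ h.mem_apply_color x y, fun hxy => ?_⟩
  refine h.bijOn.injOn (h.color_mem x y) hs ?_
  exact X'.eq_of_mem (h.bijOn.mapsTo (h.color_mem x y)) (h.bijOn.mapsTo hs)
    (h.mem_apply_color x y) hxy

lemma separatesDiagonal_color (h : IsAlgIso X X' φ) : SeparatesDiagonal h.color := fun a b x hab =>
  X'.diag _ (h.bijOn.mapsTo (h.color_mem x x)) ⟨_, h.mem_apply_color x x, rfl⟩ (a, b)
    ((h.color_eq_iff (h.color_mem x x)).1 hab)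

end IsAlgIso

/-- The colouring of arcs by basis relations: the basis relation containing `(x, y)`. -/
noncomputable abbrev basisRel (X : CohCfg Ω) : Ω → Ω → Set (Ω × Ω) := (IsAlgIso.refl X).color

lemma mem_basisRel (X : CohCfg Ω) (x y : Ω) : (x, y) ∈ X.basisRel x y :=
  (IsAlgIso.refl X).mem_apply_color x y

lemma basisRel_eq_iff (X : CohCfg Ω) {x y : Ω} {s : Set (Ω × Ω)} (hs : s ∈ X.S) :
    X.basisRel x y = s ↔ (x, y) ∈ s :=
  (IsAlgIso.refl X).color_eq_iff hs

lemma converseCompatible_basisRel (X : CohCfg Ω) : ConverseCompatible X.basisRel := by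
  intro a b a₁ b₁ hab
  have hconv := X.conv _ ((IsAlgIso.refl X).color_mem a₁ b₁)
  have hmem : (a, b) ∈ X.basisRel a₁ b₁ := hab ▸ X.mem_basisRel a b
  have hba : X.basisRel b a = _ := (X.basisRel_eq_iff hconv).2 hmem
  have hba₁ : X.basisRel b₁ a₁ = _ := (X.basisRel_eq_iff hconv).2 (X.mem_basisRel a₁ b₁)
  rw [hba, hba₁]

namespace IsAlgIso

lemma sameIntersectionNumbers (h : IsAlgIso X X' φ) :
    SameIntersectionNumbers X.basisRel h.color := by
  intro a b a' b' hab r s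
  by_cases hrs : r ∈ X.S ∧ s ∈ X.S
  · simp only [X.basisRel_eq_iff hrs.1, X.basisRel_eq_iff hrs.2, h.color_eq_iff hrs.1,
      h.color_eq_iff hrs.2]
    exact h.cnum_eq r hrs.1 s hrs.2 _ (h.color_mem a' b') (a, b) (hab ▸ X.mem_basisRel a b)
      (a', b') (h.mem_apply_color a' b')
  · have hcolor {Ω''} {X'' : CohCfg Ω''} {ψ} (k : IsAlgIso X X'' ψ) (x y z : Ω'') :
        ¬(k.color x z = r ∧ k.color z y = s) :=
      fun hz => hrs ⟨hz.1 ▸ k.color_mem x z, hz.2 ▸ k.color_mem z y⟩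
    simp only [hcolor, ofPred_false, ncard_empty]

lemma color_converse (h : IsAlgIso X X' φ) {a b : Ω} {a' b' : Ω'}
    (hab : X.basisRel a b = h.color a' b') : X.basisRel b a = h.color b' a' :=
  have := X.finite
  have := X'.finite
  h.sameIntersectionNumbers.converse_eq (IsAlgIso.refl X).separatesDiagonal_color
    h.separatesDiagonal_color X.converseCompatible_basisRel hab

lemma exists_loop_eq (h : IsAlgIso X X' φ) (x : Ω') : ∃ a, X.basisRel a a = h.color x x := by
  have := X.finite
  have := X'.finite
  obtain ⟨⟨a, b⟩, hab⟩ := X.nonemp _ (h.color_mem x x)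
  obtain ⟨e, he⟩ :=
    h.sameIntersectionNumbers.exists_equiv ((X.basisRel_eq_iff (h.color_mem x x)).2 hab)
  have hx : x = e a := h.sameIntersectionNumbers.eq_of_loop
    (IsAlgIso.refl X).separatesDiagonal_color h.separatesDiagonal_color (he a).1.symm
  exact ⟨a, by rw [← (he a).1, ← hx]⟩

lemma color_eq_diagonal_iff (h : IsAlgIso X X' φ) (hX : IsScheme X) {x y : Ω'} :
    h.color x y = {q | q.1 = q.2} ↔ x = y := by
  have hloop (x : Ω') : h.color x x = {q | q.1 = q.2} := by
    obtain ⟨a, ha⟩ := h.exists_loop_eq x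
    exact ha.symm.trans ((X.basisRel_eq_iff hX).2 rfl)
  exact ⟨fun hxy => h.separatesDiagonal_color x y x (hxy.trans (hloop x).symm),
    fun hxy => hxy ▸ hloop x⟩

lemma bijective_of_color_eq (h : IsAlgIso X X' φ) {f : Ω → Ω'}
    (hf : ∀ a b, h.color (f a) (f b) = X.basisRel a b) : Function.Bijective f := by
  have := X.finite
  have := X'.finite
  have hinj : Function.Injective f := fun a b hab =>
    (IsAlgIso.refl X).separatesDiagonal_color a b a (by simp only [← hf, hab])
  refine hinj.bijective_of_nat_card_le ?_
  obtain _ | ⟨⟨y⟩⟩ := isEmpty_or_nonempty Ω'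
  · simp
  obtain ⟨a, ha⟩ := h.exists_loop_eq y
  obtain ⟨e, -⟩ := h.sameIntersectionNumbers.exists_equiv ha
  exact (Nat.card_congr e).ge

lemma inducedBy_of_color_eq (h : IsAlgIso X X' φ) {f : Ω → Ω'}
    (hf : ∀ a b, h.color (f a) (f b) = X.basisRel a b) : InducedBy X X' φ f := by
  have hbij := h.bijective_of_color_eq hf
  refine ⟨hbij, fun s hs => ?_⟩
  have hmem (a b) : (f a, f b) ∈ φ s ↔ (a, b) ∈ s := by
    rw [← h.color_eq_iff hs, hf, X.basisRel_eq_iff hs]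
  ext ⟨a', b'⟩
  obtain ⟨a, rfl⟩ := hbij.surjective a'
  obtain ⟨b, rfl⟩ := hbij.surjective b'
  simp [relImage, hmem, hbij.injective.eq_iff]

lemma exists_isPointExtension (h : IsAlgIso X X' φ) {α : Ω} {α' : Ω'}
    (H : HasExtension X X' φ α α') :
    ∃ d d' : _ → _ → Set (Ω × Ω), IsPointExtension X.basisRel h.color α α' d d' := by
  obtain ⟨Y, Y', ψ, ⟨hXY, hα, -⟩, -, hψ, hψφ, hψα⟩ := H
  have hbase : Y.basisRel α α = {(α, α)} := (Y.basisRel_eq_iff hα).2 rfl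
  refine ⟨Y.basisRel, hψ.color, hψ.sameIntersectionNumbers, fun {a b a' b'} hab => ?_,
    hψ.color_converse, ?_, fun {a' b'} hab => ?_⟩
  · have hXab := (IsAlgIso.refl X).color_mem a b
    have hYab := (IsAlgIso.refl Y).color_mem a b
    have hsub : Y.basisRel a b ⊆ X.basisRel a b :=
      hXY _ hXab _ hYab ⟨(a, b), Y.mem_basisRel a b, X.mem_basisRel a b⟩
    rw [eq_comm, h.color_eq_iff hXab, ← hψφ _ hXab]
    exact ⟨_, ⟨_, ⟨hYab, hsub⟩, rfl⟩, (hψ.color_eq_iff hYab).1 hab.symm⟩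
  · rw [hbase, eq_comm, hψ.color_eq_iff hα, hψα, mem_singleton_iff]
  · rw [hbase, eq_comm, hψ.color_eq_iff hα, hψα, mem_singleton_iff] at hab
    exact Prod.ext_iff.1 hab

end IsAlgIso

lemma SesquiclosedIso.exists_isPointExtension {h : IsAlgIso X X' φ} (H : SesquiclosedIso X X' φ)
    (hX : IsScheme X) (α : Ω) (α' : Ω') :
    ∃ d d' : _ → _ → Set (Ω × Ω), IsPointExtension X.basisRel h.color α α' d d' := by
  have hdiag : diagRel univ = {q : Ω × Ω | q.1 = q.2} := by simp [diagRel]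
  refine h.exists_isPointExtension (H.2 univ (by rwa [IsFiber, hdiag]) α (mem_univ α) α' ?_)
  rw [fiberImage, hdiag, mem_ofPred_eq, ← h.color_eq_iff hX, h.color_eq_diagonal_iff hX]

end CohCfg

namespace PrimePowerCirculant

open CohCfg

lemma IsPointExtension.comp_equiv {Δ Ω Ω' κ κ' : Type*} {c : Ω → Ω → κ} {c' : Ω' → Ω' → κ}
    {α : Δ} {α' : Ω'} {d : Ω → Ω → κ'} {d' : Ω' → Ω' → κ'} (e : Δ ≃ Ω)
    (E : IsPointExtension c c' (e α) α' d d') :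
    IsPointExtension (fun a b => c (e a) (e b)) c' α α' (fun a b => d (e a) (e b)) d' where
  sameIntersectionNumbers := E.sameIntersectionNumbers.comp_equiv e (Equiv.refl Ω')
  color_eq := E.color_eq
  converse_eq := E.converse_eq
  base_eq := E.base_eq
  eq_base := E.eq_base

section CyclicLabelings

variable {Ω Ω' : Type u} {N : ℕ} {X : CohCfg Ω} {X' : CohCfg Ω'}
  {φ : Set (Ω × Ω) → Set (Ω' × Ω')} {e : ZMod N ≃ Ω}

/-- A labelling of the points by `ZMod N` along which every translation of `ZMod N` preserves the
basis relations: it turns `X` into a circulant scheme on `ZMod N`. -/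
def IsCyclicLabeling (X : CohCfg Ω) (e : ZMod N ≃ Ω) : Prop :=
  ∀ a b z, X.basisRel (e (a + z)) (e (b + z)) = X.basisRel (e a) (e b)

/-- The colouring of `ZMod N` by the basis relations of `X`, an element `z` having the colour of the
arc from `0` to `z`. -/
noncomputable def labelColoring (X : CohCfg Ω) (e : ZMod N ≃ Ω) (z : ZMod N) : Set (Ω × Ω) :=
  X.basisRel (e 0) (e z)

lemma exists_isCyclicLabeling {G : Type u} [Group G] [IsCyclic G] {X : CohCfg G}
    (hN : Nat.card G = N) (hX : IsCirculant X) : ∃ e : ZMod N ≃ G, IsCyclicLabeling X e := by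
  subst hN
  obtain ⟨m⟩ : Nonempty (Multiplicative (ZMod (Nat.card G)) ≃* G) :=
    ⟨zmodCyclicMulEquiv inferInstance⟩
  refine ⟨Multiplicative.ofAdd.trans m.toEquiv, fun a b z => ?_⟩
  have hab := X.mem_basisRel (m (.ofAdd a)) (m (.ofAdd b))
  have hmem := (IsAlgIso.refl X).color_mem (m (.ofAdd a)) (m (.ofAdd b))
  refine (X.basisRel_eq_iff hmem).2 ?_
  rw [← hX (m (.ofAdd z)) _ hmem]
  exact ⟨_, hab, Prod.ext (map_mul m (.ofAdd a) (.ofAdd z)).symm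
    (map_mul m (.ofAdd b) (.ofAdd z)).symm⟩

namespace IsCyclicLabeling

lemma cayleyColoring_eq (E : IsCyclicLabeling X e) :
    cayleyColoring (labelColoring X e) = fun a b => X.basisRel (e a) (e b) := by
  ext1 a; ext1 b
  simpa [labelColoring] using (E 0 (b - a) a).symm

lemma isCayleyImage {p n : ℕ} {e : ZMod (p ^ n) ≃ Ω} (E : IsCyclicLabeling X e)
    (hX : IsScheme X) (h : IsAlgIso X X' φ) :
    IsCayleyImage (labelColoring X e) h.color where
  sameIntersectionNumbers := by
    rw [E.cayleyColoring_eq]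
    exact h.sameIntersectionNumbers.comp_equiv e (Equiv.refl Ω')
  eq_zero_iff {x y} := by
    rw [labelColoring, (X.basisRel_eq_iff hX).2 rfl, h.color_eq_diagonal_iff hX]

lemma isSchurColoring (E : IsCyclicLabeling X e) : IsSchurColoring (labelColoring X e) where
  exists_equiv z z' hz := by
    have := X.finite
    have : Finite (ZMod N) := .of_equiv Ω e.symm
    have hsame := (IsAlgIso.refl X).sameIntersectionNumbers.comp_equiv e e
    rw [← E.cayleyColoring_eq] at hsame
    obtain ⟨f, hf⟩ := hsame.exists_equiv (a := 0) (b := z) (a' := 0) (b' := z')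
      (by simpa only [cayleyColoring, sub_zero] using hz)
    exact ⟨f, by simpa only [cayleyColoring, sub_zero] using hf⟩
  neg z z' hz := by
    have hconv := X.converseCompatible_basisRel _ _ _ _ hz
    have hneg (w : ZMod N) : labelColoring X e (-w) = X.basisRel (e w) (e 0) := by
      rw [← zero_sub]
      exact congrFun₂ E.cayleyColoring_eq w 0
    rw [hneg, hneg, hconv]
  eq_zero z hz :=
    (e.injective ((IsAlgIso.refl X).separatesDiagonal_color _ _ _ hz)).symm

lemma hasPointExtensions {p n : ℕ} {e : ZMod (p ^ n) ≃ Ω} (E : IsCyclicLabeling X e)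
    (hX : IsScheme X) (h : IsAlgIso X X' φ) (H : SesquiclosedIso X X' φ) :
    HasPointExtensions.{u} (labelColoring X e) h.color := by
  intro α α'
  obtain ⟨d, d', hd⟩ := H.exists_isPointExtension (h := h) hX (e α) α'
  rw [E.cayleyColoring_eq]
  exact ⟨_, _, d', hd.comp_equiv e⟩

theorem sesquiseparable {p n : ℕ} [Fact p.Prime] {e : ZMod (p ^ n) ≃ Ω} (hn : n ≠ 0)
    (E : IsCyclicLabeling X e) (hX : IsScheme X) : Sesquiseparable X := by
  intro Ω' X' φ H
  have h : IsAlgIso X X' φ := H.1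
  have := X'.finite
  have : Nonempty Ω' := by
    obtain ⟨q, -⟩ := X'.nonemp _ (h.bijOn.mapsTo hX)
    exact ⟨q.1⟩
  obtain ⟨f, hf⟩ := exists_map_color_eq hn E.isSchurColoring (E.isCayleyImage hX h)
    (E.hasPointExtensions hX h H)
  refine ⟨f ∘ e.symm, h.inducedBy_of_color_eq fun a b => ?_⟩
  have hab := congrFun₂ E.cayleyColoring_eq (e.symm a) (e.symm b)
  simpa only [Function.comp_apply, hf, Equiv.apply_symm_apply] using hab

end IsCyclicLabeling

end CyclicLabelings

end PrimePowerCirculant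

open CohCfg in
/-- Theorem: every circulant scheme of prime power degree is sesquiseparable. -/
theorem stmt_18 {G : Type u} [CommGroup G] [IsCyclic G] [Fintype G]
    (p n : ℕ) (hp : p.Prime) (hn : 1 ≤ n) (hcard : Fintype.card G = p ^ n)
    (X : CohCfg G) (hs : IsScheme X) (hc : IsCirculant X) :
    Sesquiseparable X := by
  have : Fact p.Prime := ⟨hp⟩
  obtain ⟨e, he⟩ := PrimePowerCirculant.exists_isCyclicLabeling
    (N := p ^ n) (Nat.card_eq_fintype_card.trans hcard) hc
  exact he.sesquiseparable (by omega) hs
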